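/- Randstellensatz for free spectrahedra: let L = I + A₁x₁ + ⋯ + Aₙxₙ be a monic hermitian linear matrix pencil of size d that is minimal for its free spectrahedron (every monic hermitian pencil N with D_N = D_L has size ≥ d), and let f = f* ∈ M_d(ℂ⟨x⟩). Then the following are equivalent: (i) for every k and every X ∈ D_L(k), f(X) ⪰ 0 and ker L(X) ⊆ ker f(X); (ii) there exist finitely many column vectors pᵢ ∈ ℂ⟨x⟩^{d×1}, matrices qⱼ ∈ M_d(ℂ⟨x⟩), and constant matrices Cⱼ ∈ M_d(ℂ) satisfying CⱼL = LCⱼ in M_d(ℂ⟨x⟩), such that f = L(Σᵢ pᵢpᵢ*)L + Σⱼ (qⱼL + Cⱼ)* L (qⱼL + Cⱼ). -/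

import Mathlib

open scoped Kronecker Matrix ComplexOrder

/-- Noncommutative polynomials: the free `ℂ`-algebra `ℂ⟨x₁,…,xₙ⟩` on `n` generators. -/
abbrev FreeAlg (n : ℕ) := FreeAlgebra ℂ (Fin n)

/-- Evaluation of a matrix of noncommutative polynomials at an `n`-tuple of `k × k` complex
matrices, i.e. the image under `id ⊗ ev_X`. -/
noncomputable def evalM {n k : ℕ} {I J : Type*} (f : Matrix I J (FreeAlg n))
    (X : Fin n → Matrix (Fin k) (Fin k) ℂ) : Matrix (I × Fin k) (J × Fin k) ℂ :=
  fun p q => FreeAlgebra.lift ℂ X (f p.1 q.1) p.2 q.2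

/-- The conjugate-linear involutive anti-automorphism on `ℂ⟨x⟩` fixing the generators:
reverse each word and conjugate each coefficient. -/
noncomputable def nstar {n : ℕ} (a : FreeAlg n) : FreeAlg n :=
  (FreeAlgebra.equivMonoidAlgebraFreeMonoid).symm
    (MonoidAlgebra.ofCoeff (Finsupp.mapDomain FreeMonoid.reverse
      (Finsupp.mapRange (starRingEnd ℂ) (map_zero _)
        ((FreeAlgebra.equivMonoidAlgebraFreeMonoid) a).coeff)))

/-- Conjugate-transpose of a matrix over `ℂ⟨x⟩`. -/
noncomputable def adjM {n : ℕ} {I J : Type*} (f : Matrix I J (FreeAlg n)) :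
    Matrix J I (FreeAlg n) :=
  fun i j => nstar (f j i)

/-- A matrix `f` over `ℂ⟨x⟩` is hermitian if `f = f*`. -/
def IsHermPoly {n : ℕ} {I : Type*} (f : Matrix I I (FreeAlg n)) : Prop :=
  ∀ i j, f i j = nstar (f j i)

/-- Evaluation `L(X) = A₀ ⊗ I + ∑ⱼ Aⱼ ⊗ Xⱼ` of a linear matrix pencil at a matrix tuple. -/
noncomputable def pencilK {n d k : ℕ} (A0 : Matrix (Fin d) (Fin d) ℂ)
    (A : Fin n → Matrix (Fin d) (Fin d) ℂ) (X : Fin n → Matrix (Fin k) (Fin k) ℂ) :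
    Matrix (Fin d × Fin k) (Fin d × Fin k) ℂ :=
  A0 ⊗ₖ (1 : Matrix (Fin k) (Fin k) ℂ) + ∑ j, A j ⊗ₖ X j

/-- Evaluation `L(X) = I ⊗ I + ∑ⱼ Aⱼ ⊗ Xⱼ` of a monic linear matrix pencil. -/
noncomputable def monicK {n d k : ℕ} (A : Fin n → Matrix (Fin d) (Fin d) ℂ)
    (X : Fin n → Matrix (Fin k) (Fin k) ℂ) : Matrix (Fin d × Fin k) (Fin d × Fin k) ℂ :=
  1 + ∑ j, A j ⊗ₖ X j

/-- The monic pencil `I + ∑ⱼ Aⱼ xⱼ` as a matrix of noncommutative polynomials. -/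
noncomputable def monicPoly {n e : ℕ} (A : Fin n → Matrix (Fin e) (Fin e) ℂ) :
    Matrix (Fin e) (Fin e) (FreeAlg n) :=
  1 + ∑ j, (A j).map (fun c => c • FreeAlgebra.ι ℂ j)

/-- The subspace of noncommutative polynomials of degree at most `δ`:
the `ℂ`-linear span of products of at most `δ` generators. -/
noncomputable def degLE (n δ : ℕ) : Submodule ℂ (FreeAlg n) :=
  Submodule.span ℂ
    {a | ∃ w : List (Fin n), w.length ≤ δ ∧ a = (w.map (FreeAlgebra.ι ℂ)).prod}

/-- A matrix over `ℂ⟨x⟩` has degree at most `δ` if each entry does. -/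
def matDegLE {n : ℕ} {I J : Type*} (f : Matrix I J (FreeAlg n)) (δ : ℕ) : Prop :=
  ∀ i j, f i j ∈ degLE n δ

/-- The degree of a matrix of noncommutative polynomials: the least `δ` such that every entry
lies in the span of words of length at most `δ`. -/
noncomputable def matDeg {n : ℕ} {I J : Type*} (f : Matrix I J (FreeAlg n)) : ℕ :=
  sInf {δ | matDegLE f δ}

/-- Evaluation of `f` at the zero scalar tuple, `f(0) ∈ M_d(ℂ)`. -/
noncomputable def evalZero {n : ℕ} {I J : Type*} (f : Matrix I J (FreeAlg n)) :
    Matrix I J ℂ :=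
  f.map (⇑(FreeAlgebra.lift ℂ (fun _ : Fin n => (0 : ℂ))))


open scoped Kronecker Matrix ComplexOrder

section Part0
variable {n : ℕ}

theorem nstar_add (a b : FreeAlg n) : nstar (a + b) = nstar a + nstar b := by
  unfold nstar
  rw [← map_add, ← MonoidAlgebra.ofCoeff_add, ← Finsupp.mapDomain_add, map_add,
    MonoidAlgebra.coeff_add, Finsupp.mapRange_add]
  intro x y; simp

theorem nstar_single (w : FreeMonoid (Fin n)) (c : ℂ) :
    nstar (FreeAlgebra.equivMonoidAlgebraFreeMonoid.symm (MonoidAlgebra.single w c)) =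
      FreeAlgebra.equivMonoidAlgebraFreeMonoid.symm
        (MonoidAlgebra.single w.reverse (starRingEnd ℂ c)) := by
  unfold nstar
  rw [AlgEquiv.apply_symm_apply]
  simp

theorem nstar_zero : nstar (0 : FreeAlg n) = 0 := by
  have := nstar_add (0 : FreeAlg n) 0
  simpa using this

theorem fa_induction {p : FreeAlg n → Prop}
    (h1 : ∀ w c, p (FreeAlgebra.equivMonoidAlgebraFreeMonoid.symm (MonoidAlgebra.single w c)))
    (h2 : ∀ a b, p a → p b → p (a + b)) (a : FreeAlg n) : p a := by
  have : ∀ g : MonoidAlgebra ℂ (FreeMonoid (Fin n)),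
      p (FreeAlgebra.equivMonoidAlgebraFreeMonoid.symm g) := by
    intro g
    induction g using MonoidAlgebra.induction_linear with
    | zero => simpa using h1 1 0
    | add f g hf hg => rw [map_add]; exact h2 _ _ hf hg
    | single w c => exact h1 w c
  simpa using this (FreeAlgebra.equivMonoidAlgebraFreeMonoid a)

theorem nstar_mul (a b : FreeAlg n) : nstar (a * b) = nstar b * nstar a := by
  induction a using fa_induction with
  | h2 a a' h h' => rw [add_mul, nstar_add, nstar_add, mul_add, h, h']
  | h1 w c =>
    induction b using fa_induction with
    | h2 a a' h h' => rw [mul_add, nstar_add, nstar_add, add_mul, h, h']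
    | h1 v e =>
      rw [← map_mul, MonoidAlgebra.single_mul_single, nstar_single, nstar_single, nstar_single,
        ← map_mul, MonoidAlgebra.single_mul_single]
      simp [mul_comm, FreeMonoid.reverse_mul]

theorem nstar_nstar (a : FreeAlg n) : nstar (nstar a) = a := by
  induction a using fa_induction with
  | h2 a a' h h' => rw [nstar_add, nstar_add, h, h']
  | h1 w c => rw [nstar_single, nstar_single]; simp

theorem nstar_algebraMap (c : ℂ) :
    nstar (algebraMap ℂ (FreeAlg n) c) = algebraMap ℂ (FreeAlg n) (starRingEnd ℂ c) := by
  have h : ∀ c : ℂ, algebraMap ℂ (FreeAlg n) c =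
      FreeAlgebra.equivMonoidAlgebraFreeMonoid.symm (MonoidAlgebra.single 1 c) := by
    intro c
    rw [AlgEquiv.eq_symm_apply, AlgEquiv.commutes]; rfl
  rw [h, h, nstar_single]; rfl

theorem nstar_iota (j : Fin n) : nstar (FreeAlgebra.ι ℂ j) = FreeAlgebra.ι ℂ j := by
  have h : FreeAlgebra.ι ℂ j =
      FreeAlgebra.equivMonoidAlgebraFreeMonoid.symm
        (MonoidAlgebra.single (FreeMonoid.of j) (1 : ℂ)) := by
    rw [AlgEquiv.eq_symm_apply]
    simp [FreeAlgebra.equivMonoidAlgebraFreeMonoid]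
  rw [h, nstar_single]; simp

theorem nstar_smul (c : ℂ) (a : FreeAlg n) : nstar (c • a) = (starRingEnd ℂ c) • nstar a := by
  rw [Algebra.smul_def, nstar_mul, nstar_algebraMap, Algebra.smul_def, Algebra.commutes]

theorem nstar_one : nstar (1 : FreeAlg n) = 1 := by
  simpa using nstar_algebraMap (n := n) 1

theorem nstar_sum {I : Type*} (s : Finset I) (g : I → FreeAlg n) :
    nstar (∑ i ∈ s, g i) = ∑ i ∈ s, nstar (g i) := by
  classical
  induction s using Finset.induction_on with
  | empty => simpa using nstar_zero
  | insert a s ha ih => rw [Finset.sum_insert ha, Finset.sum_insert ha, nstar_add, ih]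

/-- the constant coefficient -/
noncomputable def eps : FreeAlg n →ₐ[ℂ] ℂ := FreeAlgebra.lift ℂ (fun _ : Fin n => (0 : ℂ))

noncomputable def ddM (j : Fin n) : FreeAlg n →ₐ[ℂ] Matrix (Fin 2) (Fin 2) (FreeAlg n) :=
  FreeAlgebra.lift ℂ (fun i => !![0, if i = j then 1 else 0; 0, FreeAlgebra.ι ℂ i])

/-- left derivative: `dd j (x_i a) = δ a` -/
noncomputable def dd (j : Fin n) : FreeAlg n →ₗ[ℂ] FreeAlg n where
  toFun a := ddM j a 0 1
  map_add' a b := by simp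
  map_smul' c a := by simp

theorem ddM_eq (j : Fin n) (a : FreeAlg n) :
    ddM j a = !![algebraMap ℂ _ (eps a), dd j a; 0, a] := by
  have : ddM j a 0 0 = algebraMap ℂ _ (eps a) ∧ ddM j a 1 0 = 0 ∧ ddM j a 1 1 = a := by
    induction a using FreeAlgebra.induction with
    | grade0 r =>
      rw [AlgHom.commutes, AlgHom.commutes]; simp [Matrix.algebraMap_matrix_apply]
    | grade1 i => simp [ddM, eps]
    | mul a b ha hb =>
      simp [Matrix.mul_apply, Fin.sum_univ_two, ha, hb]
    | add a b ha hb => simp [ha, hb]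
  ext i k
  fin_cases i <;> fin_cases k <;> simp [this, dd]

theorem dd_mul (j : Fin n) (a b : FreeAlg n) :
    dd j (a * b) = eps a • dd j b + dd j a * b := by
  have : ddM j (a * b) 0 1 = (ddM j a * ddM j b) 0 1 := by rw [map_mul]
  rw [ddM_eq, ddM_eq, ddM_eq] at this
  simpa [Matrix.mul_apply, Fin.sum_univ_two, Algebra.smul_def] using this

@[simp] theorem eps_iota (j : Fin n) : eps (FreeAlgebra.ι ℂ j) = 0 := by simp [eps]

@[simp] theorem eps_alg (c : ℂ) : eps (algebraMap ℂ (FreeAlg n) c) = c := by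
  rw [AlgHom.commutes]; rfl

theorem dd_iota (j i : Fin n) : dd j (FreeAlgebra.ι ℂ i) = if i = j then 1 else 0 := by
  simp [dd, ddM]

@[simp] theorem dd_alg (j : Fin n) (c : ℂ) : dd j (algebraMap ℂ (FreeAlg n) c) = 0 := by
  change ddM j _ 0 1 = 0
  rw [AlgHom.commutes]; simp [Matrix.algebraMap_matrix_apply]

@[simp] theorem dd_one (j : Fin n) : dd j (1 : FreeAlg n) = 0 := by
  simpa using dd_alg (n := n) j 1

theorem dd_iota_mul (j i : Fin n) (a : FreeAlg n) :
    dd j (FreeAlgebra.ι ℂ i * a) = if i = j then a else 0 := by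
  rw [dd_mul, dd_iota]; simp

theorem decomp (a : FreeAlg n) :
    a = algebraMap ℂ _ (eps a) + ∑ j, FreeAlgebra.ι ℂ j * dd j a := by
  induction a using FreeAlgebra.induction with
  | grade0 r => simp
  | grade1 i => simp [dd_iota]
  | add a b ha hb =>
    simp only [map_add, mul_add, Finset.sum_add_distrib]
    nth_rw 1 [ha, hb]; abel
  | mul a b ha hb =>
    simp only [dd_mul, mul_add, Finset.sum_add_distrib, map_mul]
    have h1 : a * b = eps a • b + ∑ j, FreeAlgebra.ι ℂ j * (dd j a * b) := by
      nth_rw 1 [ha]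
      rw [add_mul, Finset.sum_mul]; simp [mul_assoc, Algebra.smul_def]
    rw [h1]
    nth_rw 1 [hb]
    rw [smul_add, Finset.smul_sum]
    simp only [mul_smul_comm]
    rw [Algebra.smul_def, add_assoc]

/-- polynomials of degree `< m` -/
noncomputable def FF (n : ℕ) : ℕ → Submodule ℂ (FreeAlg n)
  | 0 => ⊥
  | m + 1 => ⨅ j, (FF n m).comap (dd j)

theorem mem_FF_zero {a : FreeAlg n} : a ∈ FF n 0 ↔ a = 0 := by simp [FF]

theorem mem_FF_succ {m : ℕ} {a : FreeAlg n} : a ∈ FF n (m + 1) ↔ ∀ j, dd j a ∈ FF n m := by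
  simp [FF]

theorem FF_succ_le (m : ℕ) : FF n m ≤ FF n (m + 1) := by
  induction m with
  | zero => intro a ha; rw [mem_FF_zero] at ha; rw [ha]; exact zero_mem _
  | succ m ih => intro a ha; rw [mem_FF_succ] at *; exact fun j => ih (ha j)

theorem FF_mono : Monotone (FF n) := monotone_nat_of_le_succ FF_succ_le

theorem FF_one {a : FreeAlg n} : a ∈ FF n 1 ↔ a = algebraMap ℂ _ (eps a) := by
  rw [mem_FF_succ]
  simp only [mem_FF_zero]
  constructor
  · intro h; conv_lhs => rw [decomp a]
    simp [h]
  · intro h j; rw [h]; simp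

theorem alg_mem_FF (c : ℂ) (m : ℕ) : algebraMap ℂ (FreeAlg n) c ∈ FF n (m + 1) := by
  rw [mem_FF_succ]; intro j; simp

theorem one_mem_FF (m : ℕ) : (1 : FreeAlg n) ∈ FF n (m + 1) := by
  simpa using alg_mem_FF (n := n) 1 m

theorem iota_mul_mem {m : ℕ} {a : FreeAlg n} (j : Fin n) (ha : a ∈ FF n m) :
    FreeAlgebra.ι ℂ j * a ∈ FF n (m + 1) := by
  rw [mem_FF_succ]; intro i
  rw [dd_iota_mul]; split_ifs
  · exact ha
  · exact zero_mem _

theorem mul_iota_mem {m : ℕ} {a : FreeAlg n} (j : Fin n) (ha : a ∈ FF n m) :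
    a * FreeAlgebra.ι ℂ j ∈ FF n (m + 1) := by
  induction m generalizing a with
  | zero => rw [mem_FF_zero] at ha; rw [ha, zero_mul]; exact zero_mem _
  | succ m ih =>
    rw [mem_FF_succ] at *
    intro i
    rw [dd_mul, dd_iota]
    refine add_mem (Submodule.smul_mem _ _ ?_) (ih (ha i))
    split_ifs
    · exact one_mem_FF m
    · exact zero_mem _

theorem nstar_mem {m : ℕ} {a : FreeAlg n} (ha : a ∈ FF n m) : nstar a ∈ FF n m := by
  induction m generalizing a with
  | zero => rw [mem_FF_zero] at *; rw [ha, nstar_zero]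
  | succ m ih =>
    rw [decomp a, nstar_add, nstar_sum, nstar_algebraMap]
    refine add_mem (alg_mem_FF _ _) (Submodule.sum_mem _ fun j _ => ?_)
    rw [nstar_mul, nstar_iota]
    exact mul_iota_mem _ (ih (mem_FF_succ.1 ha j))

theorem FF_mul {m : ℕ} {a : FreeAlg n} (ha : a ∈ FF n m) (k : ℕ) {b : FreeAlg n}
    (hb : b ∈ FF n k) : a * b ∈ FF n (m + k) := by
  induction m generalizing a with
  | zero => rw [mem_FF_zero] at ha; rw [ha, zero_mul]; exact zero_mem _
  | succ m ih =>
    rw [decomp a, add_mul, Finset.sum_mul]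
    refine add_mem ?_ (Submodule.sum_mem _ fun j _ => ?_)
    · rw [← Algebra.smul_def]
      exact Submodule.smul_mem _ _ (FF_mono (by omega) hb)
    · rw [mul_assoc, show m + 1 + k = (m + k) + 1 by omega]
      exact iota_mul_mem _ (ih (mem_FF_succ.1 ha j))

theorem exists_FF (a : FreeAlg n) : ∃ m, a ∈ FF n m := by
  induction a using FreeAlgebra.induction with
  | grade0 r => exact ⟨1, alg_mem_FF _ _⟩
  | grade1 i => exact ⟨2, by simpa using iota_mul_mem i (one_mem_FF 0)⟩
  | mul a b ha hb =>
    obtain ⟨m, hm⟩ := ha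
    obtain ⟨k, hk⟩ := hb
    exact ⟨m + k, FF_mul hm k hk⟩
  | add a b ha hb =>
    obtain ⟨m, hm⟩ := ha
    obtain ⟨k, hk⟩ := hb
    exact ⟨m + k, add_mem (FF_mono (by omega) hm) (FF_mono (by omega) hk)⟩

instance FF_fd (m : ℕ) : FiniteDimensional ℂ (FF n m) := by
  induction m with
  | zero =>
    change FiniteDimensional ℂ (⊥ : Submodule ℂ (FreeAlg n))
    infer_instance
  | succ m ih =>
    let T : FF n (m + 1) →ₗ[ℂ] (ℂ × (Fin n → FF n m)) :=
      LinearMap.prod (eps.toLinearMap ∘ₗ (FF n (m+1)).subtype)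
        (LinearMap.pi fun j => ((dd j) ∘ₗ (FF n (m+1)).subtype).codRestrict (FF n m)
          (fun x => mem_FF_succ.1 x.2 j))
    refine FiniteDimensional.of_injective T ?_
    rw [← LinearMap.ker_eq_bot, LinearMap.ker_eq_bot']
    intro x hx
    have h1 : eps (x : FreeAlg n) = 0 := congrArg Prod.fst hx
    have h2 : ∀ j, dd j (x : FreeAlg n) = 0 := fun j =>
      congrArg Subtype.val (congrFun (congrArg Prod.snd hx) j)
    apply Subtype.ext
    rw [decomp (x : FreeAlg n)]
    simp [h1, h2]

theorem exists_FF_mat {d : ℕ} (h : Matrix (Fin d) (Fin d) (FreeAlg n)) :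
    ∃ m, ∀ i k, h i k ∈ FF n m := by
  choose m hm using fun p : Fin d × Fin d => exists_FF (h p.1 p.2)
  refine ⟨∑ p, m p, fun i k => FF_mono ?_ (hm (i, k))⟩
  exact Finset.single_le_sum (f := m) (fun _ _ => Nat.zero_le _) (Finset.mem_univ _)

end Part0

open scoped Kronecker Matrix ComplexOrder

section Part1
variable {n d : ℕ}

/-- constant matrices -/
noncomputable abbrev CM (C : Matrix (Fin d) (Fin d) ℂ) : Matrix (Fin d) (Fin d) (FreeAlg n) :=
  C.map (algebraMap ℂ (FreeAlg n))

theorem monicPoly_apply (A : Fin n → Matrix (Fin d) (Fin d) ℂ) (i k : Fin d) :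
    monicPoly A i k = (1 : Matrix (Fin d) (Fin d) (FreeAlg n)) i k +
      ∑ j, A j i k • FreeAlgebra.ι ℂ j := by
  simp [monicPoly, Matrix.add_apply, Matrix.sum_apply]

theorem monic_mul_apply {K : Type*} (A : Fin n → Matrix (Fin d) (Fin d) ℂ)
    (g : Matrix (Fin d) K (FreeAlg n)) (i : Fin d) (k : K) :
    (monicPoly A * g) i k = g i k + ∑ j, ∑ l, A j i l • (FreeAlgebra.ι ℂ j * g l k) := by
  rw [Matrix.mul_apply]
  simp only [monicPoly_apply, add_mul, Finset.sum_add_distrib, Finset.sum_mul]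
  rw [← Matrix.mul_apply, Matrix.one_mul, Finset.sum_comm]
  simp

theorem mul_monic_apply {K : Type*} (A : Fin n → Matrix (Fin d) (Fin d) ℂ)
    (g : Matrix K (Fin d) (FreeAlg n)) (i : K) (k : Fin d) :
    (g * monicPoly A) i k = g i k + ∑ j, ∑ l, A j l k • (g i l * FreeAlgebra.ι ℂ j) := by
  rw [Matrix.mul_apply]
  simp only [monicPoly_apply, mul_add, Finset.sum_add_distrib, Finset.mul_sum]
  rw [← Matrix.mul_apply, Matrix.mul_one, Finset.sum_comm]
  simp

theorem dd_monic_mul {K : Type*} (A : Fin n → Matrix (Fin d) (Fin d) ℂ)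
    (g : Matrix (Fin d) K (FreeAlg n)) (i : Fin d) (k : K) (j : Fin n) :
    dd j ((monicPoly A * g) i k) = dd j (g i k) + ∑ l, A j i l • g l k := by
  rw [monic_mul_apply, map_add, map_sum]
  simp only [map_sum, map_smul, dd_iota_mul, smul_ite, smul_zero]
  congr 1
  rw [Finset.sum_comm]
  simp

theorem dd_mul_monic {K : Type*} (A : Fin n → Matrix (Fin d) (Fin d) ℂ)
    (g : Matrix K (Fin d) (FreeAlg n)) (i : K) (k : Fin d) (j : Fin n) :
    dd j ((g * monicPoly A) i k) = (g.map (dd j) * monicPoly A) i k +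
      algebraMap ℂ _ (∑ l, eps (g i l) * A j l k) := by
  rw [mul_monic_apply, mul_monic_apply, map_add, map_sum]
  simp only [map_sum, map_smul, dd_mul, dd_iota, smul_add, Finset.sum_add_distrib, Matrix.map_apply,
    smul_ite, smul_zero]
  rw [add_assoc]
  congr 1
  rw [add_comm]
  congr 1
  rw [Finset.sum_comm]
  simp [Algebra.smul_def, mul_comm]

theorem eps_monic_mul {K : Type*} (A : Fin n → Matrix (Fin d) (Fin d) ℂ)
    (g : Matrix (Fin d) K (FreeAlg n)) (i : Fin d) (k : K) :
    eps ((monicPoly A * g) i k) = eps (g i k) := by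
  rw [monic_mul_apply]; simp

theorem eps_mul_monic {K : Type*} (A : Fin n → Matrix (Fin d) (Fin d) ℂ)
    (g : Matrix K (Fin d) (FreeAlg n)) (i : K) (k : Fin d) :
    eps ((g * monicPoly A) i k) = eps (g i k) := by
  rw [mul_monic_apply]; simp

theorem adjM_mul {I J K : Type*} [Fintype J] (f : Matrix I J (FreeAlg n))
    (g : Matrix J K (FreeAlg n)) : adjM (f * g) = adjM g * adjM f := by
  ext i k
  simp [adjM, Matrix.mul_apply, nstar_sum, nstar_mul]

theorem adjM_add {I J : Type*} (f g : Matrix I J (FreeAlg n)) :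
    adjM (f + g) = adjM f + adjM g := by
  ext i k
  simp [adjM, nstar_add]

theorem adjM_adjM {I J : Type*} (f : Matrix I J (FreeAlg n)) : adjM (adjM f) = f := by
  ext i k
  simp [adjM, nstar_nstar]

theorem adjM_zero {I J : Type*} : adjM (0 : Matrix I J (FreeAlg n)) = 0 := by
  ext i k
  simp [adjM, nstar_zero]

theorem adjM_CM (C : Matrix (Fin d) (Fin d) ℂ) :
    adjM (CM (n := n) C) = CM Cᴴ := by
  ext i k
  simp [adjM, nstar_algebraMap]

theorem adjM_monic (A : Fin n → Matrix (Fin d) (Fin d) ℂ) (hA : ∀ j, (A j).IsHermitian) :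
    adjM (monicPoly A) = monicPoly A := by
  ext i k
  simp only [adjM, monicPoly_apply, nstar_add, nstar_sum, nstar_smul, nstar_iota]
  congr 1
  · by_cases h : i = k
    · subst h; simp [nstar_one]
    · rw [Matrix.one_apply_ne h, Matrix.one_apply_ne (Ne.symm h), nstar_zero]
  · refine Finset.sum_congr rfl fun j _ => ?_
    have := (hA j).apply i k
    rw [starRingEnd_apply, this]

theorem CM_mul (C D : Matrix (Fin d) (Fin d) ℂ) :
    CM (n := n) (C * D) = CM C * CM D := Matrix.map_mul

theorem CM_comm_iff (A : Fin n → Matrix (Fin d) (Fin d) ℂ) (C : Matrix (Fin d) (Fin d) ℂ)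
    (h : ∀ j, C * A j = A j * C) : CM C * monicPoly A = monicPoly A * CM C := by
  ext i k
  rw [monic_mul_apply, mul_monic_apply]
  congr 1
  refine Finset.sum_congr rfl fun j _ => ?_
  have := congrFun (congrFun (h j) i) k
  rw [Matrix.mul_apply, Matrix.mul_apply] at this
  simp only [Matrix.map_apply, ← Algebra.smul_def, smul_smul,
    ← Algebra.commutes, ← Finset.sum_smul]
  rw [← this]
  congr 1
  exact Finset.sum_congr rfl fun _ _ => mul_comm _ _

theorem monic_cancel (A B : Fin n → Matrix (Fin d) (Fin d) ℂ) (hB : ∑ j, B j * A j = 1)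
    {K : Type*} (m : ℕ) (g : Matrix (Fin d) K (FreeAlg n)) (hg : ∀ i k, g i k ∈ FF n m)
    (h : ∀ j i k, dd j ((monicPoly A * g) i k) = 0) : g = 0 := by
  induction m with
  | zero => ext i k; exact mem_FF_zero.1 (hg i k)
  | succ m ih =>
    apply ih
    intro a k
    have h1 : g a k = ∑ j, ∑ i, B j a i • ∑ l, A j i l • g l k := by
      have : ∀ l, ∑ j, ∑ i, B j a i * A j i l = (1 : Matrix (Fin d) (Fin d) ℂ) a l := by
        intro l; rw [← hB]; simp [Matrix.sum_apply, Matrix.mul_apply]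
      calc g a k = ∑ l, (1 : Matrix (Fin d) (Fin d) ℂ) a l • g l k := by
            simp [Matrix.one_apply]
        _ = _ := by
            simp only [← this, Finset.sum_smul, Finset.smul_sum, smul_smul]
            rw [Finset.sum_comm]
            refine Finset.sum_congr rfl fun j _ => ?_
            rw [Finset.sum_comm]
    rw [h1]
    refine Submodule.sum_mem _ fun j _ => Submodule.sum_mem _ fun i _ => Submodule.smul_mem _ _ ?_
    have := h j i k
    rw [dd_monic_mul] at this
    rw [eq_neg_of_add_eq_zero_right this]
    exact neg_mem (mem_FF_succ.1 (hg i k) j)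

theorem monic_cancel' (A B : Fin n → Matrix (Fin d) (Fin d) ℂ) (hB : ∑ j, B j * A j = 1)
    (g : Matrix (Fin d) (Fin d) (FreeAlg n)) (c : Matrix (Fin d) (Fin d) ℂ)
    (h : monicPoly A * g = CM c) : g = 0 := by
  obtain ⟨m, hm⟩ := exists_FF_mat g
  exact monic_cancel A B hB m g hm (by intro j i k; rw [h]; simp)

theorem monic_cancel_right (A B : Fin n → Matrix (Fin d) (Fin d) ℂ) (hB : ∑ j, B j * A j = 1)
    (hA : ∀ j, (A j).IsHermitian)
    (g : Matrix (Fin d) (Fin d) (FreeAlg n)) (c : Matrix (Fin d) (Fin d) ℂ)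
    (h : g * monicPoly A = CM c) : g = 0 := by
  have := congrArg adjM h
  rw [adjM_mul, adjM_monic A hA, adjM_CM] at this
  have := monic_cancel' A B hB _ _ this
  rw [← adjM_adjM g, this, adjM_zero]

theorem CM_injective : Function.Injective (CM (n := n) (d := d)) := by
  intro a b h
  ext i k
  have := congrFun (congrFun h i) k
  simpa using this

theorem right_factor (A B : Fin n → Matrix (Fin d) (Fin d) ℂ) (hB : ∑ j, B j * A j = 1)
    (m : ℕ) (g g' : Matrix (Fin d) (Fin d) (FreeAlg n)) (hg : ∀ i k, g' i k ∈ FF n (m + 1))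
    (h : g * monicPoly A = monicPoly A * g') :
    ∃ (e : Matrix (Fin d) (Fin d) (FreeAlg n)) (c : Matrix (Fin d) (Fin d) ℂ),
      g' = e * monicPoly A + CM c := by
  induction m generalizing g g' with
  | zero =>
    refine ⟨0, g'.map eps, ?_⟩
    ext i k
    have := FF_one.1 (hg i k)
    simpa using this
  | succ m ih =>
    let e : Matrix (Fin d) (Fin d) (FreeAlg n) := ∑ j, CM (B j) * g.map (dd j)
    let g'' : Matrix (Fin d) (Fin d) (FreeAlg n) :=
      ∑ j, CM (B j) * (CM (g.map eps * A j) - g'.map (dd j))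
    have key : ∀ j, g.map (dd j) * monicPoly A + CM (g.map eps * A j) =
        g'.map (dd j) + CM (A j) * g' := by
      intro j
      ext i k
      have := congrArg (dd j) (congrFun (congrFun h i) k)
      rw [dd_monic_mul, dd_mul_monic] at this
      simp only [Matrix.add_apply, Matrix.map_apply, Matrix.mul_apply, ← Algebra.smul_def] at this ⊢
      exact this
    have hg' : g' = e * monicPoly A + g'' := by
      have h1 : g' = ∑ j, CM (B j) * (CM (A j) * g') := by
        simp only [← Matrix.mul_assoc, ← CM_mul]
        rw [← Finset.sum_mul]
        have : ∑ j, CM (n := n) (B j * A j) = CM (∑ j, B j * A j) := by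
          ext i k; simp [Matrix.sum_apply, -Matrix.map_mul]
        rw [this, hB]
        simp
      have h2 : ∀ j, CM (A j) * g' = g.map (dd j) * monicPoly A +
          (CM (g.map eps * A j) - g'.map (dd j)) := by
        intro j
        have := key j
        rw [← add_sub_assoc, this]; abel
      conv_lhs => rw [h1]
      simp only [h2, mul_add, Finset.sum_add_distrib, e, g'', Finset.sum_mul, Matrix.mul_assoc]
    obtain ⟨e2, c, h3⟩ := ih (g - monicPoly A * e) g'' (by
      intro i k
      simp only [g'', Matrix.sum_apply, Matrix.mul_apply, Matrix.map_apply, ← Algebra.smul_def]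
      refine Submodule.sum_mem _ fun j _ => Submodule.sum_mem _ fun l _ => Submodule.smul_mem _ _ ?_
      rw [Matrix.sub_apply]
      exact sub_mem (alg_mem_FF _ _) (mem_FF_succ.1 (hg l k) j)) (by
      rw [sub_mul, h, hg', mul_add, Matrix.mul_assoc]; abel)
    exact ⟨e + e2, c, by rw [hg', h3, add_mul, add_assoc]⟩

/-- the algebraic normal form -/
theorem normal_form (A B : Fin n → Matrix (Fin d) (Fin d) ℂ) (hB : ∑ j, B j * A j = 1)
    (hA : ∀ j, (A j).IsHermitian) (f g : Matrix (Fin d) (Fin d) (FreeAlg n)) (hf : adjM f = f)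
    (h : f = g * monicPoly A) :
    ∃ (e : Matrix (Fin d) (Fin d) (FreeAlg n)) (c : Matrix (Fin d) (Fin d) ℂ),
      adjM e = e ∧ c.IsHermitian ∧ (∀ j, c * A j = A j * c) ∧
      f = monicPoly A * e * monicPoly A + CM c * monicPoly A := by
  have h' : g * monicPoly A = monicPoly A * adjM g := by
    rw [← h, ← hf, h, adjM_mul, adjM_monic A hA]
  obtain ⟨m, hm⟩ := exists_FF_mat (adjM g)
  obtain ⟨e, c, hec⟩ := right_factor A B hB m g (adjM g)
    (fun i k => FF_mono (Nat.le_succ m) (hm i k)) h'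
  have h1 : (g - monicPoly A * e) * monicPoly A = monicPoly A * CM c := by
    rw [sub_mul, h', hec, mul_add, Matrix.mul_assoc]; abel
  have hcomm : ∀ j, c * A j = A j * c := by
    intro j
    have e1 : ∀ i k, eps ((g - monicPoly A * e) i k) = c i k := by
      intro i k
      rw [← eps_mul_monic A, h1, eps_monic_mul]; simp
    have : (g - monicPoly A * e).map (dd j) * monicPoly A = CM (A j * c - c * A j) := by
      ext i k
      have := congrArg (dd j) (congrFun (congrFun h1 i) k)
      rw [dd_monic_mul, dd_mul_monic] at this
      simp only [e1, Matrix.map_apply, dd_alg, zero_add, Algebra.smul_def, ← map_mul, ← map_sum]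
        at this
      refine (eq_sub_of_add_eq this).trans ?_
      change _ = algebraMap ℂ (FreeAlg n) ((A j * c - c * A j) i k)
      rw [Matrix.sub_apply, Matrix.mul_apply, Matrix.mul_apply, map_sub]
    have h0 := monic_cancel_right A B hB hA _ _ this
    rw [h0, zero_mul] at this
    have h2 : CM (n := n) (0 : Matrix (Fin d) (Fin d) ℂ) = CM (A j * c - c * A j) := by
      rw [← this]; ext i k; simp
    have := CM_injective h2
    exact (sub_eq_zero.1 this.symm).symm
  have hfe : f = monicPoly A * e * monicPoly A + CM c * monicPoly A := by
    rw [h, h', hec, mul_add, Matrix.mul_assoc, CM_comm_iff A c hcomm]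
  have hcommH : ∀ j, cᴴ * A j = A j * cᴴ := by
    intro j
    have := congrArg Matrix.conjTranspose (hcomm j)
    rw [Matrix.conjTranspose_mul, Matrix.conjTranspose_mul, (hA j).eq] at this
    exact this.symm
  have h3 : monicPoly A * ((e - adjM e) * monicPoly A + CM (c - cᴴ)) = CM 0 := by
    have h4 : adjM f = monicPoly A * adjM e * monicPoly A + monicPoly A * CM cᴴ := by
      rw [hfe, adjM_add, adjM_mul, adjM_mul, adjM_mul, adjM_monic A hA, adjM_CM, Matrix.mul_assoc]
    rw [hf, hfe, CM_comm_iff A c hcomm] at h4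
    have h5 : CM (n := n) (c - cᴴ) = CM c - CM cᴴ := by ext i k; simp
    have h6 : CM (n := n) (0 : Matrix (Fin d) (Fin d) ℂ) = 0 := by ext i k; simp
    rw [h5, h6, mul_add, sub_mul, mul_sub, mul_sub, ← Matrix.mul_assoc, ← Matrix.mul_assoc]
    have := sub_eq_zero.2 h4
    rw [← this]; abel
  have h7 := monic_cancel' A B hB _ _ h3
  have h8 : (e - adjM e) * monicPoly A = CM (cᴴ - c) := by
    rw [eq_neg_of_add_eq_zero_left h7]; ext i k; simp
  have h9 := monic_cancel_right A B hB hA _ _ h8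
  rw [h9, zero_mul] at h8
  have h10 : CM (n := n) (0 : Matrix (Fin d) (Fin d) ℂ) = CM (cᴴ - c) := by
    rw [← h8]; ext i k; simp
  exact ⟨e, c, (sub_eq_zero.1 h9).symm, sub_eq_zero.1 (CM_injective h10).symm, hcomm, hfe⟩

theorem eps_nstar (a : FreeAlg n) : eps (nstar a) = starRingEnd ℂ (eps a) := by
  induction a using FreeAlgebra.induction with
  | grade0 r => rw [nstar_algebraMap]; simp
  | grade1 i => rw [nstar_iota]; simp
  | mul a b ha hb => rw [nstar_mul]; simp [ha, hb, mul_comm]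
  | add a b ha hb => rw [nstar_add]; simp [ha, hb]

theorem sos_zero {I : Type*} [Fintype I] [DecidableEq I] (K : I → I → FreeAlg n)
    (hK : ∀ s t, eps (K s t) = if s = t then 1 else 0) (m : ℕ) (y : I → FreeAlg n)
    (hy : ∀ s, y s ∈ FF n m) (h : ∑ s, ∑ t, y s * (K s t * nstar (y t)) = 0) : ∀ s, y s = 0 := by
  induction m generalizing y with
  | zero => exact fun s => mem_FF_zero.1 (hy s)
  | succ m ih =>
    have h0 : ∀ s, eps (y s) = 0 := by
      have h1 := congrArg eps h
      simp only [map_sum, map_mul, hK, eps_nstar, map_zero, ite_mul, one_mul, zero_mul, mul_ite,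
        mul_zero, Finset.sum_ite_eq, Finset.mem_univ, if_true, Complex.mul_conj] at h1
      rw [← Complex.ofReal_sum] at h1
      have h2 := (Finset.sum_eq_zero_iff_of_nonneg (fun s _ => Complex.normSq_nonneg _)).1
        (Complex.ofReal_eq_zero.1 h1)
      exact fun s => Complex.normSq_eq_zero.1 (h2 s (Finset.mem_univ s))
    have h3 : ∀ j s, dd j (y s) = 0 := by
      intro j
      apply ih (fun s => dd j (y s)) (fun s => mem_FF_succ.1 (hy s) j)
      have h4 := congrArg (fun a => nstar (dd j (nstar (dd j a)))) h
      simp only [map_sum, dd_mul, h0, zero_smul, zero_add, nstar_sum, nstar_mul, nstar_nstar,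
        mul_assoc, map_zero, nstar_zero] at h4
      exact h4
    intro s
    rw [decomp (y s)]
    simp [h0, h3]

end Part1

open scoped Kronecker Matrix ComplexOrder

section Part2

open scoped MatrixOrder in
theorem psd_sqrt_real {m : ℕ} {M : Matrix (Fin m) (Fin m) ℝ} (h : M.PosSemidef) :
    ∃ S : Matrix (Fin m) (Fin m) ℝ, M = S.transpose * S := by
  obtain ⟨S, hS⟩ := CStarAlgebra.nonneg_iff_eq_star_mul_self.mp h.nonneg
  refine ⟨S, ?_⟩
  rw [hS]; congr 1

theorem K0_compact (m : ℕ) :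
    IsCompact {M : Fin m → Fin m → ℝ | (Matrix.of M).PosSemidef ∧ ∑ i, M i i = 1} := by
  have hc : IsCompact {S : Fin m → Fin m → ℝ | ∑ i, ∑ k, S k i * S k i = 1} := by
    apply Metric.isCompact_of_isClosed_isBounded
    · exact isClosed_eq (by fun_prop) continuous_const
    · refine (Metric.isBounded_closedBall (x := (0 : Fin m → Fin m → ℝ)) (r := 1)).subset ?_
      intro S hS
      simp only [Set.mem_ofPred_eq] at hS
      rw [mem_closedBall_zero_iff, pi_norm_le_iff_of_nonneg zero_le_one]
      intro k
      rw [pi_norm_le_iff_of_nonneg zero_le_one]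
      intro i
      have h1 : S k i * S k i ≤ ∑ k, S k i * S k i :=
        Finset.single_le_sum (f := fun k => S k i * S k i) (fun k _ => mul_self_nonneg _) (Finset.mem_univ k)
      have h2 : ∑ k, S k i * S k i ≤ ∑ i, ∑ k, S k i * S k i :=
        Finset.single_le_sum (f := fun i => ∑ k, S k i * S k i)
          (fun k _ => Finset.sum_nonneg fun _ _ => mul_self_nonneg _) (Finset.mem_univ i)
      rw [Real.norm_eq_abs]
      exact abs_le_one_iff_mul_self_le_one.mpr (by linarith)
  have := hc.image (f := fun S : Fin m → Fin m → ℝ => fun i j => ∑ k, S k i * S k j) (by fun_prop)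
  convert this using 1
  ext M
  constructor
  · rintro ⟨h1, h2⟩
    obtain ⟨S, hS⟩ := psd_sqrt_real h1
    have hM : ∀ i j, M i j = ∑ k, S k i * S k j := by
      intro i j
      have := congrFun (congrFun hS i) j
      simpa [Matrix.mul_apply] using this
    refine ⟨S, ?_, ?_⟩
    · change ∑ i, ∑ k, S k i * S k i = 1
      rw [← h2]; exact Finset.sum_congr rfl fun i _ => (hM i i).symm
    · funext i j; exact (hM i j).symm
  · rintro ⟨S, hS, rfl⟩
    refine ⟨?_, hS⟩
    have : (Matrix.of fun i j => ∑ k, S k i * S k j) = (Matrix.of S).conjTranspose * Matrix.of S := by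
      ext i j; simp [Matrix.mul_apply]
    rw [this]
    exact Matrix.posSemidef_conjTranspose_mul_self _

theorem K0_convex (m : ℕ) :
    Convex ℝ {M : Fin m → Fin m → ℝ | (Matrix.of M).PosSemidef ∧ ∑ i, M i i = 1} := by
  rintro M ⟨h1, h2⟩ M' ⟨h1', h2'⟩ a b ha hb hab
  refine ⟨?_, ?_⟩
  · have := (h1.smul ha).add (h1'.smul hb)
    exact this
  · simp only [Pi.add_apply, Pi.smul_apply, smul_eq_mul, Finset.sum_add_distrib, ← Finset.mul_sum, h2, h2']
    linarith

theorem sepS {P V : Type*} [AddCommGroup P] [Module ℝ P] [FiniteDimensional ℝ P]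
    [AddCommGroup V] [Module ℝ V] (B : P →ₗ[ℝ] P →ₗ[ℝ] V)
    (h : ∀ (N : ℕ) (p : Fin N → P), ∑ i, B (p i) (p i) = 0 → ∀ i, p i = 0) :
    ∃ φ : V →ₗ[ℝ] ℝ, ∀ p, p ≠ 0 → 0 < φ (B p p) := by
  let b := Module.finBasis ℝ P
  set m := Module.finrank ℝ P
  let Λ : (Fin m → Fin m → ℝ) →ₗ[ℝ] V :=
    { toFun := fun M => ∑ i, ∑ j, M i j • B (b i) (b j)
      map_add' := by intro M M'; simp [add_smul, Finset.sum_add_distrib]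
      map_smul' := by intro c M; simp [mul_smul, Finset.smul_sum] }
  have hexp : ∀ c : Fin m → ℝ, B (∑ i, c i • b i) (∑ i, c i • b i) = Λ (fun i j => c i * c j) := by
    intro c
    simp only [map_sum, LinearMap.sum_apply, map_smul, LinearMap.smul_apply, Λ, LinearMap.coe_mk, AddHom.coe_mk, Finset.smul_sum]
    rw [Finset.sum_comm]
    refine Finset.sum_congr rfl fun i _ => Finset.sum_congr rfl fun j _ => ?_
    rw [smul_comm, mul_smul]
  have hdisj : Disjoint {M : Fin m → Fin m → ℝ | (Matrix.of M).PosSemidef ∧ ∑ i, M i i = 1}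
      (LinearMap.ker Λ : Set (Fin m → Fin m → ℝ)) := by
    rw [Set.disjoint_left]
    rintro M ⟨h1, h2⟩ h3
    obtain ⟨S, hS⟩ := psd_sqrt_real h1
    have hM : ∀ i j, M i j = ∑ k, S k i * S k j := by
      intro i j
      have := congrFun (congrFun hS i) j
      simpa [Matrix.mul_apply] using this
    have h4 : ∑ k, B (∑ i, S k i • b i) (∑ i, S k i • b i) = 0 := by
      have h5 : Λ M = 0 := h3
      have hM' : M = ∑ k, (fun i j => S k i * S k j) := by
        funext i j; rw [hM]; simp
      rw [hM', map_sum] at h5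
      rw [← h5]
      exact Finset.sum_congr rfl fun k _ => hexp _
    have h6 := h m _ h4
    have h7 : ∀ k i, S k i = 0 := by
      intro k
      exact Fintype.linearIndependent_iff.mp b.linearIndependent _ (h6 k)
    simp [hM, h7] at h2
  obtain ⟨f, u, v, hfu, huv, hfv⟩ := geometric_hahn_banach_compact_closed (K0_convex m) (K0_compact m)
    (LinearMap.ker Λ).convex (Submodule.closed_of_finiteDimensional _) hdisj
  have hker : ∀ M ∈ LinearMap.ker Λ, f M = 0 := by
    intro M hM
    by_contra hne
    have := hfv (((v - 1) / f M) • M) ((LinearMap.ker Λ).smul_mem _ hM)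
    rw [map_smul, smul_eq_mul, div_mul_cancel₀ _ hne] at this
    linarith
  have hv : v < 0 := by
    have := hfv 0 (LinearMap.ker Λ).zero_mem
    simpa using this
  have : (-(f : (Fin m → Fin m → ℝ) →ₗ[ℝ] ℝ)) ∈ LinearMap.range Λ.dualMap := by
    rw [LinearMap.range_dualMap_eq_dualAnnihilator_ker, Submodule.mem_dualAnnihilator]
    intro M hM
    simp [hker M hM]
  obtain ⟨φ, hφ⟩ := this
  refine ⟨φ, fun p hp => ?_⟩
  have hp' : p = ∑ i, b.repr p i • b i := (b.sum_repr p).symm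
  have hs : 0 < ∑ i, b.repr p i * b.repr p i := by
    apply lt_of_le_of_ne (Finset.sum_nonneg fun _ _ => mul_self_nonneg _)
    intro h0
    apply hp
    rw [hp']
    apply Finset.sum_eq_zero
    intro i hi
    have := (Finset.sum_eq_zero_iff_of_nonneg (fun _ _ => mul_self_nonneg _)).mp h0.symm i hi
    rw [mul_self_eq_zero.mp this, zero_smul]
  set s := ∑ i, b.repr p i * b.repr p i
  have hmem : (fun i j => s⁻¹ * (b.repr p i * b.repr p j)) ∈
      {M : Fin m → Fin m → ℝ | (Matrix.of M).PosSemidef ∧ ∑ i, M i i = 1} := by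
    refine ⟨?_, ?_⟩
    · have := (Matrix.posSemidef_vecMulVec_self_star (fun i => b.repr p i)).smul (inv_nonneg.mpr hs.le)
      convert this using 1
      ext i j; simp [Matrix.vecMulVec_apply]
    · rw [← Finset.mul_sum]; exact inv_mul_cancel₀ hs.ne'
  have h1 := hfu _ hmem
  have h2 : f (fun i j => s⁻¹ * (b.repr p i * b.repr p j)) = s⁻¹ * f (fun i j => b.repr p i * b.repr p j) := by
    rw [← smul_eq_mul, ← map_smul]; rfl
  have h3 : φ (B p p) = - f (fun i j => b.repr p i * b.repr p j) := by
    conv_lhs => rw [hp', hexp]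
    have := LinearMap.congr_fun hφ (fun i j => b.repr p i * b.repr p j)
    simpa using this
  rw [h3]
  rw [h2] at h1
  have : s⁻¹ * f (fun i j => b.repr p i * b.repr p j) < 0 := by linarith
  have := neg_of_mul_neg_right this (inv_nonneg.mpr hs.le)
  linarith

theorem sepS2 {P V : Type*} [AddCommGroup P] [Module ℝ P] [FiniteDimensional ℝ P]
    [AddCommGroup V] [Module ℝ V] (B : P →ₗ[ℝ] P →ₗ[ℝ] V)
    (h : ∀ (N : ℕ) (p : Fin N → P), ∑ i, B (p i) (p i) = 0 → ∀ i, p i = 0) (z : V)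
    (hz : ∀ φ : V →ₗ[ℝ] ℝ, (∀ p, p ≠ 0 → 0 < φ (B p p)) → 0 ≤ φ z) :
    ∃ (N : ℕ) (p : Fin N → P), z = ∑ i, B (p i) (p i) := by
  by_contra hno
  let B' : (P × ℝ) →ₗ[ℝ] (P × ℝ) →ₗ[ℝ] V :=
    B.compl₁₂ (LinearMap.fst ℝ P ℝ) (LinearMap.fst ℝ P ℝ) -
      (LinearMap.mk₂ ℝ (fun s t : ℝ => (s * t) • z) (by intros; simp [add_mul, add_smul])
        (by intros; simp [mul_smul]) (by intros; simp [mul_add, add_smul])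
        (by intro c a b; simp only [smul_eq_mul, smul_smul]; congr 1; ring)).compl₁₂ (LinearMap.snd ℝ P ℝ) (LinearMap.snd ℝ P ℝ)
  have hB' : ∀ x : P × ℝ, B' x x = B x.1 x.1 - (x.2 * x.2) • z := by
    intro x; simp [B']
  obtain ⟨φ, hφ⟩ := sepS B' (by
    intro N p hp
    simp only [hB', Finset.sum_sub_distrib, ← Finset.sum_smul] at hp
    set t := ∑ i, (p i).2 * (p i).2 with ht
    by_cases ht0 : t = 0
    · rw [ht0, zero_smul, sub_zero] at hp
      have h1 := h N _ hp
      intro i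
      have := (Finset.sum_eq_zero_iff_of_nonneg (fun _ _ => mul_self_nonneg _)).mp (ht.symm.trans ht0) i (Finset.mem_univ i)
      exact Prod.ext (h1 i) (mul_self_eq_zero.mp this)
    · exfalso
      have htp : 0 < t := lt_of_le_of_ne (Finset.sum_nonneg fun _ _ => mul_self_nonneg _) (Ne.symm ht0)
      apply hno
      refine ⟨N, fun i => (Real.sqrt t)⁻¹ • (p i).1, ?_⟩
      have h1 : ∑ i, B (p i).1 (p i).1 = t • z := by rw [sub_eq_zero] at hp; exact hp
      simp only [map_smul, LinearMap.smul_apply, ← Finset.smul_sum, h1, smul_smul]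
      rw [← mul_inv, Real.mul_self_sqrt htp.le, inv_mul_cancel₀ ht0, one_smul])
  have h1 := hz φ (by
    intro p hp
    have := hφ (p, 0) (by intro h0; exact hp (congrArg Prod.fst h0))
    simpa [hB'] using this)
  have h2 := hφ (0, 1) (by intro h0; exact one_ne_zero (congrArg Prod.snd h0))
  simp [hB'] at h2
  linarith

/-- Finsler type lemma -/
theorem finsler {W : Type*} [AddCommGroup W] [Module ℝ W] [FiniteDimensional ℝ W]
    (B1 B2 : W →ₗ[ℝ] W →ₗ[ℝ] ℝ) (h2 : ∀ w, 0 ≤ B2 w w)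
    (h1 : ∀ w, w ≠ 0 → B2 w w = 0 → 0 < B1 w w) :
    ∃ C : ℝ, 0 ≤ C ∧ ∀ w, 0 ≤ B1 w w + C * B2 w w := by
  let b := Module.finBasis ℝ W
  set m := Module.finrank ℝ W
  let w : (Fin m → ℝ) →ₗ[ℝ] W := (b.equivFun.symm : (Fin m → ℝ) →ₗ[ℝ] W)
  have hq : ∀ B : W →ₗ[ℝ] W →ₗ[ℝ] ℝ, Continuous fun c : Fin m → ℝ => B (w c) (w c) := by
    intro B
    have : (fun c : Fin m → ℝ => B (w c) (w c)) = fun c => ∑ i, ∑ j, c i * (c j * B (b i) (b j)) := by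
      funext c
      have : w c = ∑ i, c i • b i := b.equivFun_symm_apply c
      rw [this]
      simp only [map_sum, LinearMap.sum_apply, map_smul, LinearMap.smul_apply, smul_eq_mul, Finset.mul_sum]
      rw [Finset.sum_comm]
      refine Finset.sum_congr rfl fun i _ => Finset.sum_congr rfl fun j _ => by ring
    rw [this]
    fun_prop
  have hcomp := isCompact_sphere (0 : Fin m → ℝ) 1
  by_contra hno
  push Not at hno
  have key : ∀ N : ℕ, ∃ c ∈ Metric.sphere (0 : Fin m → ℝ) 1, B1 (w c) (w c) + N * B2 (w c) (w c) ≤ 0 := by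
    intro N
    obtain ⟨x, hx⟩ := hno N (Nat.cast_nonneg N)
    set c := b.equivFun x
    have hwc : w c = x := b.equivFun.symm_apply_apply x
    have hc : c ≠ 0 := by
      intro h0
      rw [h0, map_zero] at hwc
      rw [← hwc] at hx; simp at hx
    refine ⟨‖c‖⁻¹ • c, ?_, ?_⟩
    · rw [mem_sphere_zero_iff_norm, norm_smul, norm_inv, norm_norm, inv_mul_cancel₀ (norm_ne_zero_iff.mpr hc)]
    · simp only [map_smul, LinearMap.smul_apply, smul_eq_mul, hwc]
      have : 0 < ‖c‖⁻¹ := inv_pos.mpr (norm_pos_iff.mpr hc)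
      have h3 := mul_neg_of_pos_of_neg (mul_pos this this) hx
      nlinarith
  choose c hc1 hc2 using key
  obtain ⟨a, ha, φ, hφ, hlim⟩ := hcomp.tendsto_subseq hc1
  have hB1 := ((hq B1).tendsto a).comp hlim
  have hB2 := ((hq B2).tendsto a).comp hlim
  have hw : w a ≠ 0 := by
    intro h0
    have : a = 0 := by
      have := b.equivFun.symm.map_eq_zero_iff.mp h0
      exact this
    rw [this] at ha; simp at ha
  have hle : B1 (w a) (w a) ≤ 0 := by
    refine le_of_tendsto hB1 (Filter.Eventually.of_forall fun N => ?_)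
    have := hc2 (φ N)
    have h3 := mul_nonneg (Nat.cast_nonneg (α := ℝ) (φ N)) (h2 (w (c (φ N))))
    simp only [Function.comp]
    linarith
  have hpos : 0 < B2 (w a) (w a) := by
    apply lt_of_le_of_ne (h2 _)
    intro h0
    have := h1 _ hw h0.symm
    linarith
  -- N * B2 is bounded by - B1
  have e1 : ∀ᶠ N in Filter.atTop, B2 (w a) (w a) / 2 < B2 (w (c (φ N))) (w (c (φ N))) :=
    hB2.eventually (lt_mem_nhds (by linarith))
  have e2 : ∀ᶠ N in Filter.atTop, B1 (w a) (w a) - 1 < B1 (w (c (φ N))) (w (c (φ N))) :=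
    hB1.eventually (lt_mem_nhds (by linarith))
  have e3 : ∀ᶠ N : ℕ in Filter.atTop, (1 - B1 (w a) (w a)) / (B2 (w a) (w a) / 2) ≤ (φ N : ℝ) :=
    (tendsto_natCast_atTop_atTop.comp hφ.tendsto_atTop).eventually_ge_atTop _
  obtain ⟨N, g1, g2, g3⟩ := (e1.and (e2.and e3)).exists
  have g4 := hc2 (φ N)
  rw [div_le_iff₀ (by linarith)] at g3
  have g5 : (φ N : ℝ) * (B2 (w a) (w a) / 2) ≤ (φ N : ℝ) * B2 (w (c (φ N))) (w (c (φ N))) :=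
    mul_le_mul_of_nonneg_left g1.le (Nat.cast_nonneg _)
  linarith

/-- complexification of a real functional, compatible with a conjugate-linear involution -/
theorem complexify {V : Type*} [AddCommGroup V] [Module ℂ V] (st : V → V)
    (st_add : ∀ a b, st (a + b) = st a + st b)
    (st_smul : ∀ (c : ℂ) a, st (c • a) = (starRingEnd ℂ c) • st a)
    (st_st : ∀ a, st (st a) = a) (φ : V →ₗ[ℝ] ℝ) :
    ∃ ψ : V →ₗ[ℂ] ℂ, (∀ a, ψ (st a) = starRingEnd ℂ (ψ a)) ∧
      (∀ a, (ψ a).re = (φ a + φ (st a)) / 2) := by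
  have st_real : ∀ (r : ℝ) a, st (r • a) = r • st a := by
    intro r a
    have := st_smul (r : ℂ) a
    simpa using this
  let ρ : V →ₗ[ℝ] ℝ :=
    { toFun := fun a => (φ a + φ (st a)) / 2
      map_add' := by intro a b; simp only [st_add, map_add]; ring
      map_smul' := by intro r a; simp only [st_real, map_smul, smul_eq_mul, RingHom.id_apply]; ring }
  have hρ : ∀ a, ρ (st a) = ρ a := by
    intro a
    change (φ (st a) + φ (st (st a))) / 2 = (φ a + φ (st a)) / 2
    rw [st_st, add_comm]
  have hneg : ∀ a, ρ (-a) = - ρ a := fun a => map_neg ρ a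
  let ψ : V →ₗ[ℂ] ℂ :=
    { toFun := fun a => (ρ a : ℂ) - Complex.I * (ρ (Complex.I • a) : ℂ)
      map_add' := by intro a b; simp only [smul_add, map_add, Complex.ofReal_add]; ring
      map_smul' := by
        intro c a
        have h1 : ∀ b : V, c • b = c.re • b + c.im • (Complex.I • b) := by
          intro b
          conv_lhs => rw [← Complex.re_add_im c]
          rw [add_smul, mul_smul]; simp
        have h2 : ρ (c • a) = c.re * ρ a + c.im * ρ (Complex.I • a) := by
          rw [h1]; simp
        have h3 : ρ (Complex.I • c • a) = c.re * ρ (Complex.I • a) - c.im * ρ a := by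
          rw [smul_comm, h1, smul_smul Complex.I Complex.I, Complex.I_mul_I]
          simp [sub_eq_add_neg]
        simp only [h2, h3, RingHom.id_apply, smul_eq_mul]
        apply Complex.ext
        · simp
        · simp
          ring }
  refine ⟨ψ, ?_, ?_⟩
  · intro a
    have h4 : ρ (Complex.I • st a) = - ρ (Complex.I • a) := by
      have : Complex.I • st a = st (-(Complex.I • a)) := by
        rw [← neg_smul, st_smul]; simp
      rw [this, hρ, hneg]
    change (ρ (st a) : ℂ) - Complex.I * (ρ (Complex.I • st a) : ℂ) =
      starRingEnd ℂ ((ρ a : ℂ) - Complex.I * (ρ (Complex.I • a) : ℂ))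
    rw [h4, hρ]
    apply Complex.ext <;> simp
  · intro a
    change ((ρ a : ℂ) - Complex.I * (ρ (Complex.I • a) : ℂ)).re = _
    simp [ρ]

end Part2

open scoped Kronecker Matrix ComplexOrder

section Part3
variable {n d k : ℕ}

theorem evalM_add {I J : Type*} (f g : Matrix I J (FreeAlg n)) (X : Fin n → Matrix (Fin k) (Fin k) ℂ) :
    evalM (f + g) X = evalM f X + evalM g X := by
  ext p q; simp [evalM]

theorem evalM_zero {I J : Type*} (X : Fin n → Matrix (Fin k) (Fin k) ℂ) :
    evalM (0 : Matrix I J (FreeAlg n)) X = 0 := by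
  ext p q; simp [evalM]

theorem evalM_sum {I J K : Type*} (s : Finset K) (f : K → Matrix I J (FreeAlg n))
    (X : Fin n → Matrix (Fin k) (Fin k) ℂ) :
    evalM (∑ i ∈ s, f i) X = ∑ i ∈ s, evalM (f i) X := by
  classical
  induction s using Finset.induction_on with
  | empty => simp [evalM_zero]
  | insert a s ha ih => rw [Finset.sum_insert ha, Finset.sum_insert ha, evalM_add, ih]

theorem evalM_mul {I J K : Type*} [Fintype J] (f : Matrix I J (FreeAlg n)) (g : Matrix J K (FreeAlg n))
    (X : Fin n → Matrix (Fin k) (Fin k) ℂ) :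
    evalM (f * g) X = evalM f X * evalM g X := by
  ext p q
  simp only [evalM, Matrix.mul_apply, map_sum, map_mul, Matrix.sum_apply, Fintype.sum_prod_type]

theorem lift_nstar (X : Fin n → Matrix (Fin k) (Fin k) ℂ) (hX : ∀ j, (X j).IsHermitian) (a : FreeAlg n) :
    FreeAlgebra.lift ℂ X (nstar a) = (FreeAlgebra.lift ℂ X a)ᴴ := by
  induction a using FreeAlgebra.induction with
  | grade0 c =>
    rw [nstar_algebraMap, AlgHom.commutes, AlgHom.commutes]
    simp only [Algebra.algebraMap_eq_smul_one]
    rw [Matrix.conjTranspose_smul, Matrix.conjTranspose_one]; rfl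
  | grade1 j => rw [nstar_iota]; simpa using (hX j).symm
  | mul a b ha hb => rw [nstar_mul, map_mul, map_mul, ha, hb, Matrix.conjTranspose_mul]
  | add a b ha hb => rw [nstar_add, map_add, map_add, ha, hb, Matrix.conjTranspose_add]

theorem evalM_adj {I J : Type*} (f : Matrix I J (FreeAlg n)) (X : Fin n → Matrix (Fin k) (Fin k) ℂ)
    (hX : ∀ j, (X j).IsHermitian) : evalM (adjM f) X = (evalM f X)ᴴ := by
  ext p q
  simp [evalM, adjM, lift_nstar X hX, Matrix.conjTranspose_apply]

theorem evalM_CM (C : Matrix (Fin d) (Fin d) ℂ) (X : Fin n → Matrix (Fin k) (Fin k) ℂ) :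
    evalM (CM C) X = C ⊗ₖ (1 : Matrix (Fin k) (Fin k) ℂ) := by
  ext p q
  simp [evalM, Matrix.kroneckerMap_apply, Algebra.algebraMap_eq_smul_one, Matrix.one_apply]

theorem evalM_monic (A : Fin n → Matrix (Fin d) (Fin d) ℂ) (X : Fin n → Matrix (Fin k) (Fin k) ℂ) :
    evalM (monicPoly A) X = monicK A X := by
  ext ⟨i, a⟩ ⟨l, b⟩
  simp only [evalM, monicPoly_apply, map_add, map_sum, map_smul, FreeAlgebra.lift_ι_apply, monicK,
    Matrix.add_apply, Matrix.sum_apply, Matrix.kroneckerMap_apply, Matrix.smul_apply, smul_eq_mul]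
  congr 1
  by_cases h : i = l
  · subst h; simp [Matrix.one_apply]
  · simp [Matrix.one_apply, h]

theorem monicK_herm (A : Fin n → Matrix (Fin d) (Fin d) ℂ) (hA : ∀ j, (A j).IsHermitian)
    (X : Fin n → Matrix (Fin k) (Fin k) ℂ) (hX : ∀ j, (X j).IsHermitian) : (monicK A X)ᴴ = monicK A X := by
  rw [← evalM_monic, ← evalM_adj _ _ hX, adjM_monic A hA]

theorem backward (A : Fin n → Matrix (Fin d) (Fin d) ℂ) (hAherm : ∀ j, (A j).IsHermitian)
    (f : Matrix (Fin d) (Fin d) (FreeAlg n))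
    (h : ∃ (M N : ℕ) (p : Fin M → Matrix (Fin d) (Fin 1) (FreeAlg n))
          (q : Fin N → Matrix (Fin d) (Fin d) (FreeAlg n))
          (C : Fin N → Matrix (Fin d) (Fin d) ℂ),
        (∀ j, (C j).map (algebraMap ℂ (FreeAlg n)) * monicPoly A =
          monicPoly A * (C j).map (algebraMap ℂ (FreeAlg n))) ∧
        f = monicPoly A * (∑ i, p i * adjM (p i)) * monicPoly A +
          ∑ j, adjM (q j * monicPoly A + (C j).map (algebraMap ℂ (FreeAlg n))) *
            monicPoly A *
            (q j * monicPoly A + (C j).map (algebraMap ℂ (FreeAlg n))))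
    (k : ℕ) (X : Fin n → Matrix (Fin k) (Fin k) ℂ) (hX : ∀ j, (X j).IsHermitian)
    (hL : (monicK A X).PosSemidef) :
    (evalM f X).PosSemidef ∧
        ∀ u : Fin d × Fin k → ℂ, (monicK A X).mulVec u = 0 → (evalM f X).mulVec u = 0 := by
  obtain ⟨M, N, p, q, C, hC, rfl⟩ := h
  have hC' : ∀ j, evalM (CM (C j)) X * monicK A X = monicK A X * evalM (CM (C j)) X := by
    intro j
    rw [← evalM_monic, ← evalM_mul, ← evalM_mul, hC j]
  simp only [evalM_add, evalM_mul, evalM_sum, evalM_adj _ X hX, evalM_monic] at hC' ⊢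
  have hLh := monicK_herm A hAherm X hX
  set L := monicK A X
  refine ⟨Matrix.PosSemidef.add ?_ ?_, ?_⟩
  · have h1 : (∑ i, evalM (p i) X * (evalM (p i) X)ᴴ).PosSemidef :=
      Matrix.posSemidef_sum _ fun i _ => Matrix.posSemidef_self_mul_conjTranspose _
    have := h1.conjTranspose_mul_mul_same L
    rwa [hLh] at this
  · refine Matrix.posSemidef_sum _ fun j _ => ?_
    exact hL.conjTranspose_mul_mul_same _
  · intro u hu
    rw [Matrix.add_mulVec, ← Matrix.mulVec_mulVec, hu, Matrix.mulVec_zero, zero_add, Matrix.sum_mulVec]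
    refine Finset.sum_eq_zero fun j _ => ?_
    have h2 : L *ᵥ ((evalM (q j) X * L + evalM (CM (C j)) X) *ᵥ u) = 0 := by
      rw [Matrix.add_mulVec, ← Matrix.mulVec_mulVec, hu, Matrix.mulVec_zero, zero_add, Matrix.mulVec_mulVec,
        ← hC' j, ← Matrix.mulVec_mulVec, hu, Matrix.mulVec_zero]
    rw [← Matrix.mulVec_mulVec, ← Matrix.mulVec_mulVec]
    exact (congrArg _ h2).trans (Matrix.mulVec_zero _)

/-- positive definite hermitian forms -/
structure PDForm {W : Type*} [AddCommGroup W] [Module ℂ W] (s : W →ₗ⋆[ℂ] W →ₗ[ℂ] ℂ) : Prop where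
  herm : ∀ a b, s a b = starRingEnd ℂ (s b a)
  pos : ∀ a, a ≠ 0 → 0 < (s a a).re

open scoped MatrixOrder in
theorem psd_sqrt_complex {m : Type*} [Fintype m] [DecidableEq m] {M : Matrix m m ℂ} (h : M.PosSemidef) :
    ∃ S : Matrix m m ℂ, M = Sᴴ * S := by
  obtain ⟨S, hS⟩ := CStarAlgebra.nonneg_iff_eq_star_mul_self.mp h.nonneg
  exact ⟨S, hS⟩

theorem sesq_expand {W : Type*} [AddCommGroup W] [Module ℂ W] {ι : Type*} [Fintype ι]
    (x : W →ₗ⋆[ℂ] W →ₗ[ℂ] ℂ) (b : ι → W) (c e : ι → ℂ) :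
    x (∑ i, c i • b i) (∑ i, e i • b i) = star c ⬝ᵥ (Matrix.of fun i j => x (b i) (b j)) *ᵥ e := by
  simp only [map_sum, LinearMap.sum_apply, map_smul, LinearMap.map_smulₛₗ, LinearMap.smul_apply, dotProduct,
    Matrix.mulVec, Pi.star_apply, Matrix.of_apply, smul_eq_mul, Finset.mul_sum]
  rw [Finset.sum_comm]
  refine Finset.sum_congr rfl fun i _ => Finset.sum_congr rfl fun j _ => ?_
  rw [← starRingEnd_apply]
  ring

theorem realize_form {W : Type*} [AddCommGroup W] [Module ℂ W] [FiniteDimensional ℂ W]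
    (s : W →ₗ⋆[ℂ] W →ₗ[ℂ] ℂ) (hs : PDForm s) :
    ∃ (k : ℕ) (T : W ≃ₗ[ℂ] (Fin k → ℂ)), ∀ a b, s a b = star (T a) ⬝ᵥ T b := by
  let b := Module.finBasis ℂ W
  set m := Module.finrank ℂ W
  let G : Matrix (Fin m) (Fin m) ℂ := Matrix.of fun i j => s (b i) (b j)
  have hb : ∀ c e : Fin m → ℂ, s (b.equivFun.symm c) (b.equivFun.symm e) = star c ⬝ᵥ G *ᵥ e := by
    intro c e
    rw [b.equivFun_symm_apply, b.equivFun_symm_apply]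
    exact sesq_expand s b c e
  have hGh : G.IsHermitian := by
    ext i j
    simp only [G, Matrix.conjTranspose_apply, Matrix.of_apply]
    rw [hs.herm (b i) (b j)]; rfl
  have hreal : ∀ a, (s a a).im = 0 := by
    intro a
    have := congrArg Complex.im (hs.herm a a)
    simp at this; linarith
  have hGpsd : G.PosSemidef := by
    refine Matrix.PosSemidef.of_dotProduct_mulVec_nonneg hGh fun c => ?_
    rw [← hb]
    rw [Complex.nonneg_iff]
    refine ⟨?_, (hreal _).symm⟩
    by_cases h0 : b.equivFun.symm c = 0
    · rw [h0]; simp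
    · exact (hs.pos _ h0).le
  obtain ⟨S, hS⟩ := psd_sqrt_complex hGpsd
  have hinj : Function.Injective (Matrix.mulVecLin S) := by
    rw [← LinearMap.ker_eq_bot, LinearMap.ker_eq_bot']
    intro c hc
    have hc' : S *ᵥ c = 0 := hc
    by_contra hne
    have := hs.pos (b.equivFun.symm c) (fun h0 => hne (b.equivFun.symm.map_eq_zero_iff.mp h0))
    rw [hb, hS, ← Matrix.mulVec_mulVec, hc', Matrix.mulVec_zero, dotProduct_zero] at this
    simp at this
  refine ⟨m, b.equivFun.trans (LinearEquiv.ofInjectiveEndo _ hinj), ?_⟩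
  intro x y
  have h1 := hb (b.equivFun x) (b.equivFun y)
  rw [LinearEquiv.symm_apply_apply, LinearEquiv.symm_apply_apply] at h1
  rw [h1, hS, ← Matrix.mulVec_mulVec]
  change _ = star (S *ᵥ b.equivFun x) ⬝ᵥ (S *ᵥ b.equivFun y)
  rw [Matrix.star_mulVec, ← Matrix.dotProduct_mulVec]

theorem realize {W : Type*} [AddCommGroup W] [Module ℂ W] [FiniteDimensional ℂ W]
    (s : W →ₗ⋆[ℂ] W →ₗ[ℂ] ℂ) (hs : PDForm s) (x : Fin n → W →ₗ⋆[ℂ] W →ₗ[ℂ] ℂ)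
    (hx : ∀ j a b, x j a b = starRingEnd ℂ (x j b a)) :
    ∃ (k : ℕ) (T : W ≃ₗ[ℂ] (Fin k → ℂ)) (X : Fin n → Matrix (Fin k) (Fin k) ℂ),
      (∀ j, (X j).IsHermitian) ∧ (∀ a b, s a b = star (T a) ⬝ᵥ T b) ∧
      ∀ j a b, x j a b = star (T a) ⬝ᵥ X j *ᵥ T b := by
  obtain ⟨k, T, hT⟩ := realize_form s hs
  refine ⟨k, T, fun j => Matrix.of fun p q => x j (T.symm (Pi.single p 1)) (T.symm (Pi.single q 1)), ?_, hT, ?_⟩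
  · intro j
    ext p q
    simp only [Matrix.conjTranspose_apply, Matrix.of_apply]
    rw [hx j (T.symm (Pi.single p 1))]; rfl
  · intro j a b
    have h1 : ∀ a, a = ∑ i, T a i • T.symm (Pi.single i 1) := by
      intro a
      apply T.injective
      rw [map_sum]
      simp only [map_smul, LinearEquiv.apply_symm_apply]
      exact (pi_eq_sum_univ' (T a))
    conv_lhs => rw [h1 a, h1 b]
    exact sesq_expand (x j) _ _ _

/-- the form of the pencil -/
noncomputable def Lf (A : Fin n → Matrix (Fin d) (Fin d) ℂ) {W : Type*} [AddCommGroup W] [Module ℂ W]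
    (s : W →ₗ⋆[ℂ] W →ₗ[ℂ] ℂ) (x : Fin n → W →ₗ⋆[ℂ] W →ₗ[ℂ] ℂ) (v w : Fin d → W) : ℂ :=
  ∑ i, s (v i) (w i) + ∑ j, ∑ i, ∑ l, A j i l * x j (v i) (w l)

theorem monicK_mulVec (A : Fin n → Matrix (Fin d) (Fin d) ℂ) (X : Fin n → Matrix (Fin k) (Fin k) ℂ)
    (v : Fin d × Fin k → ℂ) (i : Fin d) (a : Fin k) :
    (monicK A X *ᵥ v) (i, a) = v (i, a) + ∑ j, ∑ l, A j i l * (X j *ᵥ fun b => v (l, b)) a := by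
  simp only [monicK, Matrix.add_mulVec, Matrix.one_mulVec, Pi.add_apply, Matrix.sum_mulVec, Finset.sum_apply]
  congr 1
  refine Finset.sum_congr rfl fun j _ => ?_
  simp only [Matrix.mulVec, dotProduct, Fintype.sum_prod_type, Matrix.kroneckerMap_apply, Finset.mul_sum]
  refine Finset.sum_congr rfl fun l _ => Finset.sum_congr rfl fun b _ => by ring

theorem evalM_mulVec {I J : Type*} [Fintype J] (f : Matrix I J (FreeAlg n)) (X : Fin n → Matrix (Fin k) (Fin k) ℂ)
    (v : J × Fin k → ℂ) (i : I) (a : Fin k) :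
    (evalM f X *ᵥ v) (i, a) = ∑ l, (FreeAlgebra.lift ℂ X (f i l) *ᵥ fun b => v (l, b)) a := by
  simp only [evalM, Matrix.mulVec, dotProduct, Fintype.sum_prod_type]

theorem Lf_eq (A : Fin n → Matrix (Fin d) (Fin d) ℂ) {W : Type*} [AddCommGroup W] [Module ℂ W]
    (s : W →ₗ⋆[ℂ] W →ₗ[ℂ] ℂ) (x : Fin n → W →ₗ⋆[ℂ] W →ₗ[ℂ] ℂ) (T : W ≃ₗ[ℂ] (Fin k → ℂ))
    (X : Fin n → Matrix (Fin k) (Fin k) ℂ) (hT : ∀ a b, s a b = star (T a) ⬝ᵥ T b)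
    (hX : ∀ j a b, x j a b = star (T a) ⬝ᵥ X j *ᵥ T b) (v w : Fin d → W) :
    Lf A s x v w = star (fun p : Fin d × Fin k => T (v p.1) p.2) ⬝ᵥ
      monicK A X *ᵥ (fun p : Fin d × Fin k => T (w p.1) p.2) := by
  have h0 : (fun p : Fin d × Fin k => T (w p.1) p.2) = fun p : Fin d × Fin k => T (w p.1) p.2 := rfl
  simp only [Lf, hT, hX]
  rw [dotProduct, Fintype.sum_prod_type]
  simp only [monicK_mulVec, mul_add, Finset.sum_add_distrib, Pi.star_apply]
  congr 1
  rw [Finset.sum_comm]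
  refine Finset.sum_congr rfl fun i _ => ?_
  simp only [Finset.mul_sum, dotProduct, Pi.star_apply]
  rw [Finset.sum_comm]
  conv_rhs => rw [Finset.sum_comm]; enter [2, j]; rw [Finset.sum_comm]
  rw [Finset.sum_comm]
  refine Finset.sum_congr rfl fun l _ => Finset.sum_congr rfl fun b _ => Finset.sum_congr rfl fun b _ => by ring

end Part3

open scoped Kronecker Matrix ComplexOrder

section Part4
variable {n d k : ℕ}

theorem sub_kron {m l : Type*} (a b : Matrix m m ℂ) (c : Matrix l l ℂ) : (a - b) ⊗ₖ c = a ⊗ₖ c - b ⊗ₖ c := by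
  ext x y; simp [Matrix.kroneckerMap_apply, sub_mul]

theorem psd_of_re {m : Type*} [Fintype m] {M : Matrix m m ℂ} (hM : M.IsHermitian)
    (h : ∀ w, 0 ≤ (star w ⬝ᵥ M *ᵥ w).re) : M.PosSemidef := by
  refine Matrix.PosSemidef.of_dotProduct_mulVec_nonneg hM fun w => ?_
  rw [Complex.nonneg_iff]
  refine ⟨h w, ?_⟩
  have h1 : star (star w ⬝ᵥ M *ᵥ w) = star w ⬝ᵥ M *ᵥ w := by
    rw [← Matrix.star_dotProduct, Matrix.star_mulVec, hM.eq, ← Matrix.dotProduct_mulVec]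
  have := congrArg Complex.im h1
  simp at this; linarith

theorem psd_re {m : Type*} [Fintype m] {M : Matrix m m ℂ} (hM : M.PosSemidef) (w : m → ℂ) :
    0 ≤ (star w ⬝ᵥ M *ᵥ w).re := (Complex.nonneg_iff.mp (hM.dotProduct_mulVec_nonneg w)).1

/-- compression -/
theorem comp_lemma (A : Fin n → Matrix (Fin d) (Fin d) ℂ) (hAherm : ∀ j, (A j).IsHermitian)
    (hAmin : ∀ (e : ℕ) (C : Fin n → Matrix (Fin e) (Fin e) ℂ), (∀ j, (C j).IsHermitian) →
      (∀ (k : ℕ) (X : Fin n → Matrix (Fin k) (Fin k) ℂ), (∀ j, (X j).IsHermitian) →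
        ((monicK A X).PosSemidef ↔ (monicK C X).PosSemidef)) → d ≤ e)
    (v : Fin d → ℂ) (hv : v ≠ 0) :
    ∃ (k : ℕ) (X : Fin n → Matrix (Fin k) (Fin k) ℂ), (∀ j, (X j).IsHermitian) ∧
      ¬ (monicK A X).PosSemidef ∧
      ∀ w : Fin d × Fin k → ℂ, (∀ a, ∑ i, star (v i) * w (i, a) = 0) →
        0 ≤ (star w ⬝ᵥ monicK A X *ᵥ w).re := by
  by_contra hno
  push Not at hno
  let W : Submodule ℂ (Fin d → ℂ) := LinearMap.ker (dotProductBilin ℂ ℂ (star v))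
  have hW : ∀ w, w ∈ W ↔ ∑ i, star (v i) * w i = 0 := by intro w; rfl
  let s0 : (Fin d → ℂ) →ₗ⋆[ℂ] (Fin d → ℂ) →ₗ[ℂ] ℂ :=
    LinearMap.mk₂'ₛₗ (starRingEnd ℂ) (RingHom.id ℂ) (fun a b => star a ⬝ᵥ b)
      (by intros; simp [add_dotProduct]) (by intros; simp [smul_dotProduct])
      (by intros; simp [dotProduct_add]) (by intros; simp [dotProduct_smul])
  let s : W →ₗ⋆[ℂ] W →ₗ[ℂ] ℂ := s0.domRestrict₁₂ W W
  have hs : ∀ a b : W, s a b = star a.1 ⬝ᵥ b.1 := by intro a b; rfl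
  have hPD : PDForm s := by
    refine ⟨fun a b => ?_, fun a ha => ?_⟩
    · rw [hs, hs, starRingEnd_apply, Matrix.star_dotProduct]
    · rw [hs]
      have : 0 < star a.1 ⬝ᵥ a.1 := Matrix.dotProduct_star_self_pos_iff.mpr (by simpa using ha)
      exact (Complex.pos_iff.mp this).1
  obtain ⟨e, T, hT⟩ := realize_form s hPD
  have hed : e < d := by
    have h1 := T.finrank_eq
    have h2 : Module.finrank ℂ W < Module.finrank ℂ (Fin d → ℂ) := by
      apply Submodule.finrank_lt
      intro htop
      have h3 : v ∈ W := by rw [htop]; trivial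
      have h4 : star v ⬝ᵥ v = 0 := h3
      exact hv (dotProduct_star_self_eq_zero.mp h4)
    simp at h1 h2; omega
  let V : Matrix (Fin d) (Fin e) ℂ := LinearMap.toMatrix' (W.subtype ∘ₗ (T.symm : (Fin e → ℂ) →ₗ[ℂ] W))
  have hV : ∀ c, V *ᵥ c = (T.symm c).1 := by
    intro c
    rw [LinearMap.toMatrix'_mulVec]; rfl
  have hVV : Vᴴ * V = 1 := by
    have h1 : ∀ c c' : Fin e → ℂ, star c ⬝ᵥ (Vᴴ * V) *ᵥ c' = star c ⬝ᵥ c' := by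
      intro c c'
      rw [← Matrix.mulVec_mulVec, Matrix.dotProduct_mulVec, ← Matrix.star_mulVec, hV, hV, ← hs, hT]
      simp
    ext p q
    have := h1 (Pi.single p 1) (Pi.single q 1)
    simpa [← Pi.single_star, Matrix.one_apply, Pi.single_apply, eq_comm] using this
  refine absurd (hAmin e (fun j => Vᴴ * A j * V) ?_ ?_) (by omega)
  · intro j
    exact Matrix.isHermitian_conjTranspose_mul_mul V (hAherm j)
  · intro k X hX
    have hc : monicK (fun j => Vᴴ * A j * V) X =
        (V ⊗ₖ (1 : Matrix (Fin k) (Fin k) ℂ))ᴴ * monicK A X * (V ⊗ₖ (1 : Matrix (Fin k) (Fin k) ℂ)) := by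
      rw [Matrix.conjTranspose_kronecker, Matrix.conjTranspose_one]
      simp only [monicK, Matrix.mul_add, Matrix.add_mul, Matrix.mul_one, Matrix.mul_sum, Matrix.sum_mul,
        ← Matrix.mul_kronecker_mul, Matrix.one_mul, hVV, Matrix.one_kronecker_one]
    constructor
    · intro h
      rw [hc]; exact h.conjTranspose_mul_mul_same _
    · intro h
      by_contra hn
      obtain ⟨w, hw, hlt⟩ := hno k X hX hn
      -- w = (V ⊗ 1) y
      let y : Fin e × Fin k → ℂ := fun p => T ⟨fun i => w (i, p.2), (hW _).mpr (hw p.2)⟩ p.1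
      have hy : (V ⊗ₖ (1 : Matrix (Fin k) (Fin k) ℂ)) *ᵥ y = w := by
        ext ⟨i, a⟩
        have h1 := congrFun (hV (T ⟨fun i => w (i, a), (hW _).mpr (hw a)⟩)) i
        rw [LinearEquiv.symm_apply_apply] at h1
        rw [← show _ = w (i, a) from h1]
        simp only [Matrix.mulVec, dotProduct, Fintype.sum_prod_type, Matrix.kroneckerMap_apply, y]
        refine Finset.sum_congr rfl fun b _ => ?_
        simp [Matrix.one_apply]
      have h2 := psd_re h y
      rw [hc, ← Matrix.mulVec_mulVec, ← Matrix.mulVec_mulVec, Matrix.dotProduct_mulVec, ← Matrix.star_mulVec, hy] at h2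
      linarith

/-- real bilinear form of a matrix -/
noncomputable def matBil {m : Type*} [Fintype m] (M : Matrix m m ℂ) : (m → ℂ) →ₗ[ℝ] (m → ℂ) →ₗ[ℝ] ℝ :=
  LinearMap.mk₂ ℝ (fun a b => (star a ⬝ᵥ M *ᵥ b).re)
    (by intros; simp [add_dotProduct])
    (by
      intro c a b
      have : star (c • a) = (c : ℂ) • star a := by
        ext i; simp
      rw [this, smul_dotProduct]; simp)
    (by intros; simp [Matrix.mulVec_add, dotProduct_add])
    (by
      intro c a b
      have : c • b = (c : ℂ) • b := by
        ext i; simp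
      rw [this, Matrix.mulVec_smul, dotProduct_smul]; simp)

@[simp] theorem matBil_apply {m : Type*} [Fintype m] (M : Matrix m m ℂ) (a b : m → ℂ) :
    matBil M a b = (star a ⬝ᵥ M *ᵥ b).re := rfl

theorem star_dot_pos {m : Type*} [Fintype m] (w : m → ℂ) (hw : w ≠ 0) : 0 < (star w ⬝ᵥ w).re :=
  (Complex.pos_iff.mp (Matrix.dotProduct_star_self_pos_iff.mpr hw)).1

theorem star_dot_nonneg {m : Type*} [Fintype m] (w : m → ℂ) : 0 ≤ (star w ⬝ᵥ w).re := by
  by_cases h : w = 0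
  · simp [h]
  · exact (star_dot_pos w h).le

theorem psd_real_smul {m : Type*} [Fintype m] {M : Matrix m m ℂ} (hM : M.PosSemidef) {c : ℝ} (hc : 0 ≤ c) :
    (c • M).PosSemidef := hM.smul hc

/-- matrix version of Finsler's lemma -/
theorem mat_finsler {m : Type*} [Fintype m] {M G : Matrix m m ℂ} (hM : M.IsHermitian)
    (hG : G.PosSemidef) (h : ∀ w, w ≠ 0 → G *ᵥ w = 0 → 0 < (star w ⬝ᵥ M *ᵥ w).re) :
    ∃ C : ℝ, 0 ≤ C ∧ (M + C • G).PosSemidef := by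
  obtain ⟨C, hC, h1⟩ := finsler (matBil M) (matBil G) (fun w => psd_re hG w) (by
    intro w hw h0
    apply h w hw
    have h2 := hG.dotProduct_mulVec_nonneg w
    rw [← hG.dotProduct_mulVec_zero_iff]
    apply Complex.ext
    · exact h0
    · exact (Complex.nonneg_iff.mp h2).2.symm)
  refine ⟨C, hC, psd_of_re ?_ ?_⟩
  · exact hM.add (hG.1.smul (by simp [isSelfAdjoint_iff]))
  · intro w
    have := h1 w
    simp only [matBil_apply] at this
    rw [Matrix.add_mulVec, dotProduct_add, Matrix.smul_mulVec, dotProduct_smul]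
    simpa using this

theorem herm_bound {m : Type*} [Fintype m] [DecidableEq m] {M : Matrix m m ℂ} (hM : M.IsHermitian) :
    ∃ C : ℝ, 0 ≤ C ∧ (M + C • 1).PosSemidef :=
  mat_finsler hM Matrix.PosSemidef.one (by
    intro w hw h0
    rw [Matrix.one_mulVec] at h0; exact absurd h0 hw)

theorem herm_bound2 {m : Type*} [Fintype m] [DecidableEq m] {M : Matrix m m ℂ} (hM : M.IsHermitian) :
    ∃ C : ℝ, 0 ≤ C ∧ (M + C • 1).PosSemidef ∧ (C • 1 - M).PosSemidef := by
  obtain ⟨C, hC, h1⟩ := herm_bound hM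
  obtain ⟨D, hD, h2⟩ := herm_bound hM.neg
  refine ⟨C + D, by linarith, ?_, ?_⟩
  · convert h1.add (psd_real_smul (Matrix.PosSemidef.one (n := m) (R := ℂ)) hD) using 1
    module
  · convert h2.add (psd_real_smul (Matrix.PosSemidef.one (n := m) (R := ℂ)) hC) using 1
    module

theorem iter_lemma {m : Type*} [Fintype m] [DecidableEq m]
    (Φ : Matrix m m ℂ →ₗ[ℝ] Matrix m m ℂ) (hΦ : ∀ G : Matrix m m ℂ, G.PosSemidef → (Φ G).PosSemidef)
    (h1 : (1 - Φ 1).PosSemidef) (L a : Matrix m m ℂ) (hLh : L.IsHermitian) (hL : (L - Φ L).PosSemidef)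
    (ha : a.IsHermitian)
    (H : ∀ δ : ℝ, 0 < δ → ∃ C : ℝ, 0 ≤ C ∧ (L + δ • 1 + C • (Φ a - a)).PosSemidef) : L.PosSemidef := by
  obtain ⟨κ, hκ, ha1, ha2⟩ := herm_bound2 ha
  have hpow1 : ∀ M : ℕ, (1 - (Φ ^ M) 1).PosSemidef := by
    intro M
    induction M with
    | zero => simpa using Matrix.PosSemidef.zero
    | succ M ih =>
      rw [pow_succ', Module.End.mul_apply]
      convert h1.add (hΦ _ ih) using 1
      rw [map_sub]; abel
  have hpow : ∀ (M : ℕ) (G : Matrix m m ℂ), G.PosSemidef → ((Φ ^ M) G).PosSemidef := by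
    intro M
    induction M with
    | zero => intro G hG; simpa using hG
    | succ M ih => intro G hG; rw [pow_succ', Module.End.mul_apply]; exact hΦ _ (ih G hG)
  have hpa : ∀ M : ℕ, (κ • 1 - (Φ ^ M) a).PosSemidef := by
    intro M
    have := (hpow M _ ha2).add (psd_real_smul (hpow1 M) hκ)
    convert this using 1
    rw [map_sub, map_smul]; module
  refine psd_of_re hLh fun w => ?_
  by_contra hneg
  push Not at hneg
  set q := (star w ⬝ᵥ L *ᵥ w).re with hq
  set N := (star w ⬝ᵥ w).re with hN
  have hN0 : 0 ≤ N := star_dot_nonneg w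
  obtain ⟨δ, hδ, hδq⟩ : ∃ δ : ℝ, 0 < δ ∧ q + δ * N < 0 := by
    refine ⟨-q / (2 * (N + 1)), by apply div_pos <;> linarith, ?_⟩
    have : -q / (2 * (N + 1)) * N ≤ -q / 2 := by
      rw [div_mul_eq_mul_div, div_le_div_iff₀ (by linarith) (by norm_num)]
      nlinarith
    linarith
  obtain ⟨C, hC, hfin⟩ := H δ hδ
  have hind : ∀ M : ℕ, ((M : ℝ) • L + ((M : ℝ) * δ) • 1 + C • ((Φ ^ M) a - a)).PosSemidef := by
    intro M
    induction M with
    | zero => simpa using Matrix.PosSemidef.zero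
    | succ M ih =>
      have t1 := hΦ _ ih
      have t2 := psd_real_smul hL (Nat.cast_nonneg (α := ℝ) M)
      have t3 := psd_real_smul h1 (mul_nonneg (Nat.cast_nonneg (α := ℝ) M) hδ.le)
      convert ((t1.add t2).add t3).add hfin using 1
      rw [pow_succ', Module.End.mul_apply]
      simp only [map_add, map_smul, map_sub]
      push_cast
      module
  have hfinal : ∀ M : ℕ, 0 ≤ M * (q + δ * N) + 2 * C * κ * N := by
    intro M
    have t1 := ((hind M).add (psd_real_smul (hpa M) hC)).add (psd_real_smul ha1 hC)
    have t2 := psd_re t1 w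
    have : ((M : ℝ) • L + ((M : ℝ) * δ) • 1 + C • ((Φ ^ M) a - a)) + C • (κ • 1 - (Φ ^ M) a) + C • (a + κ • 1)
      = (M : ℝ) • L + ((M : ℝ) * δ + 2 * C * κ) • (1 : Matrix m m ℂ) := by module
    rw [this, Matrix.add_mulVec, dotProduct_add, Matrix.smul_mulVec, dotProduct_smul, Matrix.smul_mulVec,
      dotProduct_smul, Matrix.one_mulVec] at t2
    simp only [Complex.add_re, Complex.real_smul, Complex.re_ofReal_mul] at t2
    rw [← hq, ← hN] at t2
    linarith
  obtain ⟨M, hM⟩ := exists_nat_gt (2 * C * κ * N / (-(q + δ * N)))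
  rw [div_lt_iff₀ (by linarith)] at hM
  have := hfinal M
  linarith

/-- the completely positive map -/
noncomputable def cpM {m N : Type*} [Fintype m] [Fintype N] (V : N → Matrix m m ℂ) :
    Matrix m m ℂ →ₗ[ℝ] Matrix m m ℂ where
  toFun a := ∑ i, (V i)ᴴ * a * V i
  map_add' := by intro a b; simp [Matrix.mul_add, Matrix.add_mul, Finset.sum_add_distrib]
  map_smul' := by intro c a; simp [Finset.smul_sum]

theorem cpM_apply {m N : Type*} [Fintype m] [Fintype N] (V : N → Matrix m m ℂ) (a : Matrix m m ℂ) :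
    cpM V a = ∑ i, (V i)ᴴ * a * V i := rfl

theorem cpM_psd {m N : Type*} [Fintype m] [Fintype N] (V : N → Matrix m m ℂ) {a : Matrix m m ℂ}
    (h : a.PosSemidef) : (cpM V a).PosSemidef :=
  Matrix.posSemidef_sum _ fun i _ => h.conjTranspose_mul_mul_same _

theorem cpM_conj {m N : Type*} [Fintype m] [Fintype N] (V : N → Matrix m m ℂ) (a : Matrix m m ℂ) :
    cpM V aᴴ = (cpM V a)ᴴ := by
  simp only [cpM_apply, Matrix.conjTranspose_sum, Matrix.conjTranspose_mul, Matrix.conjTranspose_conjTranspose,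
    Matrix.mul_assoc]

theorem faithful {d : ℕ} (φ : Matrix (Fin d) (Fin d) ℂ →ₗ[ℝ] ℝ)
    (h : ∀ p : Fin d → ℂ, p ≠ 0 → 0 < φ (Matrix.vecMulVec p (star p))) {M : Matrix (Fin d) (Fin d) ℂ}
    (hM : M.PosSemidef) : 0 ≤ φ M ∧ (φ M = 0 → M = 0) := by
  obtain ⟨S, rfl⟩ := psd_sqrt_complex hM
  have h1 : Sᴴ * S = ∑ k, Matrix.vecMulVec (star (S k)) (star (star (S k))) := by
    ext i j
    simp [Matrix.mul_apply, Matrix.sum_apply, Matrix.vecMulVec_apply]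
  have h2 : ∀ p : Fin d → ℂ, 0 ≤ φ (Matrix.vecMulVec p (star p)) := by
    intro p
    by_cases hp : p = 0
    · simp [hp]
    · exact (h p hp).le
  rw [h1, map_sum]
  refine ⟨Finset.sum_nonneg fun k _ => h2 _, fun h0 => ?_⟩
  rw [← h1]
  have h3 := (Finset.sum_eq_zero_iff_of_nonneg (fun k _ => h2 _)).mp h0
  have : S = 0 := by
    ext k i
    by_contra hne
    have := h (star (S k)) (by
      intro h5
      apply hne
      have := congrFun (star_eq_zero.mp h5) i
      simpa using this)
    exact absurd (h3 k (Finset.mem_univ k)) this.ne'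
  simp [this]

theorem rigid (A : Fin n → Matrix (Fin d) (Fin d) ℂ) (hAherm : ∀ j, (A j).IsHermitian)
    (hAmin : ∀ (e : ℕ) (C : Fin n → Matrix (Fin e) (Fin e) ℂ), (∀ j, (C j).IsHermitian) →
      (∀ (k : ℕ) (X : Fin n → Matrix (Fin k) (Fin k) ℂ), (∀ j, (X j).IsHermitian) →
        ((monicK A X).PosSemidef ↔ (monicK C X).PosSemidef)) → d ≤ e)
    {N : Type} [Fintype N] (V : N → Matrix (Fin d) (Fin d) ℂ)
    (hV1 : (1 - ∑ i, (V i)ᴴ * V i).PosSemidef) (hVA : ∀ j, ∑ i, (V i)ᴴ * A j * V i = A j) :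
    ∑ i, (V i)ᴴ * V i = 1 ∧ ∀ i j, V i * A j = A j * V i := by
  let Φ := cpM V
  let R : Submodule ℝ (Matrix (Fin d) (Fin d) ℂ) := LinearMap.range (Φ - LinearMap.id)
  have hΦ1 : Φ 1 = ∑ i, (V i)ᴴ * V i := by simp [Φ, cpM_apply]
  let vm : (Fin d → ℂ) →ₗ[ℝ] (Fin d → ℂ) →ₗ[ℝ] Matrix (Fin d) (Fin d) ℂ :=
    LinearMap.mk₂ ℝ (fun p q => Matrix.vecMulVec p (star q))
      (by intros; simp [Matrix.add_vecMulVec]) (by intros; simp [Matrix.smul_vecMulVec])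
      (by intros; simp [Matrix.vecMulVec_add])
      (by intro c a b; ext i j; simp [Matrix.vecMulVec_apply]; ring)
  let B : (Fin d → ℂ) →ₗ[ℝ] (Fin d → ℂ) →ₗ[ℝ] (Matrix (Fin d) (Fin d) ℂ ⧸ R) := vm.compr₂ R.mkQ
  have hB : ∀ p, B p p = R.mkQ (Matrix.vecMulVec p (star p)) := fun p => rfl
  obtain ⟨φ, hφ⟩ := sepS B (by
    intro M p hp
    simp only [hB, ← map_sum] at hp
    rw [Submodule.mkQ_apply, Submodule.Quotient.mk_eq_zero] at hp
    obtain ⟨a0, ha0⟩ := hp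
    have hsum_h : (∑ i, Matrix.vecMulVec (p i) (star (p i)))ᴴ = ∑ i, Matrix.vecMulVec (p i) (star (p i)) := by
      rw [Matrix.conjTranspose_sum]
      exact Finset.sum_congr rfl fun i _ => (Matrix.posSemidef_vecMulVec_self_star (p i)).1
    obtain ⟨a, hah, ha⟩ : ∃ a : Matrix (Fin d) (Fin d) ℂ, a.IsHermitian ∧
        Φ a - a = ∑ i, Matrix.vecMulVec (p i) (star (p i)) := by
      have ha0' : Φ a0 - a0 = ∑ i, Matrix.vecMulVec (p i) (star (p i)) := ha0
      refine ⟨(1 / 2 : ℝ) • (a0 + a0ᴴ), ?_, ?_⟩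
      · rw [Matrix.IsHermitian, Matrix.conjTranspose_smul]
        simp [add_comm]
      · rw [map_smul, map_add, cpM_conj, ← smul_sub]
        have : Φ a0 + (cpM V a0)ᴴ - (a0 + a0ᴴ) = (Φ a0 - a0) + (Φ a0 - a0)ᴴ := by
          rw [Matrix.conjTranspose_sub]; simp only [Φ]; abel
        rw [this, ha0', hsum_h]
        module
    by_contra hne
    push Not at hne
    obtain ⟨i0, hi0⟩ := hne
    obtain ⟨k, X, hX, hnot, hpos⟩ := comp_lemma A hAherm hAmin (p i0) hi0
    apply hnot
    let Vk : N → Matrix (Fin d × Fin k) (Fin d × Fin k) ℂ := fun i => V i ⊗ₖ (1 : Matrix (Fin k) (Fin k) ℂ)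
    have hk : ∀ (c : Matrix (Fin d) (Fin d) ℂ) (Y : Matrix (Fin k) (Fin k) ℂ),
        cpM Vk (c ⊗ₖ Y) = Φ c ⊗ₖ Y := by
      intro c Y
      simp only [cpM_apply, Vk, Φ, Matrix.conjTranspose_kronecker, Matrix.conjTranspose_one,
        ← Matrix.mul_kronecker_mul, Matrix.one_mul, Matrix.mul_one]
      ext x y
      simp [Matrix.sum_apply, Matrix.kroneckerMap_apply, Finset.sum_mul]
    have hk1 : cpM Vk 1 = Φ 1 ⊗ₖ 1 := by rw [← hk, Matrix.one_kronecker_one]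
    have hpsd1 : ((1 - Φ 1) ⊗ₖ (1 : Matrix (Fin k) (Fin k) ℂ)).PosSemidef := by
      rw [hΦ1]; exact hV1.kronecker Matrix.PosSemidef.one
    have hsub : (1 : Matrix (Fin d × Fin k) (Fin d × Fin k) ℂ) - Φ 1 ⊗ₖ 1 = (1 - Φ 1) ⊗ₖ 1 := by
      rw [sub_kron, Matrix.one_kronecker_one]
    refine iter_lemma (cpM Vk) (fun G hG => cpM_psd _ hG) ?_ (monicK A X) (a ⊗ₖ 1)
      (monicK_herm A hAherm X hX) ?_ ?_ ?_
    · rw [hk1, hsub]; exact hpsd1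
    · have : monicK A X - cpM Vk (monicK A X) = (1 - Φ 1) ⊗ₖ 1 := by
        rw [← hsub]
        simp only [monicK, map_add, map_sum, hk, hk1]
        have : ∀ j, Φ (A j) = A j := hVA
        simp only [this]
        abel
      rw [this]; exact hpsd1
    · rw [Matrix.IsHermitian, Matrix.conjTranspose_kronecker, hah.eq, Matrix.conjTranspose_one]
    · intro δ hδ
      have hG : (Matrix.vecMulVec (p i0) (star (p i0)) ⊗ₖ (1 : Matrix (Fin k) (Fin k) ℂ)).PosSemidef :=
        (Matrix.posSemidef_vecMulVec_self_star (p i0)).kronecker Matrix.PosSemidef.one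
      obtain ⟨C, hC, h5⟩ := mat_finsler (M := monicK A X + δ • 1) (by
          refine Matrix.IsHermitian.add (monicK_herm A hAherm X hX) ?_
          rw [Matrix.IsHermitian, Matrix.conjTranspose_smul]; simp) hG (by
        intro w hw h0
        rw [Matrix.add_mulVec, dotProduct_add, Matrix.smul_mulVec, dotProduct_smul, Matrix.one_mulVec]
        have h6 := star_dot_pos w hw
        have h7 := hpos w (by
          intro b
          obtain ⟨i1, hi1⟩ := Function.ne_iff.mp hi0
          have h8 := congrFun h0 (i1, b)
          simp only [Matrix.mulVec, dotProduct, Fintype.sum_prod_type, Matrix.kroneckerMap_apply,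
            Matrix.vecMulVec_apply, Matrix.one_apply, Pi.star_apply, Pi.zero_apply, mul_ite, mul_one, mul_zero,
            ite_mul, zero_mul, Finset.sum_ite_eq, Finset.mem_univ, if_true, mul_assoc, ← Finset.mul_sum] at h8
          exact (mul_eq_zero.mp h8).resolve_left hi1)
        simp only [Complex.add_re, Complex.real_smul, Complex.re_ofReal_mul]
        nlinarith [mul_pos hδ h6])
      refine ⟨C, hC, ?_⟩
      rw [hk, ← sub_kron, ha, ← Finset.add_sum_erase _ _ (Finset.mem_univ i0), Matrix.add_kronecker,
        smul_add, ← add_assoc]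
      refine h5.add (psd_real_smul ?_ hC)
      refine Matrix.PosSemidef.kronecker ?_ Matrix.PosSemidef.one
      exact Matrix.posSemidef_sum _ fun i _ => Matrix.posSemidef_vecMulVec_self_star (p i))
  let ψ : Matrix (Fin d) (Fin d) ℂ →ₗ[ℝ] ℝ := φ ∘ₗ R.mkQ
  have hψ : ∀ p : Fin d → ℂ, p ≠ 0 → 0 < ψ (Matrix.vecMulVec p (star p)) := hφ
  have hinv : ∀ a, ψ (Φ a) = ψ a := by
    intro a
    have : R.mkQ (Φ a - a) = 0 := by
      rw [Submodule.mkQ_apply, Submodule.Quotient.mk_eq_zero]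
      exact ⟨a, rfl⟩
    have h2 := congrArg φ this
    rw [map_sub, map_sub, map_zero, sub_eq_zero] at h2
    exact h2
  have hone : ∑ i, (V i)ᴴ * V i = 1 := by
    have h1 := (faithful ψ hψ hV1).2 (by rw [← hΦ1, map_sub, hinv, sub_self])
    exact (sub_eq_zero.mp h1).symm
  refine ⟨hone, fun i j => ?_⟩
  have hkey : ∑ i, (V i * A j - A j * V i)ᴴ * (V i * A j - A j * V i) = Φ (A j * A j) - A j * A j := by
    have hAj := (hAherm j).eq
    have : ∀ i, (V i * A j - A j * V i)ᴴ * (V i * A j - A j * V i) =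
        A j * ((V i)ᴴ * V i) * A j - A j * ((V i)ᴴ * A j * V i) - ((V i)ᴴ * A j * V i) * A j +
          (V i)ᴴ * (A j * A j) * V i := by
      intro i
      simp only [Matrix.conjTranspose_sub, Matrix.conjTranspose_mul, hAj]
      noncomm_ring
    simp only [this, Finset.sum_add_distrib, Finset.sum_sub_distrib, ← Finset.mul_sum, ← Finset.sum_mul,
      hone, hVA j, Matrix.mul_one]
    simp only [Φ, cpM_apply]
    abel
  have h0 : ∑ i, ψ ((V i * A j - A j * V i)ᴴ * (V i * A j - A j * V i)) = 0 := by
    rw [← map_sum, hkey, map_sub, hinv, sub_self]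
  have h1 := (Finset.sum_eq_zero_iff_of_nonneg (fun i _ =>
    (faithful ψ hψ (Matrix.posSemidef_conjTranspose_mul_self (V i * A j - A j * V i))).1)).mp h0 i (Finset.mem_univ i)
  have h2 := (faithful ψ hψ (Matrix.posSemidef_conjTranspose_mul_self (V i * A j - A j * V i))).2 h1
  exact sub_eq_zero.mp (Matrix.conjTranspose_mul_self_eq_zero.mp h2)

end Part4

open scoped Kronecker Matrix ComplexOrder

section Part5
variable {n d k : ℕ}

theorem nondeg (A : Fin n → Matrix (Fin d) (Fin d) ℂ) (hAherm : ∀ j, (A j).IsHermitian)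
    (hAmin : ∀ (e : ℕ) (C : Fin n → Matrix (Fin e) (Fin e) ℂ), (∀ j, (C j).IsHermitian) →
      (∀ (k : ℕ) (X : Fin n → Matrix (Fin k) (Fin k) ℂ), (∀ j, (X j).IsHermitian) →
        ((monicK A X).PosSemidef ↔ (monicK C X).PosSemidef)) → d ≤ e)
    (v : Fin d → ℂ) (hv : ∀ j, A j *ᵥ v = 0) : v = 0 := by
  by_contra hne
  have hpos := star_dot_pos v hne
  set r : ℝ := (star v ⬝ᵥ v).re with hr
  have hdot : star v ⬝ᵥ v = (r : ℂ) := by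
    apply Complex.ext
    · simp [hr]
    · have : 0 < star v ⬝ᵥ v := Matrix.dotProduct_star_self_pos_iff.mpr hne
      simpa using (Complex.pos_iff.mp this).2.symm
  set G := Matrix.vecMulVec v (star v) with hG
  have hGh : Gᴴ = G := (Matrix.posSemidef_vecMulVec_self_star v).1
  have hGG : G * G = (r : ℂ) • G := by
    rw [hG, Matrix.vecMulVec_mul_vecMulVec, hdot]
    ext i j; simp [Matrix.vecMulVec_apply]; ring
  have hAG : ∀ j, A j * G = 0 := by
    intro j; rw [hG, Matrix.mul_vecMulVec, hv]; simp
  have hGA : ∀ j, G * A j = 0 := by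
    intro j
    have := congrArg Matrix.conjTranspose (hAG j)
    rwa [Matrix.conjTranspose_mul, hGh, (hAherm j).eq, Matrix.conjTranspose_zero] at this
  set t : ℂ := ((r⁻¹ : ℝ) : ℂ) with ht
  have htr : t * r = 1 := by
    rw [ht, ← Complex.ofReal_mul, inv_mul_cancel₀ hpos.ne', Complex.ofReal_one]
  have hts : star t = t := by rw [ht]; simp
  have hPP : (1 - t • G)ᴴ * (1 - t • G) = 1 - t • G := by
    rw [Matrix.conjTranspose_sub, Matrix.conjTranspose_one, Matrix.conjTranspose_smul, hGh, hts]
    rw [Matrix.sub_mul, Matrix.mul_sub, Matrix.mul_sub, Matrix.one_mul, Matrix.mul_one, Matrix.one_mul,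
      Matrix.smul_mul, Matrix.mul_smul, hGG, smul_smul, smul_smul, mul_assoc, htr, mul_one]
    abel
  have := (rigid A hAherm hAmin (N := Unit) (fun _ => 1 - t • G) (by
    simp only [Finset.univ_unique, Finset.sum_singleton, hPP]
    rw [sub_sub_cancel]
    exact psd_real_smul (Matrix.posSemidef_vecMulVec_self_star v) (inv_nonneg.mpr hpos.le)) (by
    intro j
    simp only [Finset.univ_unique, Finset.sum_singleton]
    rw [Matrix.conjTranspose_sub, Matrix.conjTranspose_one, Matrix.conjTranspose_smul, hGh, Matrix.sub_mul,
      Matrix.smul_mul, hGA, smul_zero, sub_zero, Matrix.one_mul, Matrix.mul_sub, Matrix.mul_smul, hAG, smul_zero,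
      sub_zero, Matrix.mul_one])).1
  simp only [Finset.univ_unique, Finset.sum_singleton, hPP] at this
  have h1 : t • G = 0 := by
    have h2 := sub_eq_self.mp this
    exact h2
  have h2 : G * G = 0 := by
    have ht0 : t ≠ 0 := left_ne_zero_of_mul_eq_one htr
    rw [(smul_eq_zero.mp h1).resolve_left ht0, Matrix.zero_mul]
  have h3 : G = 0 := by
    rw [hGG] at h2
    exact (smul_eq_zero.mp h2).resolve_left (right_ne_zero_of_mul_eq_one htr)
  obtain ⟨i, hi⟩ := Function.ne_iff.mp hne
  have := congrFun (congrFun h3 i) i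
  simp [hG, Matrix.vecMulVec_apply] at this
  exact hi this

theorem exists_B (A : Fin n → Matrix (Fin d) (Fin d) ℂ)
    (h : ∀ v : Fin d → ℂ, (∀ j, A j *ᵥ v = 0) → v = 0) :
    ∃ B : Fin n → Matrix (Fin d) (Fin d) ℂ, ∑ j, B j * A j = 1 := by
  let F : (Fin d → ℂ) →ₗ[ℂ] (Fin n → Fin d → ℂ) := LinearMap.pi fun j => (A j).mulVecLin
  obtain ⟨g, hg⟩ := F.exists_leftInverse_of_injective (by
    rw [LinearMap.ker_eq_bot']
    intro v hv
    apply h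
    intro j
    exact congrFun hv j)
  refine ⟨fun j => LinearMap.toMatrix' (g ∘ₗ LinearMap.single ℂ (fun _ => Fin d → ℂ) j), ?_⟩
  apply Matrix.toLin'.injective
  ext1 i
  ext1
  rw [map_sum]
  simp only [LinearMap.coe_comp, Function.comp, LinearMap.sum_apply, Matrix.toLin'_mul, Matrix.toLin'_toMatrix',
    Matrix.toLin'_apply, LinearMap.coe_single, ← map_sum]
  have h1 := LinearMap.congr_fun hg (Pi.single i 1)
  simp only [LinearMap.comp_apply, LinearMap.id_apply] at h1
  rw [Matrix.one_mulVec]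
  refine Eq.trans ?_ h1
  congr 1
  funext j
  simp [Finset.sum_apply, Finset.sum_pi_single, F]

/-- good representations -/
structure Good (A : Fin n → Matrix (Fin d) (Fin d) ℂ) (X : Fin n → Matrix (Fin k) (Fin k) ℂ)
    (u : Fin d → Fin k → ℂ) : Prop where
  herm : ∀ j, (X j).IsHermitian
  psd : (monicK A X).PosSemidef
  ker : ∀ w : Fin d × Fin k → ℂ, monicK A X *ᵥ w = 0 → ∃ z : Matrix (Fin d) (Fin d) ℂ,
    (∀ j, z * A j = A j * z) ∧ ∀ i a, w (i, a) = ∑ l, z i l * u l a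
  Lu : monicK A X *ᵥ (fun p => u p.1 p.2) = 0

theorem good_of_forms (A : Fin n → Matrix (Fin d) (Fin d) ℂ) (hA : ∀ j, (A j).IsHermitian)
    {W : Type*} [AddCommGroup W] [Module ℂ W] [FiniteDimensional ℂ W]
    (s : W →ₗ⋆[ℂ] W →ₗ[ℂ] ℂ) (hs : PDForm s) (x : Fin n → W →ₗ⋆[ℂ] W →ₗ[ℂ] ℂ)
    (hx : ∀ j a b, x j a b = starRingEnd ℂ (x j b a)) (u : Fin d → W)
    (hpos : ∀ v, 0 ≤ (Lf A s x v v).re)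
    (hker : ∀ v, (Lf A s x v v).re = 0 → ∃ z : Matrix (Fin d) (Fin d) ℂ,
      (∀ j, z * A j = A j * z) ∧ ∀ i, v i = ∑ l, z i l • u l)
    (hLu : ∀ v, Lf A s x v u = 0) :
    ∃ (k : ℕ) (T : W ≃ₗ[ℂ] (Fin k → ℂ)) (X : Fin n → Matrix (Fin k) (Fin k) ℂ),
      Good A X (fun l => T (u l)) ∧ (∀ a b, s a b = star (T a) ⬝ᵥ T b) ∧
      ∀ j a b, x j a b = star (T a) ⬝ᵥ X j *ᵥ T b := by
  obtain ⟨k, T, X, hXh, hT, hX⟩ := realize s hs x hx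
  have hw : ∀ w : Fin d × Fin k → ℂ, ∃ v : Fin d → W, w = fun p => T (v p.1) p.2 := by
    intro w
    refine ⟨fun i => T.symm (fun a => w (i, a)), ?_⟩
    funext p; simp
  refine ⟨k, T, X, ⟨hXh, ?_, ?_, ?_⟩, hT, hX⟩
  · refine psd_of_re (monicK_herm A hA X hXh) fun w => ?_
    obtain ⟨v, rfl⟩ := hw w
    rw [← Lf_eq A s x T X hT hX]
    exact hpos v
  · intro w h0
    obtain ⟨v, rfl⟩ := hw w
    obtain ⟨z, hz, hv⟩ := hker v (by rw [Lf_eq A s x T X hT hX, h0]; simp)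
    refine ⟨z, hz, fun i a => ?_⟩
    simp only [hv i, map_sum, map_smul, Finset.sum_apply, Pi.smul_apply, smul_eq_mul]
  · have h1 : ∀ w : Fin d × Fin k → ℂ, star w ⬝ᵥ monicK A X *ᵥ (fun p => T (u p.1) p.2) = 0 := by
      intro w
      obtain ⟨v, rfl⟩ := hw w
      rw [← Lf_eq A s x T X hT hX]
      exact hLu v
    exact dotProduct_star_self_eq_zero.mp (h1 _)

theorem cayley (A : Fin n → Matrix (Fin d) (Fin d) ℂ) (hAherm : ∀ j, (A j).IsHermitian)
    (hAmin : ∀ (e : ℕ) (C : Fin n → Matrix (Fin e) (Fin e) ℂ), (∀ j, (C j).IsHermitian) →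
      (∀ (k : ℕ) (X : Fin n → Matrix (Fin k) (Fin k) ℂ), (∀ j, (X j).IsHermitian) →
        ((monicK A X).PosSemidef ↔ (monicK C X).PosSemidef)) → d ≤ e)
    {N : ℕ} (q : Fin N → Matrix (Fin d) (Fin d) ℂ) (S g : Matrix (Fin d) (Fin d) ℂ) (hS : S.PosSemidef)
    (h1 : ∑ i, (q i)ᴴ * q i + S = g + gᴴ) (h2 : ∀ j, ∑ i, (q i)ᴴ * A j * q i = g * A j + A j * gᴴ) :
    (∀ i j, q i * A j = A j * q i) ∧ S = 0 := by
  set T := 1 + gᴴ with hT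
  have hTh : Tᴴ = 1 + g := by simp [hT]
  have hgpsd : (g + gᴴ).PosSemidef := by
    rw [← h1]
    exact (Matrix.posSemidef_sum _ fun i _ => Matrix.posSemidef_conjTranspose_mul_self _).add hS
  have hTu : IsUnit T := by
    rw [← Matrix.mulVec_injective_iff_isUnit]
    have : ∀ w, T *ᵥ w = 0 → w = 0 := by
      intro w hw
      by_contra hne
      have h3 := star_dot_pos w hne
      have h4 := psd_re hgpsd w
      have h5 : star w ⬝ᵥ T *ᵥ w = 0 := by rw [hw]; simp
      have h6 : star w ⬝ᵥ Tᴴ *ᵥ w = 0 := by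
        rw [Matrix.dotProduct_mulVec, ← Matrix.star_mulVec, hw]; simp
      have h7 : g + gᴴ = T + Tᴴ - (2 : ℝ) • 1 := by rw [hTh, hT]; module
      rw [h7, Matrix.sub_mulVec, Matrix.add_mulVec, dotProduct_sub, dotProduct_add, h5, h6, Matrix.smul_mulVec,
        dotProduct_smul, Matrix.one_mulVec] at h4
      simp at h4
      linarith
    intro a b hab
    have h8 := this (a - b) (by rw [Matrix.mulVec_sub]; exact sub_eq_zero.mpr hab)
    exact sub_eq_zero.mp h8
  have hdet : IsUnit T.det := (Matrix.isUnit_iff_isUnit_det T).mp hTu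
  have hTi : T * T⁻¹ = 1 := Matrix.mul_nonsing_inv T hdet
  have hiT : T⁻¹ * T = 1 := Matrix.nonsing_inv_mul T hdet
  set R := T⁻¹ with hR
  have hRT : Rᴴ * Tᴴ = 1 := by rw [← Matrix.conjTranspose_mul, hTi, Matrix.conjTranspose_one]
  have hsq : (Real.sqrt 2 : ℂ) * Real.sqrt 2 = 2 := by
    rw [← Complex.ofReal_mul, Real.mul_self_sqrt (by norm_num)]; norm_num
  let V : Option (Fin N) → Matrix (Fin d) (Fin d) ℂ := fun o =>
    match o with
    | none => (1 - gᴴ) * R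
    | some i => (Real.sqrt 2 : ℂ) • (q i * R)
  have hVs : ∀ (i : Fin N) (M : Matrix (Fin d) (Fin d) ℂ),
      (V (some i))ᴴ * M * V (some i) = Rᴴ * ((2 : ℂ) • ((q i)ᴴ * M * q i)) * R := by
    intro i M
    simp only [V, Matrix.conjTranspose_smul, Matrix.smul_mul, Matrix.mul_smul, smul_smul, Matrix.conjTranspose_mul]
    rw [show (star (Real.sqrt 2 : ℂ)) = Real.sqrt 2 by simp, hsq]
    simp only [Matrix.mul_assoc]
  have hV0 : ∀ (M : Matrix (Fin d) (Fin d) ℂ), (V none)ᴴ * M * V none = Rᴴ * ((1 - g) * M * (1 - gᴴ)) * R := by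
    intro M
    simp only [V, Matrix.conjTranspose_mul, Matrix.conjTranspose_sub, Matrix.conjTranspose_one,
      Matrix.conjTranspose_conjTranspose, Matrix.mul_assoc]
  have hM : ∀ M : Matrix (Fin d) (Fin d) ℂ, ∑ o, (V o)ᴴ * M * V o =
      M + Rᴴ * ((2 : ℂ) • (∑ i, (q i)ᴴ * M * q i - (g * M + M * gᴴ))) * R := by
    intro M
    rw [Fintype.sum_option, hV0]
    simp only [hVs]
    rw [← Matrix.sum_mul, ← Matrix.mul_sum, ← Finset.smul_sum, ← Matrix.add_mul, ← Matrix.mul_add]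
    have hMM : M = Rᴴ * (Tᴴ * M * T) * R := by
      calc M = (Rᴴ * Tᴴ) * M * (T * R) := by rw [hRT, hTi]; simp
        _ = _ := by simp only [Matrix.mul_assoc]
    conv_rhs => enter [1]; rw [hMM]
    rw [← Matrix.add_mul, ← Matrix.mul_add]
    congr 2
    rw [hTh, hT]
    simp only [Matrix.mul_add, Matrix.add_mul, Matrix.mul_sub, Matrix.sub_mul, Matrix.one_mul, Matrix.mul_one]
    module
  have hone : ∑ o, (V o)ᴴ * V o = 1 - Rᴴ * ((2 : ℂ) • S) * R := by
    have := hM 1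
    simp only [Matrix.mul_one, Matrix.one_mul] at this
    rw [this, ← h1, sub_add_cancel_left]
    simp [sub_eq_add_neg]
  obtain ⟨r1, r2⟩ := rigid A hAherm hAmin V (by
    rw [hone, sub_sub_cancel]
    refine Matrix.PosSemidef.conjTranspose_mul_mul_same ?_ R
    have := psd_real_smul hS (c := 2) (by norm_num)
    convert this using 1
    ext i j; simp) (by
    intro j
    rw [hM, h2 j, sub_self]; simp)
  have hV0' : V none = (2 : ℂ) • R - 1 := by
    have : (1 : Matrix (Fin d) (Fin d) ℂ) - gᴴ = (2 : ℂ) • 1 - T := by rw [hT]; module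
    simp only [V]
    rw [this, Matrix.sub_mul, hTi, Matrix.smul_mul, Matrix.one_mul]
  have hRZ : ∀ j, R * A j = A j * R := by
    intro j
    have := r2 none j
    rw [hV0', Matrix.sub_mul, Matrix.mul_sub, Matrix.smul_mul, Matrix.mul_smul, Matrix.one_mul, Matrix.mul_one,
      sub_left_inj] at this
    exact smul_right_injective _ (two_ne_zero' ℂ) this
  have hTZ : ∀ j, T * A j = A j * T := by
    intro j
    calc T * A j = T * A j * (R * T) := by rw [hiT, Matrix.mul_one]
      _ = T * (A j * R) * T := by simp only [Matrix.mul_assoc]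
      _ = (T * R) * A j * T := by rw [← hRZ]; simp only [Matrix.mul_assoc]
      _ = A j * T := by rw [hTi, Matrix.one_mul]
  have hs2 : (Real.sqrt 2 : ℂ) ≠ 0 := by
    intro h0; rw [h0] at hsq; simp at hsq
  refine ⟨fun i j => ?_, ?_⟩
  · have h3 := r2 (some i) j
    simp only [V, Matrix.smul_mul, Matrix.mul_smul] at h3
    have h4 : q i * R * A j = A j * (q i * R) := smul_right_injective _ hs2 h3
    calc q i * A j = q i * (R * T) * A j := by rw [hiT, Matrix.mul_one]
      _ = q i * R * (T * A j) := by simp only [Matrix.mul_assoc]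
      _ = q i * R * A j * T := by rw [hTZ]; simp only [Matrix.mul_assoc]
      _ = A j * q i * (R * T) := by rw [h4]; simp only [Matrix.mul_assoc]
      _ = A j * q i := by rw [hiT, Matrix.mul_one]
  · rw [hone] at r1
    have h3 := sub_eq_self.mp r1
    have h4 : Tᴴ * (Rᴴ * ((2 : ℂ) • S) * R) * T = (2 : ℂ) • S := by
      have hTR : Tᴴ * Rᴴ = 1 := by rw [← Matrix.conjTranspose_mul, hiT, Matrix.conjTranspose_one]
      calc _ = (Tᴴ * Rᴴ) * ((2 : ℂ) • S) * (R * T) := by simp only [Matrix.mul_assoc]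
        _ = _ := by rw [hTR, hiT, Matrix.one_mul, Matrix.mul_one]
    rw [h3] at h4
    rw [Matrix.mul_zero, Matrix.zero_mul] at h4
    exact (smul_eq_zero.mp h4.symm).resolve_left two_ne_zero

end Part5

open scoped Kronecker Matrix ComplexOrder

section Part6
variable {n d k : ℕ}

/-- rank one sesquilinear map -/
noncomputable def vms : (Fin d → ℂ) →ₗ⋆[ℂ] (Fin d → ℂ) →ₗ[ℂ] Matrix (Fin d) (Fin d) ℂ :=
  LinearMap.mk₂'ₛₗ (starRingEnd ℂ) (RingHom.id ℂ) (fun a b => Matrix.vecMulVec (star a) b)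
      (by intros; simp [Matrix.add_vecMulVec]) (by intros; simp [Matrix.smul_vecMulVec])
      (by intros; simp [Matrix.vecMulVec_add]) (by intros; simp [Matrix.vecMulVec_smul])

theorem vms_apply (a b : Fin d → ℂ) : vms a b = Matrix.vecMulVec (star a) b := rfl

theorem vms_conj (a b : Fin d → ℂ) : (vms a b)ᴴ = vms b a := by
  ext i j; simp [vms_apply, Matrix.vecMulVec_apply, mul_comm]

theorem base_functional (A : Fin n → Matrix (Fin d) (Fin d) ℂ) (hAherm : ∀ j, (A j).IsHermitian)
    (hAmin : ∀ (e : ℕ) (C : Fin n → Matrix (Fin e) (Fin e) ℂ), (∀ j, (C j).IsHermitian) →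
      (∀ (k : ℕ) (X : Fin n → Matrix (Fin k) (Fin k) ℂ), (∀ j, (X j).IsHermitian) →
        ((monicK A X).PosSemidef ↔ (monicK C X).PosSemidef)) → d ≤ e) :
    ∃ ψ : (Matrix (Fin d) (Fin d) ℂ × (Fin n → Matrix (Fin d) (Fin d) ℂ)) →ₗ[ℂ] ℂ,
      (∀ a b, ψ (aᴴ, fun j => (b j)ᴴ) = starRingEnd ℂ (ψ (a, b))) ∧
      (∀ g, ψ (g, fun j => g * A j) = 0) ∧
      (∀ p : Fin d → ℂ, p ≠ 0 → 0 < (ψ (vms p p, 0)).re) ∧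
      (∀ q : Matrix (Fin d) (Fin d) ℂ, 0 ≤ (ψ (qᴴ * q, fun j => qᴴ * A j * q)).re ∧
        ((ψ (qᴴ * q, fun j => qᴴ * A j * q)).re = 0 → ∀ j, q * A j = A j * q)) := by
  let Z : Submodule ℝ (Matrix (Fin d) (Fin d) ℂ) :=
    { carrier := {q | ∀ j, q * A j = A j * q}
      add_mem' := by
        intro a b ha hb j
        rw [Matrix.add_mul, Matrix.mul_add, ha j, hb j]
      zero_mem' := by intro j; simp
      smul_mem' := by
        intro c a ha j
        rw [Matrix.smul_mul, Matrix.mul_smul, ha j] }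
  have hZ : ∀ q, q ∈ Z ↔ ∀ j, q * A j = A j * q := fun q => Iff.rfl
  obtain ⟨Zc, hcompl⟩ := Submodule.exists_isCompl Z
  let rel : (Matrix (Fin d) (Fin d) ℂ) →ₗ[ℝ] ((Matrix (Fin d) (Fin d) ℂ) × (Fin n → (Matrix (Fin d) (Fin d) ℂ))) :=
    { toFun := fun g => (g + gᴴ, fun j => g * A j + A j * gᴴ)
      map_add' := by
        intro a b
        ext1
        · simp only [Matrix.conjTranspose_add, Prod.mk_add_mk]; abel
        · funext j
          simp only [Matrix.conjTranspose_add, Prod.mk_add_mk, Pi.add_apply, Matrix.add_mul, Matrix.mul_add]; abel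
      map_smul' := by
        intro c a
        ext1
        · simp [Matrix.conjTranspose_smul]
        · funext j
          simp [Matrix.conjTranspose_smul] }
  let R : Submodule ℝ ((Matrix (Fin d) (Fin d) ℂ) × (Fin n → (Matrix (Fin d) (Fin d) ℂ))) := LinearMap.range rel
  let B0 : ((Matrix (Fin d) (Fin d) ℂ) × (Fin d → ℂ)) →ₗ[ℝ] ((Matrix (Fin d) (Fin d) ℂ) × (Fin d → ℂ)) →ₗ[ℝ] ((Matrix (Fin d) (Fin d) ℂ) × (Fin n → (Matrix (Fin d) (Fin d) ℂ))) :=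
    LinearMap.mk₂ ℝ (fun x y => (x.1ᴴ * y.1 + vms x.2 y.2, fun j => x.1ᴴ * A j * y.1))
      (by
        intro a b c
        ext1
        · simp only [Prod.fst_add, Prod.snd_add, Matrix.conjTranspose_add, Matrix.add_mul, map_add, LinearMap.add_apply]
          abel
        · funext j
          simp [Matrix.conjTranspose_add, Matrix.add_mul])
      (by
        intro r a c
        have : vms (r • a.2) c.2 = r • vms a.2 c.2 := by
          have := LinearMap.map_smulₛₗ₂ vms (r : ℂ) a.2 c.2
          simpa using this
        ext1
        · simp [Matrix.conjTranspose_smul, this]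
        · funext j
          simp [Matrix.conjTranspose_smul])
      (by
        intro a b c
        ext1
        · simp only [Prod.fst_add, Prod.snd_add, Matrix.mul_add, map_add]
          abel
        · funext j
          simp [Matrix.mul_add])
      (by
        intro r a c
        have : vms a.2 (r • c.2) = r • vms a.2 c.2 := by
          have := (vms a.2).map_smul (r : ℂ) c.2
          simpa using this
        ext1
        · simp [this]
        · funext j
          simp)
  let inc : (Zc × (Fin d → ℂ)) →ₗ[ℝ] ((Matrix (Fin d) (Fin d) ℂ) × (Fin d → ℂ)) := Zc.subtype.prodMap LinearMap.id
  let B : (Zc × (Fin d → ℂ)) →ₗ[ℝ] (Zc × (Fin d → ℂ)) →ₗ[ℝ] (((Matrix (Fin d) (Fin d) ℂ) × (Fin n → (Matrix (Fin d) (Fin d) ℂ))) ⧸ R) :=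
    (B0.compl₁₂ inc inc).compr₂ R.mkQ
  have hB : ∀ x, B x x = R.mkQ ((x.1 : (Matrix (Fin d) (Fin d) ℂ))ᴴ * (x.1 : (Matrix (Fin d) (Fin d) ℂ)) + vms x.2 x.2, fun j => (x.1 : (Matrix (Fin d) (Fin d) ℂ))ᴴ * A j * (x.1 : (Matrix (Fin d) (Fin d) ℂ))) :=
    fun x => rfl
  have hvpsd : ∀ p : Fin d → ℂ, (vms p p).PosSemidef := by
    intro p
    have := Matrix.posSemidef_vecMulVec_self_star (star p)
    rwa [star_star] at this
  have hvz : ∀ p : Fin d → ℂ, vms p p = 0 → p = 0 := by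
    intro p hp
    funext i
    have := congrFun (congrFun hp i) i
    simpa [vms_apply, Matrix.vecMulVec_apply] using this
  obtain ⟨φ, hφ⟩ := sepS B (by
    intro N p hp
    simp only [hB, ← map_sum] at hp
    rw [Submodule.mkQ_apply, Submodule.Quotient.mk_eq_zero] at hp
    obtain ⟨g, hg⟩ := hp
    have h1 := congrArg Prod.fst hg
    have h2 := congrArg Prod.snd hg
    rw [Prod.fst_sum] at h1
    rw [Prod.snd_sum] at h2
    simp only [rel, LinearMap.coe_mk, AddHom.coe_mk, Finset.sum_add_distrib] at h1 h2
    obtain ⟨c1, c2⟩ := cayley A hAherm hAmin (fun i => ((p i).1 : (Matrix (Fin d) (Fin d) ℂ))) (∑ i, vms (p i).2 (p i).2) g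
      (Matrix.posSemidef_sum _ fun i _ => hvpsd _) h1.symm (by
        intro j
        have := congrFun h2 j
        rw [Finset.sum_apply] at this
        exact this.symm)
    intro i
    have hq : ((p i).1 : (Matrix (Fin d) (Fin d) ℂ)) = 0 := by
      have h3 : ((p i).1 : (Matrix (Fin d) (Fin d) ℂ)) ∈ Z ⊓ Zc := ⟨(hZ _).mpr (c1 i), (p i).1.2⟩
      rw [hcompl.inf_eq_bot] at h3
      exact h3
    have hp2 : (p i).2 = 0 := by
      apply hvz
      have h3 : ∀ i, 0 ≤ (Matrix.trace (vms (p i).2 (p i).2)).re := fun i =>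
        (Complex.nonneg_iff.mp (hvpsd (p i).2).trace_nonneg).1
      have h4 : ∑ i, (Matrix.trace (vms (p i).2 (p i).2)).re = 0 := by
        rw [← Complex.re_sum, ← Matrix.trace_sum, c2]; simp
      have h5 := (Finset.sum_eq_zero_iff_of_nonneg (fun i _ => h3 i)).mp h4 i (Finset.mem_univ i)
      rw [← (hvpsd (p i).2).trace_eq_zero_iff]
      apply Complex.ext
      · exact h5
      · exact (Complex.nonneg_iff.mp (hvpsd (p i).2).trace_nonneg).2.symm
    exact Prod.ext (Subtype.ext hq) hp2)
  let ψ0 : ((Matrix (Fin d) (Fin d) ℂ) × (Fin n → (Matrix (Fin d) (Fin d) ℂ))) →ₗ[ℝ] ℝ := φ ∘ₗ R.mkQ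
  have hψ0 : ∀ x : Zc × (Fin d → ℂ), x ≠ 0 →
      0 < ψ0 ((x.1 : (Matrix (Fin d) (Fin d) ℂ))ᴴ * (x.1 : (Matrix (Fin d) (Fin d) ℂ)) + vms x.2 x.2, fun j => (x.1 : (Matrix (Fin d) (Fin d) ℂ))ᴴ * A j * (x.1 : (Matrix (Fin d) (Fin d) ℂ))) := hφ
  have hrel : ∀ g : (Matrix (Fin d) (Fin d) ℂ), ψ0 (g + gᴴ, fun j => g * A j + A j * gᴴ) = 0 := by
    intro g
    have : R.mkQ (g + gᴴ, fun j => g * A j + A j * gᴴ) = 0 := by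
      rw [Submodule.mkQ_apply, Submodule.Quotient.mk_eq_zero]
      exact ⟨g, rfl⟩
    change φ (R.mkQ _) = 0
    rw [this, map_zero]
  obtain ⟨ψ, hst, hre⟩ := complexify (V := (Matrix (Fin d) (Fin d) ℂ) × (Fin n → (Matrix (Fin d) (Fin d) ℂ))) (fun x => (x.1ᴴ, fun j => (x.2 j)ᴴ))
    (by intro a b; ext1
        · simp
        · funext j; simp)
    (by intro c a; ext1
        · simp [Matrix.conjTranspose_smul]
        · funext j; simp [Matrix.conjTranspose_smul])
    (by intro a; simp) ψ0
  have hself : ∀ (q : (Matrix (Fin d) (Fin d) ℂ)) (p : Fin d → ℂ), (ψ (qᴴ * q + vms p p, fun j => qᴴ * A j * q)).re =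
      ψ0 (qᴴ * q + vms p p, fun j => qᴴ * A j * q) := by
    intro q p
    rw [hre]
    have : ((qᴴ * q + vms p p, fun j => qᴴ * A j * q) : (Matrix (Fin d) (Fin d) ℂ) × (Fin n → (Matrix (Fin d) (Fin d) ℂ))).1ᴴ = qᴴ * q + vms p p := by
      simp only [Matrix.conjTranspose_add, Matrix.conjTranspose_mul, Matrix.conjTranspose_conjTranspose, vms_conj]
    rw [this]
    have h2 : (fun j => (((qᴴ * q + vms p p, fun j => qᴴ * A j * q) : (Matrix (Fin d) (Fin d) ℂ) × (Fin n → (Matrix (Fin d) (Fin d) ℂ))).2 j)ᴴ) =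
        fun j => qᴴ * A j * q := by
      funext j
      simp only [Matrix.conjTranspose_mul, Matrix.conjTranspose_conjTranspose, (hAherm j).eq, Matrix.mul_assoc]
    rw [h2]; ring
  have hzero : ∀ g, ψ (g, fun j => g * A j) = 0 := by
    have hr : ∀ g, (ψ (g, fun j => g * A j)).re = 0 := by
      intro g
      rw [hre, ← map_add]
      have := hrel g
      simp only [Prod.mk_add_mk, Matrix.conjTranspose_mul, (hAherm _).eq]
      have h3 : ((fun j => g * A j) + fun j => A j * gᴴ) = fun j => g * A j + A j * gᴴ := rfl
      rw [h3, this]; simp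
    intro g
    apply Complex.ext
    · exact hr g
    · have h1 := hr (Complex.I • g)
      have h2 : ((Complex.I • g, fun j => (Complex.I • g) * A j) : (Matrix (Fin d) (Fin d) ℂ) × (Fin n → (Matrix (Fin d) (Fin d) ℂ))) =
          Complex.I • (g, fun j => g * A j) := by
        ext1
        · rfl
        · funext j; simp
      rw [h2, map_smul] at h1
      simpa using h1
  refine ⟨ψ, fun a b => hst (a, b), hzero, ?_, ?_⟩
  · intro p hp
    have h1 := hψ0 (0, p) (by intro h0; exact hp (congrArg Prod.snd h0))
    have h2 := hself 0 p
    simp only [ZeroMemClass.coe_zero] at h1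
    rw [← h2] at h1
    simp only [Matrix.mul_zero, zero_add] at h1
    exact h1
  · intro q
    obtain ⟨z, hz, q', hq', rfl⟩ := Submodule.mem_sup.mp (show q ∈ Z ⊔ Zc by
      rw [hcompl.sup_eq_top]; trivial)
    have hz' := (hZ z).mp hz
    have hF : ∀ a : (Matrix (Fin d) (Fin d) ℂ), ψ (aᴴ * z, fun j => aᴴ * A j * z) = 0 := by
      intro a
      rw [← hzero (aᴴ * z)]
      congr 2
      funext j
      rw [Matrix.mul_assoc, ← hz' j, Matrix.mul_assoc]
    have hF' : ψ (zᴴ * q', fun j => zᴴ * A j * q') = 0 := by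
      have h1 := hst (q'ᴴ * z, fun j => q'ᴴ * A j * z)
      rw [hF q'] at h1
      simp only [Matrix.conjTranspose_mul, Matrix.conjTranspose_conjTranspose, (hAherm _).eq, map_zero] at h1
      rw [← h1]
      congr 2
      funext j
      rw [Matrix.mul_assoc]
    have hexp : ψ ((z + q')ᴴ * (z + q'), fun j => (z + q')ᴴ * A j * (z + q')) =
        ψ (q'ᴴ * q', fun j => q'ᴴ * A j * q') := by
      have : (((z + q')ᴴ * (z + q'), fun j => (z + q')ᴴ * A j * (z + q')) : (Matrix (Fin d) (Fin d) ℂ) × (Fin n → (Matrix (Fin d) (Fin d) ℂ))) =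
          ((z + q')ᴴ * z, fun j => (z + q')ᴴ * A j * z) + (zᴴ * q', fun j => zᴴ * A j * q') +
            (q'ᴴ * q', fun j => q'ᴴ * A j * q') := by
        ext1
        · simp only [Prod.mk_add_mk, Matrix.conjTranspose_add, Matrix.add_mul, Matrix.mul_add]; abel
        · funext j
          simp only [Prod.mk_add_mk, Matrix.conjTranspose_add, Matrix.add_mul, Matrix.mul_add, Pi.add_apply]; abel
      rw [this, map_add, map_add, hF, hF', zero_add, zero_add]
    rw [hexp]
    by_cases h0 : q' = 0
    · subst h0
      refine ⟨?_, fun _ => by rw [add_zero]; exact hz'⟩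
      have : ((0 : (Matrix (Fin d) (Fin d) ℂ))ᴴ * 0, fun j => (0 : (Matrix (Fin d) (Fin d) ℂ))ᴴ * A j * 0) = (0 : (Matrix (Fin d) (Fin d) ℂ) × (Fin n → (Matrix (Fin d) (Fin d) ℂ))) := by
        ext1
        · simp
        · funext j; simp
      rw [this]; simp
    · have h1 := hψ0 (⟨q', hq'⟩, 0) (by
        intro h5; exact h0 (congrArg (fun x : Zc × (Fin d → ℂ) => (x.1 : (Matrix (Fin d) (Fin d) ℂ))) h5))
      have h2 := hself q' 0
      simp only at h1
      rw [← h2] at h1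
      simp only [map_zero, add_zero] at h1
      exact ⟨h1.le, fun h5 => absurd h5 h1.ne'⟩

theorem base_rep (A : Fin n → Matrix (Fin d) (Fin d) ℂ) (hAherm : ∀ j, (A j).IsHermitian)
    (hAmin : ∀ (e : ℕ) (C : Fin n → Matrix (Fin e) (Fin e) ℂ), (∀ j, (C j).IsHermitian) →
      (∀ (k : ℕ) (X : Fin n → Matrix (Fin k) (Fin k) ℂ), (∀ j, (X j).IsHermitian) →
        ((monicK A X).PosSemidef ↔ (monicK C X).PosSemidef)) → d ≤ e) :
    ∃ (k : ℕ) (X : Fin n → Matrix (Fin k) (Fin k) ℂ) (u : Fin d → Fin k → ℂ), Good A X u ∧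
      ∀ c : Fin d → ℂ, ∑ l, c l • u l = 0 → c = 0 := by
  obtain ⟨ψ, hst, hzero, hp, hq⟩ := base_functional A hAherm hAmin
  let s : (Fin d → ℂ) →ₗ⋆[ℂ] (Fin d → ℂ) →ₗ[ℂ] ℂ :=
    vms.compr₂ₛₗ (ψ ∘ₗ LinearMap.inl ℂ _ _)
  let x : Fin n → (Fin d → ℂ) →ₗ⋆[ℂ] (Fin d → ℂ) →ₗ[ℂ] ℂ := fun j =>
    vms.compr₂ₛₗ (ψ ∘ₗ LinearMap.inr ℂ _ _ ∘ₗ LinearMap.single ℂ (fun _ => Matrix (Fin d) (Fin d) ℂ) j)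
  have hs : ∀ a b, s a b = ψ (vms a b, 0) := fun a b => rfl
  have hx : ∀ j a b, x j a b = ψ (0, Pi.single j (vms a b)) := fun j a b => rfl
  have hL : ∀ v w : Fin d → Fin d → ℂ, Lf A s x v w =
      ψ ((Matrix.of v)ᴴ * Matrix.of w, fun j => (Matrix.of v)ᴴ * A j * Matrix.of w) := by
    intro v w
    have e1 : (Matrix.of v)ᴴ * Matrix.of w = ∑ i, vms (v i) (w i) := by
      ext a b
      simp [Matrix.mul_apply, Matrix.sum_apply, vms_apply, Matrix.vecMulVec_apply]
    have e2 : ∀ j, (Matrix.of v)ᴴ * A j * Matrix.of w = ∑ i, ∑ l, A j i l • vms (v i) (w l) := by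
      intro j
      ext a b
      simp only [Matrix.mul_apply, Matrix.sum_apply, vms_apply, Matrix.vecMulVec_apply, Matrix.smul_apply,
        Finset.sum_mul, Matrix.conjTranspose_apply, Matrix.of_apply, Pi.star_apply, smul_eq_mul]
      rw [Finset.sum_comm]
      refine Finset.sum_congr rfl fun i _ => Finset.sum_congr rfl fun l _ => by ring
    have e3 : (((Matrix.of v)ᴴ * Matrix.of w, fun j => (Matrix.of v)ᴴ * A j * Matrix.of w) :
        Matrix (Fin d) (Fin d) ℂ × (Fin n → Matrix (Fin d) (Fin d) ℂ)) =
        ∑ i, (vms (v i) (w i), 0) + ∑ j, ∑ i, ∑ l, A j i l • (0, Pi.single j (vms (v i) (w l))) := by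
      apply Prod.ext
      · simp [e1, Prod.fst_sum]
      · funext j
        simp only [e2, Prod.snd_add, Prod.snd_sum, Prod.smul_mk, smul_zero, Finset.sum_const_zero, zero_add,
          Finset.sum_apply, Pi.smul_apply]
        rw [Finset.sum_eq_single j]
        · simp
        · intro j' _ hj'
          simp [Pi.single_eq_of_ne hj'.symm]
        · simp
    rw [e3, map_add, map_sum, map_sum]
    simp only [map_sum, map_smul, smul_eq_mul, Lf, hs, hx]
  have hsPD : PDForm s := by
    refine ⟨fun a b => ?_, fun a ha => ?_⟩
    · rw [hs, hs, ← hst, vms_conj]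
      congr 2
      funext j; simp
    · rw [hs]; exact hp a ha
  have hxh : ∀ j a b, x j a b = starRingEnd ℂ (x j b a) := by
    intro j a b
    rw [hx, hx, ← hst]
    congr 2
    · simp
    · funext j'
      by_cases h : j' = j
      · subst h; simp [vms_conj]
      · simp [Pi.single_eq_of_ne h]
  obtain ⟨k, T, X, hG, -, -⟩ := good_of_forms A hAherm s hsPD x hxh (fun l => Pi.single l 1)
    (by intro v; rw [hL]; exact (hq _).1)
    (by
      intro v hv
      rw [hL] at hv
      refine ⟨Matrix.of v, (hq _).2 hv, fun i => ?_⟩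
      exact pi_eq_sum_univ' (v i))
    (by
      intro v
      rw [hL]
      have : (Matrix.of fun l : Fin d => (Pi.single l 1 : Fin d → ℂ)) = 1 := by
        ext i j; simp [Matrix.one_apply, Pi.single_apply, eq_comm]
      rw [this]
      simp only [Matrix.mul_one]
      exact hzero _)
  refine ⟨k, X, _, hG, fun c hc => ?_⟩
  simp only [← map_smul, ← map_sum] at hc
  have := T.map_eq_zero_iff.mp hc
  rw [← pi_eq_sum_univ'] at this
  exact this

end Part6

open scoped Kronecker Matrix ComplexOrder

section Part7
variable {n d k : ℕ}

theorem dom {m : Type*} [Fintype m] {G : Matrix m m ℂ} (hG : G.PosSemidef) {N : ℕ}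
    (S : (m → ℂ) →ₗ[ℂ] (Fin N → ℂ)) (h : ∀ w, G *ᵥ w = 0 → S w = 0) :
    ∃ C : ℝ, 0 ≤ C ∧ ∀ w, (star (S w) ⬝ᵥ S w).re ≤ C * (star w ⬝ᵥ G *ᵥ w).re := by
  classical
  have hker : ∀ w, (star w ⬝ᵥ G *ᵥ w).re = 0 → G *ᵥ w = 0 := by
    intro w h0
    have h2 := hG.dotProduct_mulVec_nonneg w
    rw [← hG.dotProduct_mulVec_zero_iff]
    apply Complex.ext
    · exact h0
    · exact (Complex.nonneg_iff.mp h2).2.symm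
  let Z : Submodule ℝ (m → ℂ) := (LinearMap.ker G.mulVecLin).restrictScalars ℝ
  obtain ⟨Zc, hc⟩ := Submodule.exists_isCompl Z
  let S' : Zc →ₗ[ℝ] (Fin N → ℂ) := (S.restrictScalars ℝ) ∘ₗ Zc.subtype
  obtain ⟨C, hC, h1⟩ := finsler (-((matBil (1 : Matrix (Fin N) (Fin N) ℂ)).compl₁₂ S' S'))
    ((matBil G).compl₁₂ Zc.subtype Zc.subtype) (fun w => psd_re hG w) (by
      intro w hw h0
      exfalso
      apply hw
      have h3 : (w : m → ℂ) ∈ Z ⊓ Zc := ⟨hker _ h0, w.2⟩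
      rw [hc.inf_eq_bot] at h3
      exact Subtype.ext h3)
  refine ⟨C, hC, fun w => ?_⟩
  obtain ⟨z, hz, q, hq, rfl⟩ := Submodule.mem_sup.mp (show w ∈ Z ⊔ Zc by
      rw [hc.sup_eq_top]; trivial)
  have hz' : G *ᵥ z = 0 := hz
  have h2 := h1 ⟨q, hq⟩
  have h3 : (star (S q) ⬝ᵥ S q).re ≤ C * (star q ⬝ᵥ G *ᵥ q).re := by
    have h4 : -(star (S q) ⬝ᵥ (1 : Matrix (Fin N) (Fin N) ℂ) *ᵥ S q).re + C * (star q ⬝ᵥ G *ᵥ q).re ≥ 0 := h2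
    rw [Matrix.one_mulVec] at h4
    linarith
  have h5 : star z ⬝ᵥ G *ᵥ q = 0 := by
    have h6 : star z ᵥ* G = star (G *ᵥ z) := by rw [Matrix.star_mulVec, hG.1.eq]
    rw [Matrix.dotProduct_mulVec, h6, hz']
    simp
  rw [map_add, h z hz', zero_add, Matrix.mulVec_add, hz', zero_add, star_add, add_dotProduct, h5, zero_add]
  exact h3

theorem dot_conj {m : Type*} [Fintype m] (a b : m → ℂ) : starRingEnd ℂ (star a ⬝ᵥ b) = star b ⬝ᵥ a := by
  simp [dotProduct, map_sum, mul_comm]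

theorem dot_herm {m : Type*} [Fintype m] {M : Matrix m m ℂ} (hM : M.IsHermitian) (a b : m → ℂ) :
    star a ⬝ᵥ M *ᵥ b = star (M *ᵥ a) ⬝ᵥ b := by
  rw [Matrix.star_mulVec, hM.eq, Matrix.dotProduct_mulVec]

/-- sesquilinear form of a matrix -/
noncomputable def sM {m : Type*} [Fintype m] (M : Matrix m m ℂ) : (m → ℂ) →ₗ⋆[ℂ] (m → ℂ) →ₗ[ℂ] ℂ :=
  LinearMap.mk₂'ₛₗ (starRingEnd ℂ) (RingHom.id ℂ) (fun a b => star a ⬝ᵥ M *ᵥ b)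
      (by intros; simp [add_dotProduct]) (by intros; simp)
      (by intros; simp [Matrix.mulVec_add]) (by intros; simp [Matrix.mulVec_smul])

theorem extend (A : Fin n → Matrix (Fin d) (Fin d) ℂ) (hA : ∀ j, (A j).IsHermitian)
    (X : Fin n → Matrix (Fin k) (Fin k) ℂ) (u : Fin d → Fin k → ℂ) (hg : Good A X u) {N : ℕ}
    (G : (Fin n → Fin k → ℂ) →ₗ[ℂ] (Fin N → ℂ))
    (hG : ∀ c : Fin d → ℂ, G (fun j => ∑ l, (∑ i, c i * A j i l) • u l) = 0) :
    ∃ (k' : ℕ) (T : ((Fin k → ℂ) × (Fin N → ℂ)) ≃ₗ[ℂ] (Fin k' → ℂ)) (X' : Fin n → Matrix (Fin k') (Fin k') ℂ)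
      (ε : ℂ), ε ≠ 0 ∧ Good A X' (fun l => T (u l, 0)) ∧
      ∀ j h, X' j *ᵥ T (h, 0) = T (X j *ᵥ h, ε • G (Pi.single j h)) := by
  let b : Fin n → (Fin k → ℂ) →ₗ[ℂ] (Fin N → ℂ) := fun j => G ∘ₗ LinearMap.single ℂ (fun _ => Fin k → ℂ) j
  have hb : ∀ h : Fin n → Fin k → ℂ, G h = ∑ j, b j (h j) := by
    intro h
    conv_lhs => rw [← Finset.univ_sum_single h]
    rw [map_sum]; rfl
  -- the map on d-tuples
  let S : (Fin d × Fin k → ℂ) →ₗ[ℂ] (Fin (d * N) → ℂ) :=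
    { toFun := fun w p => ∑ j, ∑ l, A j (finProdFinEquiv.symm p).1 l * b j (fun a => w (l, a)) (finProdFinEquiv.symm p).2
      map_add' := by
        intro v w
        funext p
        have : ∀ l, (fun a => (v + w) (l, a)) = (fun a => v (l, a)) + (fun a => w (l, a)) := fun l => rfl
        simp only [this]
        simp only [map_add, Pi.add_apply, mul_add, Finset.sum_add_distrib]
      map_smul' := by
        intro c w
        funext p
        have : ∀ l, (fun a => (c • w) (l, a)) = c • (fun a => w (l, a)) := fun l => rfl
        simp only [this]
        simp only [map_smul, Pi.smul_apply, smul_eq_mul, Finset.mul_sum, RingHom.id_apply, mul_left_comm] }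
  let Bh : (Fin d → Fin k → ℂ) → Fin d → Fin N → ℂ := fun h i => ∑ j, ∑ l, A j i l • b j (h l)
  have hSB : ∀ h, (star (S fun p => h p.1 p.2) ⬝ᵥ S fun p => h p.1 p.2) = ∑ i, star (Bh h i) ⬝ᵥ Bh h i := by
    intro h
    have : (S fun p => h p.1 p.2) = fun p => Bh h (finProdFinEquiv.symm p).1 (finProdFinEquiv.symm p).2 := by
      funext p
      simp [S, Bh, Finset.sum_apply]
    rw [this]
    simp only [dotProduct, Pi.star_apply]
    rw [← Fintype.sum_prod_type']
    exact Fintype.sum_equiv finProdFinEquiv.symm _ _ (fun p => rfl)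
  have hBz : ∀ (z : Matrix (Fin d) (Fin d) ℂ), (∀ j, z * A j = A j * z) → ∀ h : Fin d → Fin k → ℂ,
      (∀ i, h i = ∑ l, z i l • u l) → ∀ i, Bh h i = 0 := by
    intro z hz h hh i
    have h1 := hG (z i)
    rw [hb] at h1
    rw [← h1]
    refine Finset.sum_congr rfl fun j _ => ?_
    simp only [← map_smul, ← map_sum]
    congr 1
    simp only [hh, Finset.smul_sum, smul_smul]
    rw [Finset.sum_comm]
    refine Finset.sum_congr rfl fun l _ => ?_
    rw [← Finset.sum_smul]
    congr 1
    have := congrFun (congrFun (hz j) i) l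
    simp only [Matrix.mul_apply] at this
    exact this.symm
  obtain ⟨C, hC, hdom⟩ := dom hg.psd S (by
    intro w hw
    obtain ⟨z, hz, hzw⟩ := hg.ker w hw
    have h1 := hBz z hz (fun i a => w (i, a)) (by
      intro i; funext a; rw [hzw]; simp [Finset.sum_apply])
    funext p
    have := congrFun (h1 (finProdFinEquiv.symm p).1) (finProdFinEquiv.symm p).2
    simpa [S, Bh, Finset.sum_apply] using this)
  let ε : ℝ := 1 / (2 * (C + 1))
  have hε : 0 < ε := by positivity
  have hε2 : 4 * ε ^ 2 * C ≤ 1 := by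
    have : 4 * ε ^ 2 * C = C / (C + 1) ^ 2 := by
      simp only [ε]; field_simp; norm_num
    rw [this, div_le_one (by positivity)]
    nlinarith
  let s : ((Fin k → ℂ) × (Fin N → ℂ)) →ₗ⋆[ℂ] ((Fin k → ℂ) × (Fin N → ℂ)) →ₗ[ℂ] ℂ :=
    LinearMap.mk₂'ₛₗ (starRingEnd ℂ) (RingHom.id ℂ) (fun a b => star a.1 ⬝ᵥ b.1 + star a.2 ⬝ᵥ b.2)
      (by intros; simp [add_dotProduct]; ring) (by intros; simp; ring)
      (by intros; simp [dotProduct_add]; ring) (by intros; simp; ring)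
  let x : Fin n → ((Fin k → ℂ) × (Fin N → ℂ)) →ₗ⋆[ℂ] ((Fin k → ℂ) × (Fin N → ℂ)) →ₗ[ℂ] ℂ := fun j =>
    LinearMap.mk₂'ₛₗ (starRingEnd ℂ) (RingHom.id ℂ) (fun a c => star a.1 ⬝ᵥ X j *ᵥ c.1 +
        (ε : ℂ) * (star a.2 ⬝ᵥ b j c.1 + star (b j a.1) ⬝ᵥ c.2))
      (by intros; simp [add_dotProduct]; ring) (by intros; simp; ring)
      (by intros; simp [dotProduct_add, Matrix.mulVec_add]; ring) (by intros; simp [Matrix.mulVec_smul]; ring)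
  have hs : ∀ a b : ((Fin k → ℂ) × (Fin N → ℂ)), s a b = star a.1 ⬝ᵥ b.1 + star a.2 ⬝ᵥ b.2 := fun a b => rfl
  have hx : ∀ j (a c : ((Fin k → ℂ) × (Fin N → ℂ))), x j a c = star a.1 ⬝ᵥ X j *ᵥ c.1 +
        (ε : ℂ) * (star a.2 ⬝ᵥ b j c.1 + star (b j a.1) ⬝ᵥ c.2) := fun j a b => rfl
  have hL : ∀ v w : Fin d → ((Fin k → ℂ) × (Fin N → ℂ)), Lf A s x v w = (star (fun p : Fin d × Fin k => (v p.1).1 p.2) ⬝ᵥ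
      monicK A X *ᵥ (fun p => (w p.1).1 p.2)) + ∑ i, star (v i).2 ⬝ᵥ (w i).2 +
      (ε : ℂ) * (∑ i, star (v i).2 ⬝ᵥ Bh (fun l => (w l).1) i + ∑ i, star (Bh (fun l => (v l).1) i) ⬝ᵥ (w i).2) := by
    intro v w
    have h1 := Lf_eq A (sM (1 : Matrix (Fin k) (Fin k) ℂ)) (fun j => sM (X j)) (LinearEquiv.refl ℂ _) X
      (by intro a b; simp [sM]) (by intro j a b; simp [sM]) (fun i => (v i).1) (fun i => (w i).1)
    simp only [LinearEquiv.refl_apply] at h1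
    rw [← h1]
    have e1 : ∀ i, star (v i).2 ⬝ᵥ Bh (fun l => (w l).1) i = ∑ j, ∑ l, A j i l * (star (v i).2 ⬝ᵥ b j (w l).1) := by
      intro i
      simp only [Bh, dotProduct_sum, dotProduct_smul, smul_eq_mul]
    have e2 : ∀ l, star (Bh (fun l => (v l).1) l) ⬝ᵥ (w l).2 = ∑ j, ∑ i, A j i l * (star (b j (v i).1) ⬝ᵥ (w l).2) := by
      intro l
      simp only [Bh, star_sum, sum_dotProduct, star_smul, smul_dotProduct, smul_eq_mul]
      refine Finset.sum_congr rfl fun j _ => Finset.sum_congr rfl fun i _ => ?_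
      rw [(hA j).apply]
    have e3 : ∑ l, star (Bh (fun l => (v l).1) l) ⬝ᵥ (w l).2 =
        ∑ j, ∑ i, ∑ l, A j i l * (star (b j (v i).1) ⬝ᵥ (w l).2) := by
      simp only [e2]
      rw [Finset.sum_comm]
      refine Finset.sum_congr rfl fun j _ => ?_
      rw [Finset.sum_comm]
    have e4 : ∑ i, star (v i).2 ⬝ᵥ Bh (fun l => (w l).1) i =
        ∑ j, ∑ i, ∑ l, A j i l * (star (v i).2 ⬝ᵥ b j (w l).1) := by
      simp only [e1]
      rw [Finset.sum_comm]
    rw [e3, e4]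
    simp only [Lf, hs, hx, sM, LinearMap.mk₂'ₛₗ_apply, Matrix.one_mulVec, mul_add, Finset.sum_add_distrib,
      Finset.mul_sum, mul_left_comm]
    ring
  have hre : ∀ v : Fin d → ((Fin k → ℂ) × (Fin N → ℂ)), ((star (fun p : Fin d × Fin k => (v p.1).1 p.2) ⬝ᵥ
      monicK A X *ᵥ (fun p => (v p.1).1 p.2)).re + ∑ i, (star (v i).2 ⬝ᵥ (v i).2).re) / 2 ≤ (Lf A s x v v).re := by
    intro v
    have h1 := hdom (fun p => (v p.1).1 p.2)
    rw [hSB (fun l => (v l).1)] at h1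
    set Q := (star (fun p : Fin d × Fin k => (v p.1).1 p.2) ⬝ᵥ monicK A X *ᵥ (fun p => (v p.1).1 p.2)).re with hQ
    have hQ0 : 0 ≤ Q := psd_re hg.psd _
    rw [hL]
    have h2 : ∀ i, 0 ≤ (star (v i).2 ⬝ᵥ (v i).2).re / 2 + 2 * ε ^ 2 * (star (Bh (fun l => (v l).1) i) ⬝ᵥ Bh (fun l => (v l).1) i).re +
        ε * ((star (v i).2 ⬝ᵥ Bh (fun l => (v l).1) i).re + (star (Bh (fun l => (v l).1) i) ⬝ᵥ (v i).2).re) := by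
      intro i
      have h3 := star_dot_nonneg ((v i).2 + ((2 * ε : ℝ) : ℂ) • Bh (fun l => (v l).1) i)
      simp only [star_add, star_smul, add_dotProduct, dotProduct_add, smul_dotProduct, dotProduct_smul, smul_eq_mul,
        Complex.add_re, RCLike.star_def, Complex.conj_ofReal, Complex.re_ofReal_mul] at h3
      nlinarith
    have h4 := Finset.sum_nonneg fun i (_ : i ∈ Finset.univ) => h2 i
    simp only [Finset.sum_add_distrib, ← Finset.mul_sum, ← Finset.sum_div] at h4
    simp only [Complex.add_re, Complex.re_sum, Complex.re_ofReal_mul] at h1 ⊢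
    rw [← hQ]
    have h5 : 2 * ε ^ 2 * (∑ i, (star (Bh (fun l => (v l).1) i) ⬝ᵥ Bh (fun l => (v l).1) i).re) ≤ 2 * ε ^ 2 * (C * Q) :=
      mul_le_mul_of_nonneg_left h1 (by positivity)
    have h6 : 4 * ε ^ 2 * C * Q ≤ 1 * Q := mul_le_mul_of_nonneg_right hε2 hQ0
    linarith
  obtain ⟨k', T, X', hgood, hT, hX⟩ := good_of_forms A hA s
    ⟨fun a c => by rw [hs, hs, map_add, dot_conj, dot_conj], fun a ha => by
      rw [hs, Complex.add_re]
      by_cases h1 : a.1 = 0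
      · have h2 : a.2 ≠ 0 := fun h2 => ha (Prod.ext h1 h2)
        have := star_dot_pos _ h2
        have := star_dot_nonneg a.1
        linarith
      · have := star_dot_pos _ h1
        have := star_dot_nonneg a.2
        linarith⟩ x
    (by
      intro j a c
      rw [hx, hx, map_add, map_mul, map_add, dot_conj, dot_conj, dot_conj, dot_herm (hg.herm j)]
      simp [add_comm])
    (fun l => (u l, 0))
    (by
      intro v
      refine le_trans ?_ (hre v)
      have h1 := psd_re hg.psd (fun p : Fin d × Fin k => (v p.1).1 p.2)
      have h2 := Finset.sum_nonneg fun i (_ : i ∈ Finset.univ) => star_dot_nonneg (v i).2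
      linarith)
    (by
      intro v hv
      have h0 := hre v
      rw [hv] at h0
      have h1 := psd_re hg.psd (fun p : Fin d × Fin k => (v p.1).1 p.2)
      have h2 := Finset.sum_nonneg fun i (_ : i ∈ Finset.univ) => star_dot_nonneg (v i).2
      have h3 : ∑ i, (star (v i).2 ⬝ᵥ (v i).2).re = 0 := by linarith
      have h4 : (star (fun p : Fin d × Fin k => (v p.1).1 p.2) ⬝ᵥ
        monicK A X *ᵥ (fun p => (v p.1).1 p.2)).re = 0 := by linarith
      have h5 : monicK A X *ᵥ (fun p : Fin d × Fin k => (v p.1).1 p.2) = 0 := by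
        rw [← hg.psd.dotProduct_mulVec_zero_iff]
        apply Complex.ext
        · exact h4
        · exact (Complex.nonneg_iff.mp (hg.psd.dotProduct_mulVec_nonneg _)).2.symm
      obtain ⟨z, hz, hzu⟩ := hg.ker _ h5
      refine ⟨z, hz, fun i => Prod.ext ?_ ?_⟩
      · funext a
        simpa [Prod.fst_sum, Finset.sum_apply] using hzu i a
      · have h6 := (Finset.sum_eq_zero_iff_of_nonneg fun i _ => star_dot_nonneg (v i).2).mp h3 i (Finset.mem_univ i)
        have h7 : (v i).2 = 0 := by
          by_contra h7
          exact (star_dot_pos _ h7).ne' h6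
        simp [h7, Prod.snd_sum])
    (by
      intro v
      rw [hL]
      have h1 : ∀ i, Bh (fun l => u l) i = 0 := hBz 1 (by simp) u (by
        intro i; simp [Matrix.one_apply])
      simp only [hg.Lu, h1]
      simp)
  refine ⟨k', T, X', ε, by exact_mod_cast hε.ne', hgood, fun j h => ?_⟩
  have key : ∀ a : ((Fin k → ℂ) × (Fin N → ℂ)), star (T a) ⬝ᵥ (X' j *ᵥ T (h, 0) - T (X j *ᵥ h, (ε : ℂ) • G (Pi.single j h))) = 0 := by
    intro a
    rw [dotProduct_sub, ← hX, ← hT, hx, hs]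
    have : b j h = G (Pi.single j h) := rfl
    simp [this]
  have h1 := key (T.symm (X' j *ᵥ T (h, 0) - T (X j *ᵥ h, (ε : ℂ) • G (Pi.single j h))))
  rw [T.apply_symm_apply] at h1
  exact sub_eq_zero.mp (dotProduct_star_self_eq_zero.mp h1)

end Part7

open scoped Kronecker Matrix ComplexOrder

section Part8
variable {n d k : ℕ}

/-- left module generated by the rows of the pencil -/
noncomputable def II (A : Fin n → Matrix (Fin d) (Fin d) ℂ) : Submodule ℂ (Fin d → FreeAlg n) :=
  LinearMap.range ({ toFun := fun g l => ∑ i, g i * monicPoly A i l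
                     map_add' := by
                      intro a b; funext l
                      simp only [Pi.add_apply, add_mul, Finset.sum_add_distrib]
                     map_smul' := by
                      intro c a; funext l
                      simp only [Pi.smul_apply, RingHom.id_apply, smul_mul_assoc, Finset.smul_sum] } :
    (Fin d → FreeAlg n) →ₗ[ℂ] (Fin d → FreeAlg n))

theorem mem_II {A : Fin n → Matrix (Fin d) (Fin d) ℂ} {r : Fin d → FreeAlg n} :
    r ∈ II A ↔ ∃ g : Fin d → FreeAlg n, ∀ l, r l = ∑ i, g i * monicPoly A i l := by
  constructor
  · rintro ⟨g, rfl⟩; exact ⟨g, fun l => rfl⟩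
  · rintro ⟨g, hg⟩; exact ⟨g, funext fun l => (hg l).symm⟩

theorem II_mul {A : Fin n → Matrix (Fin d) (Fin d) ℂ} {r : Fin d → FreeAlg n} (h : r ∈ II A) (a : FreeAlg n) :
    (fun l => a * r l) ∈ II A := by
  obtain ⟨g, hg⟩ := mem_II.mp h
  refine mem_II.mpr ⟨fun i => a * g i, fun l => ?_⟩
  simp only [hg, Finset.mul_sum, mul_assoc]

theorem II_const (A : Fin n → Matrix (Fin d) (Fin d) ℂ) (c : Fin d → ℂ) :
    (fun l => algebraMap ℂ (FreeAlg n) (c l) +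
      ∑ j, FreeAlgebra.ι ℂ j * algebraMap ℂ (FreeAlg n) (∑ i, c i * A j i l)) ∈ II A := by
  refine mem_II.mpr ⟨fun i => algebraMap ℂ (FreeAlg n) (c i), fun l => ?_⟩
  simp only [monicPoly_apply, mul_add, Finset.sum_add_distrib]
  congr 1
  · simp [Matrix.one_apply]
  · simp only [Finset.mul_sum]
    rw [Finset.sum_comm]
    refine Finset.sum_congr rfl fun j _ => ?_
    simp only [map_sum, Finset.mul_sum, map_mul]
    refine Finset.sum_congr rfl fun i _ => ?_
    simp only [Algebra.algebraMap_eq_smul_one, smul_mul_assoc, mul_smul_comm, one_mul, mul_one]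

/-- value of a row at a tuple on a vector -/
noncomputable def rv (X : Fin n → Matrix (Fin k) (Fin k) ℂ) (u : Fin d → Fin k → ℂ) :
    (Fin d → FreeAlg n) →ₗ[ℂ] (Fin k → ℂ) :=
  { toFun := fun r => ∑ l, FreeAlgebra.lift ℂ X (r l) *ᵥ u l
    map_add' := by
      intro a b
      simp only [Pi.add_apply, map_add, Matrix.add_mulVec, Finset.sum_add_distrib]
    map_smul' := by
      intro c a
      simp only [Pi.smul_apply, map_smul, Matrix.smul_mulVec, Finset.smul_sum, RingHom.id_apply] }

theorem rv_apply (X : Fin n → Matrix (Fin k) (Fin k) ℂ) (u : Fin d → Fin k → ℂ) (r : Fin d → FreeAlg n) :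
    rv X u r = ∑ l, FreeAlgebra.lift ℂ X (r l) *ᵥ u l := rfl

theorem rv_mul (X : Fin n → Matrix (Fin k) (Fin k) ℂ) (u : Fin d → Fin k → ℂ) (a : FreeAlg n)
    (r : Fin d → FreeAlg n) : rv X u (fun l => a * r l) = FreeAlgebra.lift ℂ X a *ᵥ rv X u r := by
  simp only [rv_apply, map_mul, Matrix.mulVec_sum, Matrix.mulVec_mulVec]

theorem rv_alg (X : Fin n → Matrix (Fin k) (Fin k) ℂ) (u : Fin d → Fin k → ℂ) (c : Fin d → ℂ) :
    rv X u (fun l => algebraMap ℂ (FreeAlg n) (c l)) = ∑ l, c l • u l := by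
  simp only [rv_apply, AlgHom.commutes, Algebra.algebraMap_eq_smul_one, map_smul, map_one, Matrix.smul_mulVec,
    Matrix.one_mulVec]

theorem rv_II {A : Fin n → Matrix (Fin d) (Fin d) ℂ} {X : Fin n → Matrix (Fin k) (Fin k) ℂ}
    {u : Fin d → Fin k → ℂ} (hg : Good A X u) {r : Fin d → FreeAlg n} (h : r ∈ II A) : rv X u r = 0 := by
  obtain ⟨g, hr⟩ := mem_II.mp h
  have h1 : r = ∑ i, fun l => g i * monicPoly A i l := by
    funext l; rw [hr, Finset.sum_apply]
  rw [h1, map_sum]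
  refine Finset.sum_eq_zero fun i _ => ?_
  rw [rv_mul]
  have h2 : rv X u (monicPoly A i) = 0 := by
    funext a
    have h3 := congrFun hg.Lu (i, a)
    rw [← evalM_monic, evalM_mulVec] at h3
    rw [rv_apply, Finset.sum_apply]
    exact h3
  erw [h2]
  rw [Matrix.mulVec_zero]

theorem row_decomp (r : Fin d → FreeAlg n) : r = (fun l => algebraMap ℂ (FreeAlg n) (eps (r l))) +
    ∑ j, fun l => FreeAlgebra.ι ℂ j * dd j (r l) := by
  funext l
  rw [Pi.add_apply, Finset.sum_apply]
  exact decomp (r l)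

theorem rv_decomp (X : Fin n → Matrix (Fin k) (Fin k) ℂ) (u : Fin d → Fin k → ℂ) (r : Fin d → FreeAlg n) :
    rv X u r = ∑ l, eps (r l) • u l + ∑ j, X j *ᵥ rv X u (fun l => dd j (r l)) := by
  conv_lhs => rw [row_decomp r]
  rw [map_add, map_sum, rv_alg]
  congr 1
  refine Finset.sum_congr rfl fun j _ => ?_
  rw [rv_mul, FreeAlgebra.lift_ι_apply]

theorem chain_step (A : Fin n → Matrix (Fin d) (Fin d) ℂ) (hA : ∀ j, (A j).IsHermitian) (m : ℕ)
    (X : Fin n → Matrix (Fin k) (Fin k) ℂ) (u : Fin d → Fin k → ℂ) (hg : Good A X u)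
    (hP : ∀ r : Fin d → FreeAlg n, (∀ l, r l ∈ FF n (m + 1)) → rv X u r = 0 → r ∈ II A) :
    ∃ (k' : ℕ) (X' : Fin n → Matrix (Fin k') (Fin k') ℂ) (u' : Fin d → Fin k' → ℂ), Good A X' u' ∧
      ∀ r : Fin d → FreeAlg n, (∀ l, r l ∈ FF n (m + 2)) → rv X' u' r = 0 → r ∈ II A := by
  let H : Submodule ℂ (Fin k → ℂ) := (Submodule.pi Set.univ fun _ : Fin d => FF n m).map (rv X u)
  let lam : (Fin d → ℂ) →ₗ[ℂ] (Fin n → Fin k → ℂ) :=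
    { toFun := fun c j => ∑ l, (∑ i, c i * A j i l) • u l
      map_add' := by
        intro a b; funext j
        simp only [Pi.add_apply, add_mul, Finset.sum_add_distrib, add_smul]
      map_smul' := by
        intro c a; funext j
        simp only [Pi.smul_apply, smul_eq_mul, RingHom.id_apply, Finset.smul_sum, smul_smul, Finset.mul_sum,
          mul_assoc] }
  let R : Submodule ℂ (Fin n → Fin k → ℂ) := (Submodule.pi Set.univ fun _ : Fin n => H) ⊔ LinearMap.range lam
  let bq := Module.finBasis ℂ ((Fin n → Fin k → ℂ) ⧸ R)
  let G : (Fin n → Fin k → ℂ) →ₗ[ℂ] (Fin (Module.finrank ℂ ((Fin n → Fin k → ℂ) ⧸ R)) → ℂ) :=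
    bq.equivFun.toLinearMap ∘ₗ R.mkQ
  have hGz : ∀ h, G h = 0 ↔ h ∈ R := by
    intro h
    change bq.equivFun (R.mkQ h) = 0 ↔ _
    rw [LinearEquiv.map_eq_zero_iff, Submodule.mkQ_apply, Submodule.Quotient.mk_eq_zero]
  obtain ⟨k', T, X', ε, hε, hgood, hX'⟩ := extend A hA X u hg G (fun c =>
    (hGz _).mpr (Submodule.mem_sup_right ⟨c, rfl⟩))
  have hsing : ∀ j h, h ∈ H → G (Pi.single j h) = 0 := by
    intro j h hh
    refine (hGz _).mpr (Submodule.mem_sup_left ?_)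
    rw [Submodule.mem_pi]
    intro i _
    by_cases hij : i = j
    · subst hij; simpa using hh
    · simp [Pi.single_eq_of_ne hij]
  have hGsum : ∀ h : Fin n → Fin k → ℂ, ∑ j, G (Pi.single j (h j)) = G h := by
    intro h
    rw [← map_sum, Finset.univ_sum_single]
  -- general formula when the derivative rows are already understood
  have hform : ∀ r : Fin d → FreeAlg n,
      (∀ j, rv X' (fun l => T (u l, 0)) (fun l => dd j (r l)) = T (rv X u (fun l => dd j (r l)), 0)) →
      rv X' (fun l => T (u l, 0)) r = T (rv X u r, ε • G (fun j => rv X u (fun l => dd j (r l)))) := by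
    intro r hr
    rw [rv_decomp, rv_decomp X u r, ← hGsum]
    simp only [hr, hX', ← map_smul, ← map_sum, ← map_add]
    congr 1
    ext1
    · simp [Prod.fst_sum]
    · simp [Prod.snd_sum, Finset.smul_sum]
  have hlow : ∀ p, p ≤ m + 1 → ∀ r : Fin d → FreeAlg n, (∀ l, r l ∈ FF n p) →
      rv X' (fun l => T (u l, 0)) r = T (rv X u r, 0) := by
    intro p
    induction p with
    | zero =>
      intro _ r hr
      have : r = 0 := funext fun l => mem_FF_zero.mp (hr l)
      rw [this, map_zero, map_zero]; exact (map_zero T).symm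
    | succ p ih =>
      intro hp r hr
      have hd : ∀ j l, dd j (r l) ∈ FF n p := fun j l => mem_FF_succ.mp (hr l) j
      rw [hform r (fun j => ih (by omega) _ (hd j))]
      have : G (fun j => rv X u (fun l => dd j (r l))) = 0 := by
        rw [← hGsum]
        refine Finset.sum_eq_zero fun j _ => hsing j _ ?_
        refine ⟨_, ?_, rfl⟩
        rw [SetLike.mem_coe, Submodule.mem_pi]
        intro l _
        exact FF_mono (by omega) (hd j l)
      rw [this, smul_zero]
  refine ⟨k', X', _, hgood, fun r hr h0 => ?_⟩
  have hd : ∀ j l, dd j (r l) ∈ FF n (m + 1) := fun j l => mem_FF_succ.mp (hr l) j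
  have h1 := hform r (fun j => hlow _ le_rfl _ (hd j))
  rw [h0] at h1
  have h2 := T.map_eq_zero_iff.mp h1.symm
  have h3 : G (fun j => rv X u (fun l => dd j (r l))) = 0 := by
    have := congrArg Prod.snd h2
    simpa [hε] using this
  rw [hGz] at h3
  obtain ⟨y, hy, w, ⟨c, rfl⟩, hyw⟩ := Submodule.mem_sup.mp h3
  have hy' : ∀ j, ∃ r' : Fin d → FreeAlg n, (∀ l, r' l ∈ FF n m) ∧ rv X u r' = y j := by
    intro j
    obtain ⟨r', hr', h5⟩ := (Submodule.mem_pi.mp hy) j trivial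
    exact ⟨r', fun l => Submodule.mem_pi.mp hr' l trivial, h5⟩
  choose r' hr' hry using hy'
  have hdI : ∀ j, (fun l => dd j (r l) - r' j l - algebraMap ℂ (FreeAlg n) (∑ i, c i * A j i l)) ∈ II A := by
    intro j
    apply hP
    · intro l
      refine Submodule.sub_mem _ (Submodule.sub_mem _ (hd j l) (FF_mono (by omega) (hr' j l))) ?_
      exact alg_mem_FF _ _
    · have h5 : (fun l => dd j (r l) - r' j l - algebraMap ℂ (FreeAlg n) (∑ i, c i * A j i l)) =
          (fun l => dd j (r l)) - r' j - (fun l => algebraMap ℂ (FreeAlg n) (∑ i, c i * A j i l)) := rfl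
      rw [h5, map_sub, map_sub, rv_alg, hry, ← congrFun hyw j]
      simp [lam]
  let r2 : Fin d → FreeAlg n := fun l => ∑ j, FreeAlgebra.ι ℂ j * r' j l + algebraMap ℂ (FreeAlg n) (eps (r l) - c l)
  have hr2 : ∀ l, r2 l ∈ FF n (m + 1) := by
    intro l
    refine Submodule.add_mem _ (Submodule.sum_mem _ fun j _ => iota_mul_mem j (hr' j l)) (alg_mem_FF _ _)
  have hdiff : r - r2 ∈ II A := by
    have h5 : r - r2 = (∑ j, fun l => FreeAlgebra.ι ℂ j *
        (dd j (r l) - r' j l - algebraMap ℂ (FreeAlg n) (∑ i, c i * A j i l))) +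
        (fun l => algebraMap ℂ (FreeAlg n) (c l) +
      ∑ j, FreeAlgebra.ι ℂ j * algebraMap ℂ (FreeAlg n) (∑ i, c i * A j i l)) := by
      funext l
      rw [Pi.sub_apply, Pi.add_apply, Finset.sum_apply]
      conv_lhs => rw [decomp (r l)]
      simp only [r2, mul_sub, Finset.sum_sub_distrib, map_sub]
      abel
    rw [h5]
    exact Submodule.add_mem _ (Submodule.sum_mem _ fun j _ => II_mul (hdI j) _) (II_const A c)
  have h6 : rv X u r2 = 0 := by
    have h7 := hlow _ le_rfl r2 hr2
    have h8 := rv_II hgood hdiff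
    rw [map_sub, h0, zero_sub, neg_eq_zero] at h8
    rw [h8] at h7
    exact congrArg Prod.fst (T.map_eq_zero_iff.mp h7.symm)
  have := Submodule.add_mem _ hdiff (hP r2 hr2 h6)
  rwa [sub_add_cancel] at this

theorem chain (A : Fin n → Matrix (Fin d) (Fin d) ℂ) (hAherm : ∀ j, (A j).IsHermitian)
    (hAmin : ∀ (e : ℕ) (C : Fin n → Matrix (Fin e) (Fin e) ℂ), (∀ j, (C j).IsHermitian) →
      (∀ (k : ℕ) (X : Fin n → Matrix (Fin k) (Fin k) ℂ), (∀ j, (X j).IsHermitian) →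
        ((monicK A X).PosSemidef ↔ (monicK C X).PosSemidef)) → d ≤ e) (m : ℕ) :
    ∃ (k : ℕ) (X : Fin n → Matrix (Fin k) (Fin k) ℂ) (u : Fin d → Fin k → ℂ), Good A X u ∧
      ∀ r : Fin d → FreeAlg n, (∀ l, r l ∈ FF n (m + 1)) → rv X u r = 0 → r ∈ II A := by
  induction m with
  | zero =>
    obtain ⟨k, X, u, hg, hu⟩ := base_rep A hAherm hAmin
    refine ⟨k, X, u, hg, fun r hr h0 => ?_⟩
    have h1 : r = fun l => algebraMap ℂ (FreeAlg n) (eps (r l)) := funext fun l => FF_one.mp (hr l)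
    rw [h1, rv_alg] at h0
    have h2 := hu _ h0
    have h3 : r = 0 := by
      rw [h1]; funext l
      rw [congrFun h2 l]; simp
    rw [h3]; exact Submodule.zero_mem _
  | succ m ih =>
    obtain ⟨k, X, u, hg, hP⟩ := ih
    exact chain_step A hAherm m X u hg hP

/-- vanishing on the kernel of the pencil gives right divisibility -/
theorem factor (A : Fin n → Matrix (Fin d) (Fin d) ℂ) (hAherm : ∀ j, (A j).IsHermitian)
    (hAmin : ∀ (e : ℕ) (C : Fin n → Matrix (Fin e) (Fin e) ℂ), (∀ j, (C j).IsHermitian) →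
      (∀ (k : ℕ) (X : Fin n → Matrix (Fin k) (Fin k) ℂ), (∀ j, (X j).IsHermitian) →
        ((monicK A X).PosSemidef ↔ (monicK C X).PosSemidef)) → d ≤ e)
    (f : Matrix (Fin d) (Fin d) (FreeAlg n))
    (h : ∀ (k : ℕ) (X : Fin n → Matrix (Fin k) (Fin k) ℂ), (∀ j, (X j).IsHermitian) →
        (monicK A X).PosSemidef →
        ∀ u : Fin d × Fin k → ℂ, (monicK A X).mulVec u = 0 → (evalM f X).mulVec u = 0) :
    ∃ g, f = g * monicPoly A := by
  obtain ⟨m, hm⟩ := exists_FF_mat f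
  obtain ⟨k, X, u, hg, hP⟩ := chain A hAherm hAmin m
  have h1 := h k X hg.herm hg.psd _ hg.Lu
  have h2 : ∀ i, f i ∈ II A := by
    intro i
    apply hP
    · exact fun l => FF_mono (by omega) (hm i l)
    · funext a
      have := congrFun h1 (i, a)
      rw [evalM_mulVec] at this
      rw [rv_apply, Finset.sum_apply]
      exact this
  choose g hg' using fun i => mem_II.mp (h2 i)
  refine ⟨Matrix.of g, ?_⟩
  ext i l
  rw [hg', Matrix.mul_apply]
  rfl

end Part8

open scoped Kronecker Matrix ComplexOrder

section Part9
variable {n d k : ℕ}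

open scoped MatrixOrder in
theorem neg_data (c : Matrix (Fin d) (Fin d) ℂ) (hc : c.IsHermitian) :
    ∃ p z : Matrix (Fin d) (Fin d) ℂ, z.PosSemidef ∧ c = p - z ∧ p * z = 0 ∧
      (∀ B, c * B = B * c → z * B = B * z) ∧ (z = 0 → c.PosSemidef) := by
  have hsa : IsSelfAdjoint c := hc
  refine ⟨c⁺, c⁻, Matrix.nonneg_iff_posSemidef.mp (CFC.negPart_nonneg c), (CFC.posPart_sub_negPart c hsa).symm,
    CFC.posPart_mul_negPart c, ?_, ?_⟩
  · intro B hB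
    rw [CFC.negPart_def]
    exact Commute.cfcₙ_real (show Commute c B from hB) _
  · intro h
    exact Matrix.nonneg_iff_posSemidef.mp ((CFC.negPart_eq_zero_iff c hsa).mp h)

open scoped MatrixOrder in
theorem sqrt_data (c : Matrix (Fin d) (Fin d) ℂ) (hc : c.PosSemidef) :
    ∃ C : Matrix (Fin d) (Fin d) ℂ, C.IsHermitian ∧ C * C = c ∧ (∀ B, c * B = B * c → C * B = B * C) := by
  refine ⟨CFC.sqrt c, (Matrix.nonneg_iff_posSemidef.mp (CFC.sqrt_nonneg c)).1, CFC.sqrt_mul_sqrt_self c hc.nonneg, ?_⟩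
  intro B hB
  exact Commute.cfcₙ_nnreal (show Commute c B from hB) _

theorem lift_cont (X : Fin n → Matrix (Fin k) (Fin k) ℂ) (a : FreeAlg n) :
    Continuous fun t : ℝ => FreeAlgebra.lift ℂ (fun j => t • X j) a := by
  induction a using FreeAlgebra.induction with
  | grade0 c => simp only [AlgHom.commutes]; exact continuous_const
  | grade1 j => simp only [FreeAlgebra.lift_ι_apply]; fun_prop
  | mul a b ha hb => simp only [map_mul]; exact ha.mul hb
  | add a b ha hb => simp only [map_add]; exact ha.add hb

theorem evalM_cont {I J : Type*} (f : Matrix I J (FreeAlg n)) (X : Fin n → Matrix (Fin k) (Fin k) ℂ) :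
    Continuous fun t : ℝ => evalM f (fun j => t • X j) := by
  refine continuous_pi fun p => continuous_pi fun q => ?_
  exact (continuous_apply q.2).comp ((continuous_apply p.2).comp (lift_cont X (f p.1 q.1)))

theorem c_pos (A : Fin n → Matrix (Fin d) (Fin d) ℂ) (hAherm : ∀ j, (A j).IsHermitian)
    (hAmin : ∀ (e : ℕ) (C : Fin n → Matrix (Fin e) (Fin e) ℂ), (∀ j, (C j).IsHermitian) →
      (∀ (k : ℕ) (X : Fin n → Matrix (Fin k) (Fin k) ℂ), (∀ j, (X j).IsHermitian) →
        ((monicK A X).PosSemidef ↔ (monicK C X).PosSemidef)) → d ≤ e)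
    (f : Matrix (Fin d) (Fin d) (FreeAlg n))
    (h : ∀ (k : ℕ) (X : Fin n → Matrix (Fin k) (Fin k) ℂ), (∀ j, (X j).IsHermitian) →
        (monicK A X).PosSemidef → (evalM f X).PosSemidef)
    (e : Matrix (Fin d) (Fin d) (FreeAlg n)) (c : Matrix (Fin d) (Fin d) ℂ) (hc : c.IsHermitian)
    (hcA : ∀ j, c * A j = A j * c) (hf : f = monicPoly A * e * monicPoly A + CM c * monicPoly A) :
    c.PosSemidef := by
  obtain ⟨p, z, hz, hcz, hpz, hzc, hfin⟩ := neg_data c hc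
  apply hfin
  have hzA : ∀ j, z * A j = A j * z := fun j => hzc _ (hcA j)
  obtain ⟨k, X, u, hg, hu⟩ := base_rep A hAherm hAmin
  let U : Fin d × Fin k → ℂ := fun p => u p.1 p.2
  have hLU : monicK A X *ᵥ U = 0 := hg.Lu
  let w := (z ⊗ₖ (1 : Matrix (Fin k) (Fin k) ℂ)) *ᵥ U
  have hcomm : monicK A X * (z ⊗ₖ (1 : Matrix (Fin k) (Fin k) ℂ)) = (z ⊗ₖ (1 : Matrix (Fin k) (Fin k) ℂ)) * monicK A X := by
    rw [← evalM_CM, ← evalM_monic, ← evalM_mul, ← evalM_mul, CM_comm_iff A z hzA]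
  have hLw : monicK A X *ᵥ w = 0 := by
    simp only [w]
    rw [Matrix.mulVec_mulVec, hcomm, ← Matrix.mulVec_mulVec, hLU, Matrix.mulVec_zero]
  have hmt : ∀ t : ℝ, monicK A (fun j => t • X j) = (1 - t) • 1 + t • monicK A X := by
    intro t
    simp only [monicK, Matrix.kronecker_smul, ← Finset.smul_sum, smul_add, sub_smul, one_smul]
    abel
  have hLtw : ∀ t : ℝ, monicK A (fun j => t • X j) *ᵥ w = ((1 - t : ℝ) : ℂ) • w := by
    intro t
    rw [hmt, Matrix.add_mulVec, Matrix.smul_mulVec, Matrix.smul_mulVec, hLw, Matrix.one_mulVec, smul_zero, add_zero]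
    ext i; simp
  have hXt : ∀ t : ℝ, ∀ j, (t • X j).IsHermitian := fun t j => by
    have := (hg.herm j).eq
    rw [Matrix.IsHermitian, Matrix.conjTranspose_smul, this]; simp
  have hquad : ∀ t : ℝ, 0 ≤ t → t < 1 → 0 ≤ (1 - t) * (star w ⬝ᵥ evalM e (fun j => t • X j) *ᵥ w).re +
      (star w ⬝ᵥ (c ⊗ₖ (1 : Matrix (Fin k) (Fin k) ℂ)) *ᵥ w).re := by
    intro t h0 h1
    have h2 := psd_re (h k (fun j => t • X j) (hXt t) (by
      rw [hmt]
      exact (psd_real_smul Matrix.PosSemidef.one (by linarith)).add (psd_real_smul hg.psd h0))) w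
    rw [hf, evalM_add, evalM_mul, evalM_mul, evalM_mul, evalM_monic, evalM_CM, Matrix.add_mulVec,
      ← Matrix.mulVec_mulVec, ← Matrix.mulVec_mulVec, ← Matrix.mulVec_mulVec, hLtw, dotProduct_add,
      dot_herm (monicK_herm A hAherm _ (hXt t)), hLtw] at h2
    simp only [Matrix.mulVec_smul, dotProduct_smul, star_smul, smul_dotProduct, smul_eq_mul, RCLike.star_def,
      Complex.conj_ofReal, Complex.add_re, Complex.re_ofReal_mul] at h2
    have h3 : 0 < 1 - t := by linarith
    nlinarith
  have hlim : 0 ≤ (star w ⬝ᵥ (c ⊗ₖ (1 : Matrix (Fin k) (Fin k) ℂ)) *ᵥ w).re := by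
    have hcont : Continuous fun t : ℝ => (1 - t) * (star w ⬝ᵥ evalM e (fun j => t • X j) *ᵥ w).re +
      (star w ⬝ᵥ (c ⊗ₖ (1 : Matrix (Fin k) (Fin k) ℂ)) *ᵥ w).re := by
      have h4 : Continuous fun t : ℝ => (star w ⬝ᵥ evalM e (fun j => t • X j) *ᵥ w) :=
        continuous_const.dotProduct ((evalM_cont e X).matrix_mulVec continuous_const)
      have h5 := Complex.continuous_re.comp h4
      exact ((continuous_const.sub continuous_id).mul h5).add continuous_const
    have h6 : (1 : ℝ) ∈ closure (Set.Ico (0 : ℝ) 1) := by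
      rw [closure_Ico (by norm_num)]; simp
    have h7 : closure (Set.Ico (0 : ℝ) 1) ⊆ {t | 0 ≤ (1 - t) * (star w ⬝ᵥ evalM e (fun j => t • X j) *ᵥ w).re +
      (star w ⬝ᵥ (c ⊗ₖ (1 : Matrix (Fin k) (Fin k) ℂ)) *ᵥ w).re} :=
      closure_minimal (fun t ht => hquad t ht.1 ht.2) (isClosed_le continuous_const hcont)
    have h8 : 0 ≤ (1 - (1 : ℝ)) * (star w ⬝ᵥ evalM e (fun j => (1 : ℝ) • X j) *ᵥ w).re +
      (star w ⬝ᵥ (c ⊗ₖ (1 : Matrix (Fin k) (Fin k) ℂ)) *ᵥ w).re := h7 h6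
    rwa [sub_self, zero_mul, zero_add] at h8
  have hzh : z.IsHermitian := hz.1
  have hK : ((z ⊗ₖ (1 : Matrix (Fin k) (Fin k) ℂ))).IsHermitian := by
    rw [Matrix.IsHermitian, Matrix.conjTranspose_kronecker, hzh.eq, Matrix.conjTranspose_one]
  have hz3 : (z * z * z).PosSemidef := by
    have := hz.conjTranspose_mul_mul_same z
    rwa [hzh.eq] at this
  have hz3k : ((z * z * z) ⊗ₖ (1 : Matrix (Fin k) (Fin k) ℂ)).PosSemidef := hz3.kronecker Matrix.PosSemidef.one
  have hzcz : z * c * z = - (z * z * z) := by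
    rw [Matrix.mul_assoc, hcz, Matrix.sub_mul, hpz, zero_sub, Matrix.mul_neg, Matrix.mul_assoc]
  have e1 : star w ⬝ᵥ (c ⊗ₖ (1 : Matrix (Fin k) (Fin k) ℂ)) *ᵥ w =
      - (star U ⬝ᵥ ((z * z * z) ⊗ₖ (1 : Matrix (Fin k) (Fin k) ℂ)) *ᵥ U) := by
    simp only [w]
    rw [← dot_herm hK, Matrix.mulVec_mulVec, Matrix.mulVec_mulVec, ← Matrix.mul_kronecker_mul,
      ← Matrix.mul_kronecker_mul, Matrix.one_mul, Matrix.one_mul, hzcz, ← dotProduct_neg, ← Matrix.neg_mulVec]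
    congr 2
    ext i j; simp [Matrix.kroneckerMap_apply]
  rw [e1, Complex.neg_re] at hlim
  have h9 := psd_re hz3k U
  have h10 : ((z * z * z) ⊗ₖ (1 : Matrix (Fin k) (Fin k) ℂ)) *ᵥ U = 0 := by
    rw [← hz3k.dotProduct_mulVec_zero_iff]
    apply Complex.ext
    · simp only [Complex.zero_re]; linarith
    · exact (Complex.nonneg_iff.mp (hz3k.dotProduct_mulVec_nonneg _)).2.symm
  have h11 : z * z * z = 0 := by
    ext i l
    have h12 := hu ((z * z * z) i) (by
      funext a
      have := congrFun h10 (i, a)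
      rw [← evalM_CM (n := n) _ X, evalM_mulVec] at this
      rw [Finset.sum_apply]
      rw [Pi.zero_apply] at this ⊢
      rw [← this]
      refine Finset.sum_congr rfl fun l _ => ?_
      simp [U, Matrix.map_apply, Algebra.algebraMap_eq_smul_one, Matrix.smul_mulVec])
    rw [h12]; rfl
  have h13 : z * z = 0 := by
    rw [← Matrix.conjTranspose_mul_self_eq_zero, Matrix.conjTranspose_mul, hzh.eq, ← Matrix.mul_assoc, h11,
      Matrix.zero_mul]
  rw [← Matrix.conjTranspose_mul_self_eq_zero, hzh.eq, h13]

end Part9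

open scoped Kronecker Matrix ComplexOrder

section Part10
variable {n d k : ℕ}

theorem sepC {E V : Type*} [AddCommGroup E] [Module ℂ E] [FiniteDimensional ℂ E] [AddCommGroup V] [Module ℂ V]
    (S : E →ₗ⋆[ℂ] E →ₗ[ℂ] V) (G : E →ₗ⋆[ℂ] V) (H : E →ₗ[ℂ] V) (st : V → V)
    (st_add : ∀ a b, st (a + b) = st a + st b)
    (st_smul : ∀ (c : ℂ) a, st (c • a) = (starRingEnd ℂ c) • st a)
    (st_st : ∀ a, st (st a) = a) (hS : ∀ p, st (S p p) = S p p) (hGH : ∀ p, st (G p) = H p)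
    (hnd : ∀ (N : ℕ) (p : Fin N → E), ∑ i, S (p i) (p i) = 0 → ∀ i, p i = 0) (z : V) (hz : st z = z)
    (hpos : ∀ (ψ : V →ₗ[ℂ] ℂ) (κ : ℝ), (∀ a, ψ (st a) = starRingEnd ℂ (ψ a)) →
      (∀ p, p ≠ 0 → 0 < (ψ (S p p)).re) → (∀ p, 0 < (ψ (S p p)).re + 2 * (ψ (H p)).re + κ) → 0 ≤ (ψ z).re + κ) :
    ∃ (N : ℕ) (p : Fin N → E) (t : Fin N → ℝ), z = ∑ i, (S (p i) (p i) + (t i : ℂ) • (G (p i) + H (p i))) ∧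
      ∑ i, t i * t i = 1 := by
  let B : (E × ℝ) →ₗ[ℝ] (E × ℝ) →ₗ[ℝ] (V × ℝ) := LinearMap.mk₂ ℝ
    (fun p q => (S p.1 q.1 + (q.2 : ℂ) • G p.1 + (p.2 : ℂ) • H q.1, p.2 * q.2))
    (by
      intro a b c; ext
      · simp only [Prod.fst_add, Prod.snd_add, map_add, LinearMap.add_apply, Complex.ofReal_add]; module
      · simp; ring)
    (by
      intro r a b; ext
      · have h1 : r • a.1 = (r : ℂ) • a.1 := (Complex.coe_smul r a.1).symm
        simp only [Prod.smul_fst, Prod.smul_snd, smul_eq_mul, Complex.ofReal_mul, h1, LinearMap.map_smulₛₗ,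
          LinearMap.smul_apply, Complex.conj_ofReal, ← Complex.coe_smul r (_ : V)]
        module
      · simp; ring)
    (by
      intro a b c; ext
      · simp only [Prod.fst_add, Prod.snd_add, map_add, LinearMap.add_apply, Complex.ofReal_add]; module
      · simp; ring)
    (by
      intro r a b; ext
      · have h1 : r • b.1 = (r : ℂ) • b.1 := (Complex.coe_smul r b.1).symm
        simp only [Prod.smul_fst, Prod.smul_snd, smul_eq_mul, Complex.ofReal_mul, h1, map_smul,
          ← Complex.coe_smul r (_ : V)]
        module
      · simp; ring)
  have hB : ∀ p, B p p = (S p.1 p.1 + (p.2 : ℂ) • G p.1 + (p.2 : ℂ) • H p.1, p.2 * p.2) := fun p => rfl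
  obtain ⟨N, p, hp⟩ := sepS2 B (by
    intro N p hp
    simp only [hB] at hp
    have h2 := congrArg Prod.snd hp
    have h1 := congrArg Prod.fst hp
    rw [Prod.snd_sum] at h2
    rw [Prod.fst_sum] at h1
    have h3 : ∀ i, (p i).2 = 0 := fun i => by
      have := (Finset.sum_eq_zero_iff_of_nonneg (fun i _ => mul_self_nonneg (p i).2)).1 h2 i (Finset.mem_univ i)
      exact mul_self_eq_zero.1 this
    have h4 := hnd N (fun i => (p i).1) (by
      simpa [h3] using h1)
    intro i
    exact Prod.ext (h4 i) (h3 i)) (z, 1) (by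
    intro φ hφ
    obtain ⟨ψ, hψ, hψr⟩ := complexify st st_add st_smul st_st (φ ∘ₗ LinearMap.inl ℝ V ℝ)
    have hdec : ∀ v t, φ (v, t) = φ (v, 0) + t * φ (0, 1) := by
      intro v t
      have : ((v, t) : V × ℝ) = (v, 0) + t • (0, 1) := by ext <;> simp
      rw [this, map_add, map_smul, smul_eq_mul]
    have hre : ∀ v, st v = v → φ (v, 0) = (ψ v).re := by
      intro v hv
      rw [hψr, hv]; simp
    have hst : ∀ p, st (G p + H p) = G p + H p := by
      intro p
      rw [st_add, hGH, ← hGH, st_st, add_comm]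
    have h1 := hpos ψ (φ (0, 1)) hψ (by
      intro p hp
      have := hφ (p, 0) (by intro h; exact hp (congrArg Prod.fst h))
      rw [hB, hdec, hre _ (by simpa using hS p)] at this
      simpa using this) (by
      intro p
      have := hφ (p, 1) (by intro h; simpa using congrArg Prod.snd h)
      rw [hB, hdec, hre _ (by simp only [Complex.ofReal_one, one_smul, add_assoc]; rw [st_add, hS, hst])] at this
      have h2 : (ψ (G p)).re = (ψ (H p)).re := by rw [← hGH, hψ, Complex.conj_re]
      simp at this
      linarith)
    rw [hdec, hre z hz]; linarith)
  refine ⟨N, fun i => (p i).1, fun i => (p i).2, ?_, ?_⟩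
  · have := congrArg Prod.fst hp
    rw [Prod.fst_sum] at this
    simp only [hB] at this
    rw [this]
    refine Finset.sum_congr rfl fun i _ => ?_
    rw [smul_add, add_assoc]
  · have := congrArg Prod.snd hp
    rw [Prod.snd_sum] at this
    simp only [hB] at this
    exact this.symm

end Part10

open scoped Kronecker Matrix ComplexOrder

section Part11
variable {n d k D : ℕ}

/-- Row vectors of polynomials of bounded degree. -/
abbrev RW (n d D : ℕ) := Fin d → FF n D

def MV (V : Fin d → RW n d D) : Matrix (Fin d) (Fin d) (FreeAlg n) := fun i l => (V i l : FreeAlg n)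

theorem MV_add (V V' : Fin d → RW n d D) : MV (V + V') = MV V + MV V' := rfl
theorem MV_smul (c : ℂ) (V : Fin d → RW n d D) : MV (c • V) = c • MV V := rfl

theorem adjM_smul' {I J : Type*} (c : ℂ) (M : Matrix I J (FreeAlg n)) :
    adjM (c • M) = (starRingEnd ℂ c) • adjM M := by
  ext i j; simp [adjM, nstar_smul]

noncomputable def outr (b : FreeAlg n) (p q : Fin d → FreeAlg n) : Matrix (Fin d) (Fin d) (FreeAlg n) :=
  fun i l => nstar (p i) * (b * q l)

noncomputable def xf (ψ : Matrix (Fin d) (Fin d) (FreeAlg n) →ₗ[ℂ] ℂ) (b : FreeAlg n) :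
    RW n d D →ₗ⋆[ℂ] RW n d D →ₗ[ℂ] ℂ :=
  LinearMap.mk₂'ₛₗ (starRingEnd ℂ) (RingHom.id ℂ) (fun p q => ψ (outr b (fun i => p i) (fun i => q i)))
    (by
      intro p p' q; rw [← map_add]; congr 1; ext i l
      simp [outr, nstar_add, add_mul])
    (by
      intro c p q; rw [← map_smul]; congr 1; ext i l
      simp [outr, nstar_smul])
    (by
      intro p p' q; rw [← map_add]; congr 1; ext i l
      simp [outr, mul_add])
    (by
      intro c p q; rw [← map_smul]; congr 1; ext i l
      simp [outr])

theorem xf_apply (ψ : Matrix (Fin d) (Fin d) (FreeAlg n) →ₗ[ℂ] ℂ) (b : FreeAlg n) (p q : RW n d D) :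
    xf ψ b p q = ψ (outr b (fun i => p i) (fun i => q i)) := rfl

noncomputable def SS (D : ℕ) (A : Fin n → Matrix (Fin d) (Fin d) ℂ) :
    (RW n d D × (Fin d → RW n d D)) →ₗ⋆[ℂ] (RW n d D × (Fin d → RW n d D)) →ₗ[ℂ]
      Matrix (Fin d) (Fin d) (FreeAlg n) :=
  LinearMap.mk₂'ₛₗ (starRingEnd ℂ) (RingHom.id ℂ)
    (fun p q => outr 1 (fun i => p.1 i) (fun i => q.1 i) + adjM (MV p.2) * monicPoly A * MV q.2)
    (by
      intro p p' q
      rw [Prod.snd_add, MV_add, adjM_add, Matrix.add_mul, Matrix.add_mul]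
      have : outr 1 (fun i => ((p + p').1 i : FreeAlg n)) (fun i => (q.1 i : FreeAlg n)) =
        outr 1 (fun i => (p.1 i : FreeAlg n)) (fun i => (q.1 i : FreeAlg n)) +
        outr 1 (fun i => (p'.1 i : FreeAlg n)) (fun i => (q.1 i : FreeAlg n)) := by
        ext i l; simp [outr, nstar_add, add_mul]
      rw [this]; abel)
    (by
      intro c p q
      rw [Prod.smul_snd, MV_smul, adjM_smul', Matrix.smul_mul, Matrix.smul_mul, smul_add]
      congr 1
      ext i l; simp [outr, nstar_smul])
    (by
      intro p p' q
      rw [Prod.snd_add, MV_add, Matrix.mul_add]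
      have : outr 1 (fun i => (p.1 i : FreeAlg n)) (fun i => ((p' + q).1 i : FreeAlg n)) =
        outr 1 (fun i => (p.1 i : FreeAlg n)) (fun i => (p'.1 i : FreeAlg n)) +
        outr 1 (fun i => (p.1 i : FreeAlg n)) (fun i => (q.1 i : FreeAlg n)) := by
        ext i l; simp [outr, mul_add]
      rw [this]; abel)
    (by
      intro c p q
      rw [Prod.smul_snd, MV_smul, Matrix.mul_smul, smul_add]
      congr 1
      ext i l; simp [outr])

theorem SS_apply (A : Fin n → Matrix (Fin d) (Fin d) ℂ) (p q : RW n d D × (Fin d → RW n d D)) :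
    SS D A p q = outr 1 (fun i => p.1 i) (fun i => q.1 i) + adjM (MV p.2) * monicPoly A * MV q.2 := rfl

noncomputable def GG (D : ℕ) (C : Matrix (Fin d) (Fin d) ℂ) :
    (RW n d D × (Fin d → RW n d D)) →ₗ⋆[ℂ] Matrix (Fin d) (Fin d) (FreeAlg n) :=
  { toFun := fun p => adjM (MV p.2) * CM C
    map_add' := by
      intro p p'
      rw [Prod.snd_add, MV_add, adjM_add, Matrix.add_mul]
    map_smul' := by
      intro c p
      rw [Prod.smul_snd, MV_smul, adjM_smul', Matrix.smul_mul] }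

noncomputable def HH (D : ℕ) (C : Matrix (Fin d) (Fin d) ℂ) :
    (RW n d D × (Fin d → RW n d D)) →ₗ[ℂ] Matrix (Fin d) (Fin d) (FreeAlg n) :=
  { toFun := fun p => CM C * MV p.2
    map_add' := by
      intro p p'
      rw [Prod.snd_add, MV_add, Matrix.mul_add]
    map_smul' := by
      intro c p
      rw [Prod.smul_snd, MV_smul, Matrix.mul_smul]; rfl }

theorem adjM_outr (b : FreeAlg n) (hb : nstar b = b) (p q : Fin d → FreeAlg n) :
    adjM (outr b p q) = outr b q p := by
  ext i l; simp [adjM, outr, nstar_mul, nstar_nstar, hb, mul_assoc]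

theorem nstar_eq_zero {a : FreeAlg n} (h : nstar a = 0) : a = 0 := by
  rw [← nstar_nstar a, h, nstar_zero]

theorem SS_nd (A : Fin n → Matrix (Fin d) (Fin d) ℂ) (N : ℕ) (p : Fin N → RW n d D × (Fin d → RW n d D))
    (h : ∑ i, SS D A (p i) (p i) = 0) : ∀ i, p i = 0 := by
  let K0 : Option (Fin d) → Option (Fin d) → FreeAlg n := fun o o' =>
    match o, o' with
    | none, none => 1
    | some s, some t => monicPoly A s t
    | _, _ => 0
  have hK0 : ∀ o o', eps (K0 o o') = if o = o' then 1 else 0 := by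
    intro o o'
    rcases o with _ | s <;> rcases o' with _ | t <;> simp only [K0]
    · simp
    · simp
    · simp
    · rw [monicPoly_apply]
      simp [eps_iota, Matrix.one_apply]
  have key : ∀ a, ∀ s : Fin N × Option (Fin d),
      (match s.2 with | none => nstar ((p s.1).1 a : FreeAlg n) | some t => nstar ((p s.1).2 t a : FreeAlg n)) = 0 := by
    intro a
    refine sos_zero (fun s t => if s.1 = t.1 then K0 s.2 t.2 else 0) ?_ D _ ?_ ?_
    · rintro ⟨i, o⟩ ⟨j, o'⟩
      simp only [Prod.mk.injEq]
      split_ifs with h1 h2 h2 <;> simp_all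
    · rintro ⟨i, _ | t⟩
      · exact nstar_mem ((p i).1 a).2
      · exact nstar_mem ((p i).2 t a).2
    · have h1 := congrFun (congrFun h a) a
      rw [Matrix.sum_apply] at h1
      rw [Fintype.sum_prod_type]
      rw [Matrix.zero_apply] at h1
      refine Eq.trans ?_ h1
      refine Finset.sum_congr rfl fun i _ => ?_
      have h2 : ∀ o : Option (Fin d), ∀ y : Fin N × Option (Fin d) → FreeAlg n,
          ∑ t : Fin N × Option (Fin d), y (i, o) * ((if (i, o).1 = t.1 then K0 (i, o).2 t.2 else 0) * nstar (y t)) =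
          ∑ o', y (i, o) * (K0 o o' * nstar (y (i, o'))) := by
        intro o y
        rw [Fintype.sum_prod_type, Finset.sum_comm]
        refine Finset.sum_congr rfl fun o' _ => ?_
        simp
      refine (Finset.sum_congr rfl fun o _ => h2 o (fun s => match s.2 with | none => nstar ((p s.1).1 a : FreeAlg n) | some t => nstar ((p s.1).2 t a : FreeAlg n))).trans ?_
      simp only [Fintype.sum_option, zero_mul, mul_zero, K0,
        Finset.sum_const_zero, add_zero, zero_add, nstar_nstar, SS_apply, outr, Matrix.add_apply, Matrix.mul_apply, adjM, MV,
        Finset.sum_mul, one_mul]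
      congr 1
      rw [Finset.sum_comm]
      simp only [mul_assoc]
  intro i
  refine Prod.ext ?_ ?_
  · funext a
    exact Subtype.ext (nstar_eq_zero (key a (i, none)))
  · funext t a
    exact Subtype.ext (nstar_eq_zero (key a (i, some t)))

end Part11

open scoped Kronecker Matrix ComplexOrder

section Part12
variable {n d k D : ℕ}

theorem Lf_SS (A : Fin n → Matrix (Fin d) (Fin d) ℂ) (ψ : Matrix (Fin d) (Fin d) (FreeAlg n) →ₗ[ℂ] ℂ)
    (V : Fin d → RW n d D) :
    Lf A (xf ψ 1) (fun j => xf ψ (FreeAlgebra.ι ℂ j)) V V = ψ (SS D A (0, V) (0, V)) := by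
  simp only [Lf, xf_apply, ← map_sum, ← smul_eq_mul, ← map_smul, ← map_add]
  congr 1
  ext a b
  simp only [SS_apply, outr, Matrix.add_apply, Matrix.sum_apply, Matrix.smul_apply, Matrix.mul_apply, adjM, MV,
    monicPoly_apply, Pi.zero_apply, Submodule.coe_zero, nstar_zero, zero_mul, zero_add, one_mul]
  simp only [mul_add, add_mul, Finset.sum_add_distrib]
  congr 1
  · refine Finset.sum_congr rfl fun i _ => ?_
    rw [Finset.sum_eq_single i]
    · simp
    · intro l _ hl; simp [Matrix.one_apply_ne hl]
    · simp
  · simp only [Finset.mul_sum, Finset.sum_mul]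
    rw [Finset.sum_congr rfl fun j _ => Finset.sum_comm]
    rw [Finset.sum_comm]
    refine Finset.sum_congr rfl fun l _ => ?_
    rw [Finset.sum_comm]
    refine Finset.sum_congr rfl fun i _ => Finset.sum_congr rfl fun j _ => ?_
    simp [mul_assoc]

theorem psi_MV (ψ : Matrix (Fin d) (Fin d) (FreeAlg n) →ₗ[ℂ] ℂ) (V E : Fin d → RW n d D)
    (hE : ∀ i l, (E i l : FreeAlg n) = if l = i then 1 else 0) :
    ψ (MV V) = ∑ i, xf ψ 1 (E i) (V i) := by
  simp only [xf_apply, ← map_sum]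
  congr 1
  ext a b
  simp only [Matrix.sum_apply, outr, hE, MV, one_mul]
  rw [Finset.sum_eq_single a]
  · simp [nstar_one]
  · intro i _ hi; simp [hi.symm, nstar_zero]
  · simp

theorem CM_MV (C : Matrix (Fin d) (Fin d) ℂ) (V : Fin d → RW n d D) :
    CM C * MV V = MV (fun i => ∑ l, C i l • V l) := by
  ext a b
  simp [Matrix.mul_apply, MV, Algebra.smul_def]

theorem gns (A : Fin n → Matrix (Fin d) (Fin d) ℂ) (hAherm : ∀ j, (A j).IsHermitian)
    (f : Matrix (Fin d) (Fin d) (FreeAlg n))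
    (h : ∀ (k : ℕ) (X : Fin n → Matrix (Fin k) (Fin k) ℂ), (∀ j, (X j).IsHermitian) →
        (monicK A X).PosSemidef → (evalM f X).PosSemidef)
    (e : Matrix (Fin d) (Fin d) (FreeAlg n)) (C : Matrix (Fin d) (Fin d) ℂ) (hC : C.IsHermitian)
    (hCA : ∀ j, C * A j = A j * C) (hf : f = monicPoly A * e * monicPoly A + CM (C * C) * monicPoly A)
    (m : ℕ) (he : ∀ i l, e i l ∈ FF n (m + 1))
    (ψ : Matrix (Fin d) (Fin d) (FreeAlg n) →ₗ[ℂ] ℂ) (κ : ℝ) (hψ : ∀ a, ψ (adjM a) = starRingEnd ℂ (ψ a))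
    (hpos : ∀ p, p ≠ 0 → 0 < (ψ (SS (m + 1) A p p)).re)
    (hpos2 : ∀ p, 0 < (ψ (SS (m + 1) A p p)).re + 2 * (ψ (HH (m + 1) C p)).re + κ) : 0 ≤ (ψ e).re + κ := by
  have hsym : ∀ b : FreeAlg n, nstar b = b → ∀ p q : RW n d (m + 1), xf ψ b p q = starRingEnd ℂ (xf ψ b q p) := by
    intro b hb p q
    rw [xf_apply, xf_apply, ← hψ, adjM_outr b hb]
  have hs : PDForm (xf ψ 1 : RW n d (m + 1) →ₗ⋆[ℂ] RW n d (m + 1) →ₗ[ℂ] ℂ) :=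
    ⟨hsym 1 nstar_one, fun a ha => by
      have := hpos (a, 0) (by intro h; exact ha (congrArg Prod.fst h))
      rw [SS_apply] at this
      have h0 : MV (0 : Fin d → RW n d (m + 1)) = 0 := rfl
      rw [xf_apply]
      simpa [h0] using this⟩
  obtain ⟨k, T, X, hX, hT, hx⟩ := realize (xf ψ 1) hs
    (fun j => (xf ψ (FreeAlgebra.ι ℂ j) : RW n d (m + 1) →ₗ⋆[ℂ] RW n d (m + 1) →ₗ[ℂ] ℂ))
    (fun j => hsym _ (nstar_iota j))
  let E : Fin d → RW n d (m + 1) := fun i l => if l = i then ⟨1, one_mem_FF m⟩ else 0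
  have hE : ∀ i l, (E i l : FreeAlg n) = if l = i then 1 else 0 := by
    intro i l; simp only [E]; split_ifs <;> rfl
  let u : Fin d → Fin k → ℂ := fun l => T (E l)
  let U : Fin d × Fin k → ℂ := fun p => u p.1 p.2
  have hinj : ∀ v w : Fin k → ℂ, (∀ a, star (T a) ⬝ᵥ v = star (T a) ⬝ᵥ w) → v = w := by
    intro v w hvw
    have h1 := hvw (T.symm (v - w))
    rw [T.apply_symm_apply, ← sub_eq_zero, ← dotProduct_sub] at h1
    by_contra hne
    have h2 := star_dot_pos (v - w) (sub_ne_zero.mpr hne)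
    rw [h1] at h2
    simp at h2
  have hTr : ∀ (r : RW n d (m + 1)) (q : ℕ), q ≤ m + 1 → (∀ l, (r l : FreeAlg n) ∈ FF n q) →
      T r = rv X u (fun l => (r l : FreeAlg n)) := by
    intro r q
    induction q generalizing r with
    | zero =>
      intro _ hr
      have : r = 0 := by
        funext l; exact Subtype.ext (mem_FF_zero.1 (hr l))
      rw [this, map_zero]
      exact (map_zero (rv X u)).symm
    | succ q ih =>
      intro hq hr
      rw [rv_decomp]
      have hdm : ∀ j l, dd j (r l : FreeAlg n) ∈ FF n q := fun j l => (mem_FF_succ.1 (hr l)) j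
      let r1 : Fin n → RW n d (m + 1) := fun j l => ⟨dd j (r l), FF_mono (by omega) (hdm j l)⟩
      let r2 : Fin n → RW n d (m + 1) := fun j l =>
        ⟨FreeAlgebra.ι ℂ j * dd j (r l), FF_mono hq (iota_mul_mem j (hdm j l))⟩
      have h1 : ∀ j, T (r2 j) = X j *ᵥ T (r1 j) := by
        intro j
        apply hinj
        intro a
        rw [← hT, ← hx, xf_apply, xf_apply]
        congr 1
        ext i l
        simp [outr, r1, r2]
      have h2 : r = ∑ l, eps (r l : FreeAlg n) • E l + ∑ j, r2 j := by
        funext l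
        apply Subtype.ext
        conv_lhs => rw [decomp (r l : FreeAlg n)]
        simp only [Pi.add_apply, Finset.sum_apply, Pi.smul_apply, Submodule.coe_add, Submodule.coe_sum,
          Submodule.coe_smul, hE, r2]
        congr 1
        simp [Algebra.algebraMap_eq_smul_one]
      conv_lhs => rw [h2]
      simp only [map_add, map_sum, map_smul, h1]
      congr 1
      refine Finset.sum_congr rfl fun j _ => ?_
      rw [ih (r1 j) (by omega) (hdm j)]
  -- vectors
  let tv : (Fin d × Fin k → ℂ) → Fin d → RW n d (m + 1) := fun w i => T.symm (fun a => w (i, a))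
  have htv : ∀ w, (fun p : Fin d × Fin k => T (tv w p.1) p.2) = w := by
    intro w; funext p; simp [tv]
  have hLq : ∀ w, star w ⬝ᵥ monicK A X *ᵥ w = ψ (SS (m + 1) A (0, tv w) (0, tv w)) := by
    intro w
    rw [← Lf_SS, Lf_eq A _ _ T X hT hx, htv]
  have hLpos : ∀ w, w ≠ 0 → 0 < (star w ⬝ᵥ monicK A X *ᵥ w).re := by
    intro w hw
    rw [hLq]
    apply hpos
    intro h0
    apply hw
    rw [← htv w, show tv w = 0 from congrArg Prod.snd h0]
    funext p; simp
  have hLh := monicK_herm A hAherm X hX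
  have hpsd : (monicK A X).PosSemidef := psd_of_re hLh (by
    intro w
    by_cases hw : w = 0
    · simp [hw]
    · exact (hLpos w hw).le)
  obtain ⟨y, hy⟩ : ∃ y, monicK A X *ᵥ y = U := by
    have hi : Function.Injective (Matrix.mulVecLin (monicK A X)) := by
      rw [← LinearMap.ker_eq_bot, LinearMap.ker_eq_bot']
      intro w hw
      by_contra hw0
      have := hLpos w hw0
      rw [show monicK A X *ᵥ w = 0 from hw] at this
      simp at this
    exact (LinearMap.injective_iff_surjective.mp hi) U
  have heU : evalM e X *ᵥ U = fun p : Fin d × Fin k => T (fun l => ⟨e p.1 l, he p.1 l⟩) p.2 := by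
    funext ⟨i, a⟩
    rw [evalM_mulVec, hTr _ (m + 1) le_rfl (he i), rv_apply, Finset.sum_apply]
  have hdot : ∀ w, star U ⬝ᵥ w = ψ (MV (tv w)) := by
    intro w
    rw [psi_MV ψ _ E hE]
    conv_lhs => rw [← htv w]
    simp only [dotProduct, Fintype.sum_prod_type, hT]
    rfl
  have hψe : star U ⬝ᵥ evalM e X *ᵥ U = ψ e := by
    rw [hdot, heU]
    congr 1
    ext i l
    simp only [MV, tv]
    have h0 := T.symm_apply_apply (fun l => (⟨e i l, he i l⟩ : FF n (m + 1)))
    exact congrArg Subtype.val (congrFun h0 l)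
  let Ck := C ⊗ₖ (1 : Matrix (Fin k) (Fin k) ℂ)
  have hCk : Ck.IsHermitian := by
    simp only [Ck]
    rw [Matrix.IsHermitian, Matrix.conjTranspose_kronecker, hC.eq, Matrix.conjTranspose_one]
  have hCL : Ck * monicK A X = monicK A X * Ck := by
    have := congrArg (fun M => evalM M X) (CM_comm_iff A C hCA)
    simpa only [evalM_mul, evalM_CM, evalM_monic] using this
  have hψH : ∀ w, ψ (HH (m + 1) C (0, tv w)) = star U ⬝ᵥ Ck *ᵥ w := by
    intro w
    rw [hdot]
    change ψ (CM C * MV (tv w)) = _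
    rw [CM_MV]
    congr 2
    funext i
    apply T.injective
    simp only [tv, map_sum, map_smul, T.apply_symm_apply]
    funext a
    simp only [Ck]
    rw [← evalM_CM (n := n) C X, evalM_mulVec, Finset.sum_apply]
    refine Finset.sum_congr rfl fun l _ => ?_
    simp [Matrix.map_apply, Algebra.algebraMap_eq_smul_one, Matrix.smul_mulVec]
  have h1 := hpos2 (0, tv (-(Ck *ᵥ y)))
  rw [← hLq, hψH, Matrix.mulVec_neg, Matrix.mulVec_neg, dotProduct_neg, star_neg, neg_dotProduct, dotProduct_neg,
    neg_neg, ← dot_herm hCk] at h1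
  have h2 := psd_re (h k X hX hpsd) y
  have hCC : evalM (CM (C * C) : Matrix (Fin d) (Fin d) (FreeAlg n)) X = Ck * Ck := by
    rw [CM_mul, evalM_mul, evalM_CM]
  rw [hf, evalM_add, evalM_mul, evalM_mul, evalM_mul, evalM_monic, hCC, Matrix.add_mulVec,
    ← Matrix.mulVec_mulVec, ← Matrix.mulVec_mulVec, ← Matrix.mulVec_mulVec, dotProduct_add, dot_herm hLh, hy, hψe,
    ← Matrix.mulVec_mulVec, dot_herm hCk] at h2
  have h3 : (star (Ck *ᵥ y) ⬝ᵥ Ck *ᵥ U).re = (star y ⬝ᵥ Ck *ᵥ monicK A X *ᵥ Ck *ᵥ y).re := by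
    rw [← dot_herm hCk, ← hy, Matrix.mulVec_mulVec y Ck (monicK A X), hCL, ← Matrix.mulVec_mulVec y]
  have h4 : (star U ⬝ᵥ Ck *ᵥ Ck *ᵥ y).re = (star (Ck *ᵥ y) ⬝ᵥ Ck *ᵥ U).re := by
    rw [dot_herm hCk, ← dot_conj, Complex.conj_re]
  rw [Complex.neg_re] at h1
  rw [Complex.add_re] at h2
  linarith

end Part12

open scoped Kronecker Matrix ComplexOrder

section Part13
variable {n d k D : ℕ}

theorem term_identity (A : Fin n → Matrix (Fin d) (Fin d) ℂ) (hA : ∀ j, (A j).IsHermitian)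
    (C : Matrix (Fin d) (Fin d) ℂ) (hC : C.IsHermitian) (hCA : ∀ j, C * A j = A j * C) (t : ℝ)
    (Q : Matrix (Fin d) (Fin d) (FreeAlg n)) :
    adjM (Q * monicPoly A + CM ((t : ℂ) • C)) * monicPoly A * (Q * monicPoly A + CM ((t : ℂ) • C)) =
      monicPoly A * (adjM Q * monicPoly A * Q + (t : ℂ) • (adjM Q * CM C + CM C * Q)) * monicPoly A +
      ((t * t : ℝ) : ℂ) • (CM (C * C) * monicPoly A) := by
  have h1 : (CM ((t : ℂ) • C) : Matrix (Fin d) (Fin d) (FreeAlg n)) = (t : ℂ) • CM C := by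
    ext i l
    simp only [Matrix.map_apply, Matrix.smul_apply, smul_eq_mul, map_mul]
    rw [Algebra.smul_def]
  have h2 := CM_comm_iff A C hCA
  rw [h1, adjM_add, adjM_mul, adjM_monic A hA, adjM_smul', adjM_CM, hC.eq, Complex.conj_ofReal, CM_mul]
  generalize adjM Q = R
  generalize (CM C : Matrix (Fin d) (Fin d) (FreeAlg n)) = c at *
  generalize monicPoly A = L at *
  simp only [Matrix.mul_add, Matrix.add_mul, Matrix.mul_smul, Matrix.smul_mul, smul_add, smul_smul, Matrix.mul_assoc,
    h2, Complex.ofReal_mul]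
  simp only [← Matrix.mul_assoc, h2]
  abel

noncomputable def colv (r : Fin d → FreeAlg n) : Matrix (Fin d) (Fin 1) (FreeAlg n) := fun i _ => nstar (r i)

theorem p_term (r : Fin d → FreeAlg n) : colv r * adjM (colv r) = outr 1 r r := by
  ext i l
  simp [Matrix.mul_apply, adjM, outr, nstar_nstar, colv]

theorem SS_adj (A : Fin n → Matrix (Fin d) (Fin d) ℂ) (hA : ∀ j, (A j).IsHermitian)
    (p : RW n d D × (Fin d → RW n d D)) : adjM (SS D A p p) = SS D A p p := by
  rw [SS_apply, adjM_add, adjM_outr 1 nstar_one, adjM_mul, adjM_mul, adjM_adjM, adjM_monic A hA, Matrix.mul_assoc]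

theorem GG_apply (C : Matrix (Fin d) (Fin d) ℂ) (p : RW n d D × (Fin d → RW n d D)) :
    GG D C p = adjM (MV p.2) * CM C := rfl

theorem HH_apply (C : Matrix (Fin d) (Fin d) ℂ) (p : RW n d D × (Fin d → RW n d D)) :
    HH D C p = CM C * MV p.2 := rfl

theorem GG_adj (C : Matrix (Fin d) (Fin d) ℂ) (hC : C.IsHermitian)
    (p : RW n d D × (Fin d → RW n d D)) : adjM (GG D C p) = HH D C p := by
  rw [GG_apply, HH_apply, adjM_mul, adjM_adjM, adjM_CM, hC.eq]

theorem forward (A : Fin n → Matrix (Fin d) (Fin d) ℂ) (hAherm : ∀ j, (A j).IsHermitian)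
    (hAmin : ∀ (e : ℕ) (C : Fin n → Matrix (Fin e) (Fin e) ℂ), (∀ j, (C j).IsHermitian) →
      (∀ (k : ℕ) (X : Fin n → Matrix (Fin k) (Fin k) ℂ), (∀ j, (X j).IsHermitian) →
        ((monicK A X).PosSemidef ↔ (monicK C X).PosSemidef)) → d ≤ e)
    (f : Matrix (Fin d) (Fin d) (FreeAlg n)) (hf : IsHermPoly f)
    (h : ∀ (k : ℕ) (X : Fin n → Matrix (Fin k) (Fin k) ℂ), (∀ j, (X j).IsHermitian) →
        (monicK A X).PosSemidef →
        (evalM f X).PosSemidef ∧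
        ∀ u : Fin d × Fin k → ℂ, (monicK A X).mulVec u = 0 → (evalM f X).mulVec u = 0) :
    ∃ (M N : ℕ) (p : Fin M → Matrix (Fin d) (Fin 1) (FreeAlg n))
          (q : Fin N → Matrix (Fin d) (Fin d) (FreeAlg n))
          (C : Fin N → Matrix (Fin d) (Fin d) ℂ),
        (∀ j, (C j).map (algebraMap ℂ (FreeAlg n)) * monicPoly A =
          monicPoly A * (C j).map (algebraMap ℂ (FreeAlg n))) ∧
        f = monicPoly A * (∑ i, p i * adjM (p i)) * monicPoly A +
          ∑ j, adjM (q j * monicPoly A + (C j).map (algebraMap ℂ (FreeAlg n))) *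
            monicPoly A *
            (q j * monicPoly A + (C j).map (algebraMap ℂ (FreeAlg n))) := by
  have hfa : adjM f = f := by
    ext i l; exact (hf i l).symm
  obtain ⟨g, hg⟩ := factor A hAherm hAmin f (fun k X hX hL => (h k X hX hL).2)
  obtain ⟨B, hB⟩ := exists_B A (fun v hv => nondeg A hAherm hAmin v hv)
  obtain ⟨e, c, hee, hc, hcA, hfe⟩ := normal_form A B hB hAherm f g hfa hg
  have hcp := c_pos A hAherm hAmin f (fun k X hX hL => (h k X hX hL).1) e c hc hcA hfe
  obtain ⟨C, hC, hCC, hCcomm⟩ := sqrt_data c hcp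
  have hCA : ∀ j, C * A j = A j * C := fun j => hCcomm _ (hcA j)
  obtain ⟨m, hm⟩ := exists_FF_mat e
  rw [← hCC] at hfe
  obtain ⟨N, p, t, hez, ht⟩ := sepC (SS (m + 1) A) (GG (m + 1) C) (HH (m + 1) C) adjM adjM_add adjM_smul' adjM_adjM
    (SS_adj A hAherm) (GG_adj C hC)
    (SS_nd A) e hee
    (gns A hAherm f (fun k X hX hL => (h k X hX hL).1) e C hC hCA hfe m (fun i l => FF_mono (Nat.le_succ m) (hm i l)))
  refine ⟨N, N, fun i => colv (fun a => ((p i).1 a : FreeAlg n)), fun i => MV (p i).2, fun i => (t i : ℂ) • C, ?_, ?_⟩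
  · intro j
    exact CM_comm_iff A _ (fun i => by rw [Matrix.smul_mul, Matrix.mul_smul, hCA])
  · rw [Finset.sum_congr rfl fun j _ => term_identity A hAherm C hC hCA (t j) (MV (p j).2)]
    rw [Finset.sum_congr rfl fun j _ => p_term (fun a => ((p j).1 a : FreeAlg n))]
    rw [Finset.sum_add_distrib, ← Finset.sum_smul, ← Complex.ofReal_sum, ht, Complex.ofReal_one, one_smul,
      ← Finset.sum_mul, ← Finset.mul_sum, ← add_assoc, ← add_mul, ← mul_add, ← Finset.sum_add_distrib, hfe]
    congr 4
    rw [hez]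
    refine Finset.sum_congr rfl fun i _ => ?_
    rw [SS_apply, GG_apply, HH_apply, add_assoc]

end Part13

/-- Randstellensatz: for a minimal monic hermitian pencil `L` of size `d`
and `f = f* ∈ M_d(ℂ⟨x⟩)`, one has `f ⪰ 0` on `D_L` with `ker L(X) ⊆ ker f(X)` iff
`f = L (∑ᵢ pᵢpᵢ*) L + ∑ⱼ (qⱼL + Cⱼ)* L (qⱼL + Cⱼ)` with `CⱼL = LCⱼ`. -/
theorem randstellensatz {n d : ℕ}
    (A : Fin n → Matrix (Fin d) (Fin d) ℂ) (hAherm : ∀ j, (A j).IsHermitian)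
    (hAmin : ∀ (e : ℕ) (C : Fin n → Matrix (Fin e) (Fin e) ℂ), (∀ j, (C j).IsHermitian) →
      (∀ (k : ℕ) (X : Fin n → Matrix (Fin k) (Fin k) ℂ), (∀ j, (X j).IsHermitian) →
        ((monicK A X).PosSemidef ↔ (monicK C X).PosSemidef)) → d ≤ e)
    (f : Matrix (Fin d) (Fin d) (FreeAlg n)) (hf : IsHermPoly f) :
    (∀ (k : ℕ) (X : Fin n → Matrix (Fin k) (Fin k) ℂ), (∀ j, (X j).IsHermitian) →
        (monicK A X).PosSemidef →
        (evalM f X).PosSemidef ∧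
        ∀ u : Fin d × Fin k → ℂ, (monicK A X).mulVec u = 0 → (evalM f X).mulVec u = 0) ↔
      (∃ (M N : ℕ) (p : Fin M → Matrix (Fin d) (Fin 1) (FreeAlg n))
          (q : Fin N → Matrix (Fin d) (Fin d) (FreeAlg n))
          (C : Fin N → Matrix (Fin d) (Fin d) ℂ),
        (∀ j, (C j).map (algebraMap ℂ (FreeAlg n)) * monicPoly A =
          monicPoly A * (C j).map (algebraMap ℂ (FreeAlg n))) ∧
        f = monicPoly A * (∑ i, p i * adjM (p i)) * monicPoly A +
          ∑ j, adjM (q j * monicPoly A + (C j).map (algebraMap ℂ (FreeAlg n))) *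
            monicPoly A *
            (q j * monicPoly A + (C j).map (algebraMap ℂ (FreeAlg n)))) := by
  constructor
  · exact forward A hAherm hAmin f hf
  · intro h k X hX hL
    exact backward A hAherm f h k X hX hL
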